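/- arXiv:1402.5160 — 4 statements merged into one kernel-verified Lean document; each statement's English description precedes it below -/
import Mathlib

section
/- Let ρ_1,…,ρ_N > 0 and κ_{ij} = κ_{ji} ≥ 0 for i ≠ j. Let A be the symmetric N×N matrix with A_{ii} = ρ_i and A_{ij} = -κ_{ij} for i ≠ j, and let δ(·,·) be a metric on {1,…,N}. Let à be the symmetric matrix with Ã_{ii} = ρ_i and Ã_{ij} = -exp(δ(i,j)) κ_{ij} for i ≠ j. Assume à is positive definite with à ≥ ρ̃ Id for some ρ̃ > 0, and assume the Neumann series for A^{-1} and Ã^{-1} (expansions in powers of the off-diagonal parts divided by the diagonal) converge, e.g. because the spectral radius of the corresponding iteration matrices is less than 1. Then A is invertible with (A^{-1})_{ij} ≥ 0 for all i, j, and for all i, j ∈ {1,…,N}, (A^{-1})_{ij} ≤ exp(-δ(i,j)) (Ã^{-1})_{ij}; in particular (A^{-1})_{ij} ≤ (1/ρ̃) exp(-δ(i,j)). -/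
/-!
Write `D` for the diagonal part of a matrix `B` and `X = D⁻¹ (D - B)`. Since `D⁻¹ B = 1 - X`, the
partial sums of `∑ Xⁿ D⁻¹` multiplied by `B` telescope to `1 - Xⁿ`, and `Xⁿ = (Xⁿ D⁻¹) D → 0` as soon
as the series converges. Hence convergence alone makes the sum an inverse of `B`
(`hasSum_neumann`), so both `A⁻¹` and `Ã⁻¹` are given by their Neumann series.

The iteration matrices are entrywise nonnegative and satisfy `X i j = exp (-δ i j) * X̃ i j`. Along a
path from `i` to `j` the triangle inequality bounds the product of the factors `exp (-δ)` by
`exp (-δ i j)`, which gives `(Xⁿ) i j ≤ exp (-δ i j) * (X̃ⁿ) i j` (`pow_le_exp_mul_pow`); summing over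
`n` compares the inverses. Finally, the entries of `Ã⁻¹` are at most `1 / ρ̃` by coercivity applied to
the columns of `Ã⁻¹` (`inv_entry_le_of_coercive`).
-/

open Matrix

noncomputable section

/-- If the Neumann series of `B` relative to an invertible `D` converges entrywise, then `B` is
invertible and the series sums to `B⁻¹`. No spectral radius bound is needed: the general term of a
convergent series tends to zero, which is all the telescoping argument uses. -/
lemma hasSum_neumann {N : ℕ} (D B : Matrix (Fin N) (Fin N) ℝ) (hD : IsUnit D.det)
    (h : ∀ i j, Summable (fun n : ℕ => ((D⁻¹ * (D - B)) ^ n * D⁻¹) i j)) :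
    IsUnit B ∧ ∀ i j, HasSum (fun n : ℕ => ((D⁻¹ * (D - B)) ^ n * D⁻¹) i j) (B⁻¹ i j) := by
  set X := D⁻¹ * (D - B) with hX
  have hsum : Summable (fun n : ℕ => X ^ n * D⁻¹) :=
    Pi.summable.2 fun i => Pi.summable.2 fun j => h i j
  obtain ⟨S, hS⟩ := hsum
  have hDB : D⁻¹ * B = 1 - X := by
    rw [hX, mul_sub, Matrix.nonsing_inv_mul D hD]; abel
  have hpow : Filter.Tendsto (fun n : ℕ => X ^ n) Filter.atTop (nhds 0) := by
    have h1 := hS.summable.tendsto_atTop_zero.mul_const D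
    simpa [Matrix.mul_assoc, Matrix.nonsing_inv_mul D hD] using h1
  have hpartial : ∀ n : ℕ, ∑ k ∈ Finset.range n, X ^ k * D⁻¹ * B = 1 - X ^ n := by
    intro n
    rw [← geom_sum_mul_neg, Finset.sum_mul]
    exact Finset.sum_congr rfl fun k _ => by rw [mul_assoc, hDB]
  have hSB : S * B = 1 := by
    have h1 := (hS.mul_right B).tendsto_sum_nat
    simp only [hpartial] at h1
    have h2 := hpow.const_sub 1
    rw [sub_zero] at h2
    exact tendsto_nhds_unique h1 h2
  refine ⟨IsUnit.of_mul_eq_one_right S hSB, fun i j => ?_⟩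
  rw [Matrix.inv_eq_left_inv hSB]
  exact Pi.hasSum.1 (Pi.hasSum.1 hS i) j

/-- Comparison of powers: the triangle inequality for `δ` propagates the exponential weight along
paths. -/
lemma pow_le_exp_mul_pow {N : ℕ} (δ : Fin N → Fin N → ℝ) (hδ0 : ∀ i, δ i i = 0)
    (hδtri : ∀ i j k, δ i k ≤ δ i j + δ j k) (X Y : Matrix (Fin N) (Fin N) ℝ)
    (hX : ∀ i j, 0 ≤ X i j) (hXY : ∀ i j, X i j ≤ Real.exp (-δ i j) * Y i j) (n : ℕ) :
    ∀ i j, 0 ≤ (X ^ n) i j ∧ (X ^ n) i j ≤ Real.exp (-δ i j) * (Y ^ n) i j := by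
  have hY : ∀ i j, 0 ≤ Y i j := fun i j =>
    nonneg_of_mul_nonneg_right ((hX i j).trans (hXY i j)) (Real.exp_pos _)
  induction n with
  | zero =>
    intro i j
    rcases eq_or_ne i j with rfl | hij
    · simp [hδ0]
    · simp [Matrix.one_apply_ne hij]
  | succ n ih =>
    intro i j
    simp only [pow_succ, Matrix.mul_apply]
    refine ⟨Finset.sum_nonneg fun s _ => mul_nonneg (ih i s).1 (hX s j), ?_⟩
    rw [Finset.mul_sum]
    refine Finset.sum_le_sum fun s _ => ?_
    have hYn : 0 ≤ (Y ^ n) i s :=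
      nonneg_of_mul_nonneg_right ((ih i s).1.trans (ih i s).2) (Real.exp_pos _)
    calc (X ^ n) i s * X s j
        ≤ (Real.exp (-δ i s) * (Y ^ n) i s) * (Real.exp (-δ s j) * Y s j) :=
          mul_le_mul (ih i s).2 (hXY s j) (hX s j) ((ih i s).1.trans (ih i s).2)
      _ = Real.exp (-δ i s + -δ s j) * ((Y ^ n) i s * Y s j) := by
          rw [Real.exp_add]; ring
      _ ≤ Real.exp (-δ i j) * ((Y ^ n) i s * Y s j) := by
          refine mul_le_mul_of_nonneg_right (Real.exp_le_exp.2 ?_) (mul_nonneg hYn (hY s j))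
          linarith [hδtri i s j]

lemma inv_entry_le_of_coercive {N : ℕ} (B : Matrix (Fin N) (Fin N) ℝ) (hB : IsUnit B)
    (r : ℝ) (hr : 0 < r)
    (hBr : ∀ z : Fin N → ℝ, r * ∑ i, (z i) ^ 2 ≤ z ⬝ᵥ B.mulVec z) (i j : Fin N) :
    B⁻¹ i j ≤ 1 / r := by
  -- The `j`-th column `z` of `B⁻¹` satisfies `B z = e_j`, so coercivity reads `r ‖z‖² ≤ z j`.
  set z : Fin N → ℝ := B⁻¹ *ᵥ Pi.single j 1 with hz
  have hzi : ∀ k, z k = B⁻¹ k j := fun k => by simp [hz]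
  have h1 := hBr z
  have hBz : B *ᵥ z = Pi.single j 1 := by
    rw [hz, Matrix.mulVec_mulVec, Matrix.mul_nonsing_inv B ((Matrix.isUnit_iff_isUnit_det B).1 hB),
      Matrix.one_mulVec]
  rw [hBz, dotProduct_single, mul_one] at h1
  have h2 : ∀ k, r * z k ^ 2 ≤ z j := fun k =>
    (mul_le_mul_of_nonneg_left
      (Finset.single_le_sum (f := fun k => z k ^ 2) (fun _ _ => sq_nonneg _)
        (Finset.mem_univ k)) hr.le).trans h1
  rw [← hzi, le_div_iff₀ hr]
  have hj : r * z j ≤ 1 := by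
    by_contra! hc
    have hpos : 0 < z j := pos_of_mul_pos_right (one_pos.trans hc) hr.le
    nlinarith [h2 j]
  have hi : (z i * r) ^ 2 ≤ 1 := by
    have := mul_le_mul_of_nonneg_left (h2 i) hr.le
    nlinarith
  exact (abs_le_one_iff_mul_self_le_one.2 (by nlinarith) |> abs_le.1).2

/-- **Comparison of the Neumann (random walk) expansions of `A⁻¹` and `Ã⁻¹`:
entrywise positivity and exponential bound on the entries of `A⁻¹`.** -/
theorem neumann_comparison {N : ℕ}
    (ρvec : Fin N → ℝ) (hρvec : ∀ i, 0 < ρvec i)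
    (κ : Fin N → Fin N → ℝ)
    (hκsymm : ∀ i j, κ i j = κ j i) (hκpos : ∀ i j, i ≠ j → 0 ≤ κ i j)
    -- a metric `δ` on `{1, …, N}`
    (δ : Fin N → Fin N → ℝ)
    (hδ0 : ∀ i, δ i i = 0) (hδpos : ∀ i j, i ≠ j → 0 < δ i j)
    (hδsymm : ∀ i j, δ i j = δ j i)
    (hδtri : ∀ i j k, δ i k ≤ δ i j + δ j k)
    -- the matrices `A` and `Ã`
    (A Atil : Matrix (Fin N) (Fin N) ℝ)
    (hAdiag : ∀ i, A i i = ρvec i)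
    (hAoff : ∀ i j, i ≠ j → A i j = -κ i j)
    (hAtdiag : ∀ i, Atil i i = ρvec i)
    (hAtoff : ∀ i j, i ≠ j → Atil i j = -(Real.exp (δ i j) * κ i j))
    -- `Ã` is positive definite with `Ã ≥ ρ̃ Id`
    (ρtil : ℝ) (hρtil : 0 < ρtil) (hAtpos : Atil.PosDef)
    (hAρ : ∀ z : Fin N → ℝ, ρtil * ∑ i, (z i) ^ 2 ≤ z ⬝ᵥ Atil.mulVec z)
    -- the Neumann series for `A⁻¹` and `Ã⁻¹` converge (entrywise), where the expansions
    -- are in powers of the off-diagonal parts divided by the diagonal: with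
    -- `P := diag(ρ)`, `K := P - A` and `K̃ := P - Ã`,
    -- `A⁻¹ = Σₙ (P⁻¹K)ⁿ P⁻¹` and `Ã⁻¹ = Σₙ (P⁻¹K̃)ⁿ P⁻¹`
    (hNeumannA : ∀ i j, Summable (fun n : ℕ =>
      ((((Matrix.diagonal ρvec)⁻¹ * (Matrix.diagonal ρvec - A)) ^ n *
        (Matrix.diagonal ρvec)⁻¹) i j)))
    (hNeumannAt : ∀ i j, Summable (fun n : ℕ =>
      ((((Matrix.diagonal ρvec)⁻¹ * (Matrix.diagonal ρvec - Atil)) ^ n *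
        (Matrix.diagonal ρvec)⁻¹) i j))) :
    IsUnit A ∧
    (∀ i j, 0 ≤ A⁻¹ i j) ∧
    (∀ i j, A⁻¹ i j ≤ Real.exp (-δ i j) * Atil⁻¹ i j) ∧
    (∀ i j, A⁻¹ i j ≤ (1 / ρtil) * Real.exp (-δ i j)) := by
  have hDinv : (Matrix.diagonal ρvec)⁻¹ = Matrix.diagonal (fun i => (ρvec i)⁻¹) := by
    refine Matrix.inv_eq_left_inv ?_
    rw [Matrix.diagonal_mul_diagonal, ← Matrix.diagonal_one]
    congr 1
    funext i
    exact inv_mul_cancel₀ (hρvec i).ne'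
  have hD : IsUnit (Matrix.diagonal ρvec).det := by
    rw [Matrix.det_diagonal]
    exact (Finset.prod_pos fun i _ => hρvec i).ne'.isUnit
  obtain ⟨hAu, hAs⟩ := hasSum_neumann _ A hD hNeumannA
  obtain ⟨hTu, hTs⟩ := hasSum_neumann _ Atil hD hNeumannAt
  have hcmp := pow_le_exp_mul_pow δ hδ0 hδtri
    ((Matrix.diagonal ρvec)⁻¹ * (Matrix.diagonal ρvec - A))
    ((Matrix.diagonal ρvec)⁻¹ * (Matrix.diagonal ρvec - Atil))
    (fun i j => by
      rw [hDinv, Matrix.diagonal_mul, Matrix.sub_apply]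
      rcases eq_or_ne i j with rfl | hij
      · simp [hAdiag]
      · rw [Matrix.diagonal_apply_ne _ hij, hAoff i j hij, zero_sub, neg_neg]
        exact mul_nonneg (inv_nonneg.2 (hρvec i).le) (hκpos i j hij))
    (fun i j => by
      rw [hDinv, Matrix.diagonal_mul, Matrix.diagonal_mul, Matrix.sub_apply, Matrix.sub_apply]
      rcases eq_or_ne i j with rfl | hij
      · simp [hAdiag, hAtdiag]
      · rw [Matrix.diagonal_apply_ne _ hij, hAoff i j hij, hAtoff i j hij, zero_sub, neg_neg,
          zero_sub, neg_neg, Real.exp_neg]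
        refine le_of_eq ?_
        field_simp [(Real.exp_pos (δ i j)).ne'])
  have hle : ∀ i j, A⁻¹ i j ≤ Real.exp (-δ i j) * Atil⁻¹ i j := fun i j => by
    refine hasSum_le (fun n => ?_) (hAs i j) ((hTs i j).mul_left _)
    rw [hDinv, Matrix.mul_diagonal, Matrix.mul_diagonal, ← mul_assoc, ← hDinv]
    exact mul_le_mul_of_nonneg_right (hcmp n i j).2 (inv_nonneg.2 (hρvec j).le)
  refine ⟨hAu, fun i j => ?_, hle, fun i j => ?_⟩
  · refine (hAs i j).nonneg fun n => ?_
    rw [hDinv, Matrix.mul_diagonal, ← hDinv]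
    exact mul_nonneg (hcmp n i j).1 (inv_nonneg.2 (hρvec j).le)
  · rw [mul_comm]
    exact (hle i j).trans (mul_le_mul_of_nonneg_left
      (inv_entry_le_of_coercive Atil hTu ρtil hρtil hAρ i j) (Real.exp_pos _).le)
end
end

section
/- Let Λ be a two-dimensional periodic lattice (torus) of N sites with graph distance δ(·,·). Let ψ : ℝ → ℝ be smooth with ψ(x) = x²/2 + δψ(x) and sup_ℝ |δψ| < ∞, let ε > 0, and let μ be the probability measure on ℝ^Λ with density proportional to exp(-H(x)) where H(x) = Σ_{i∈Λ} ψ(x_i) - ε Σ_{δ(i,j)=1} x_i x_j. Set Δ := exp(-osc δψ), where osc δψ := sup δψ - inf δψ. If ε < (Δ/4) e^{-1}, then for all i, j ∈ Λ and all smooth functions f depending only on x_i and g depending only on x_j (with values and derivatives square-integrable with respect to μ), |cov_μ(f,g)| ≤ (Δ - 4εe)^{-1} exp(-δ(i,j)) (∫ |∂_i f|² dμ)^{1/2} (∫ |∂_j g|² dμ)^{1/2}. -/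
/-!
The mechanism is a conditional, single-site one. Given all other spins, the law of the spin at `i`
has density proportional to `exp (s t - ψ t)`, where `s` is the field of the neighbours. By the
Gaussian Poincaré inequality and the perturbation principle of Holley and Stroock it satisfies a
Poincaré inequality with constant `κ = exp (osc δψ) = Δ⁻¹`, uniformly in `s` (`Pot.poincare`), and
hence `|cov (F, G)| ≤ κ ‖F'‖ ‖G'‖` (`Pot.cov_le`).

Resampling the spin at `i`, that is replacing `f` by its conditional expectation `cE i f` given the
other spins, kills `∂ᵢ f`, and in exchange increases `‖∂ₖ f‖` by at most `J i k κ ‖∂ᵢ f‖`, because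
the derivative of the conditional law in the boundary condition is a covariance with the spin
(`nrm_stepD_le`). By the law of total covariance, `cov (f, g)` changes by at most
`κ ‖∂ᵢ f‖ ‖∂ᵢ g‖` (`cv_step_le`). If `B` is a nonnegative supersolution,
`‖∂ᵢ g‖ + κ ∑ₖ J i k Bₖ ≤ Bᵢ`, this change is paid for by the decrease of the potential
`κ ∑ₖ Bₖ ‖∂ₖ f‖` (`step_greedy`). Always resampling where the Lipschitz constant is largest makes
the total Lipschitz constant tend to zero geometrically, as `κ ∑ₖ J i k < 1`; the covariance of the
iterates with `g` then tends to zero, and `|cov (f, g)| ≤ κ ∑ₖ Bₖ ‖∂ₖ f‖`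
(`abs_cv_le_potential`). This is carried out for bounded functions with bounded derivatives; for
functions of one spin a truncation removes that assumption (`abs_cv_coord_le`).

On the torus every site has at most four neighbours, and by the triangle inequality
`Bₖ = ‖∂ⱼ g‖ exp (-δ(k, j)) / (1 - 4 κ ε e)` is a supersolution when `4 κ ε e < 1`
(`supersolution`). Evaluating the bound for `f` depending on `xᵢ` alone gives the claim, since
`κ / (1 - 4 κ ε e) = (Δ - 4 ε e)⁻¹`.
-/


open MeasureTheory Real

noncomputable section

/-- Circular (graph) distance on `ZMod m`. -/
def circDist (m : ℕ) [NeZero m] (a b : ZMod m) : ℕ := min (a - b).val (b - a).val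

/-- Graph distance on the two-dimensional periodic lattice (torus) `ZMod m × ZMod n`
with nearest-neighbor adjacency. -/
def torusDist (m n : ℕ) [NeZero m] [NeZero n] (i j : ZMod m × ZMod n) : ℕ :=
  circDist m i.1 j.1 + circDist n i.2 j.2

/-- The (unnormalized) Gibbs measure `exp(-H(x)) dx`. -/
def gibbs {ι : Type*} [Fintype ι] (H : EuclideanSpace ℝ ι → ℝ) : Measure (EuclideanSpace ℝ ι) :=
  (volume : Measure (EuclideanSpace ℝ ι)).withDensity fun x => ENNReal.ofReal (Real.exp (-H x))

/-- The normalized Gibbs measure `μ(dx) = Z⁻¹ exp(-H(x)) dx`. -/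
def gibbsN {ι : Type*} [Fintype ι] (H : EuclideanSpace ℝ ι → ℝ) : Measure (EuclideanSpace ℝ ι) :=
  (gibbs H Set.univ)⁻¹ • gibbs H

/-- The partial derivative `∂_i f (x)`. -/
def pd {ι : Type*} [Fintype ι] [DecidableEq ι] (f : EuclideanSpace ℝ ι → ℝ) (i : ι)
    (x : EuclideanSpace ℝ ι) : ℝ :=
  fderiv ℝ f x (EuclideanSpace.single i 1)

/-- The covariance `cov_μ(f,g) = ∫ (f - ∫ f dμ)(g - ∫ g dμ) dμ`. -/
def covar {ι : Type*} [Fintype ι] (μ : Measure (EuclideanSpace ℝ ι))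
    (f g : EuclideanSpace ℝ ι → ℝ) : ℝ :=
  ∫ x, (f x - ∫ y, f y ∂μ) * (g x - ∫ y, g y ∂μ) ∂μ

/-! ### The one-dimensional Poincaré inequality -/

namespace GibbsDecay

set_option linter.unusedSectionVars false

open Filter Topology

/-- The pointwise inequality `(F' - h/(t-m))² ≥ 0` integrated against the Gaussian weight: the
boundary terms produced by the primitive `h² φ / (t - m)` have a favourable sign. -/
lemma gauss_interval {F F' : ℝ → ℝ} (hF : ∀ t, HasDerivAt F (F' t) t) (hF' : Continuous F')
    (m a b : ℝ) (ham : a ≤ m) (hmb : m ≤ b) :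
    0 ≤ ∫ t in a..b, (F' t ^ 2 - (F t - F m) ^ 2) * exp (-(t - m) ^ 2 / 2) := by
  have hFd : Differentiable ℝ F := fun t => (hF t).differentiableAt
  have hFc : Continuous F := hFd.continuous
  have hdc : Continuous (dslope F m) := by
    rw [← continuousOn_univ, continuousOn_dslope Filter.univ_mem]
    exact ⟨hFc.continuousOn, hFd m⟩
  set G : ℝ → ℝ := fun t => (F t - F m) * dslope F m t * exp (-(t - m) ^ 2 / 2) with hG
  set G' : ℝ → ℝ := fun t => (2 * (F t - F m) * F' t / (t - m) - (F t - F m) ^ 2 / (t - m) ^ 2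
      - (F t - F m) ^ 2) * exp (-(t - m) ^ 2 / 2) with hG'
  have hGc : Continuous G := by
    have : Continuous fun t : ℝ => exp (-(t - m) ^ 2 / 2) := by fun_prop
    exact ((hFc.sub continuous_const).mul hdc).mul this
  have hGd : ∀ t, t ≠ m → HasDerivAt G (G' t) t := by
    intro t ht
    have htm : t - m ≠ 0 := sub_ne_zero.mpr ht
    have h1 : HasDerivAt (fun t => (F t - F m) ^ 2 / (t - m) * exp (-(t - m) ^ 2 / 2))
        (G' t) t := by
      have e1 : HasDerivAt (fun t => F t - F m) (F' t) t := (hF t).sub_const _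
      have e2 : HasDerivAt (fun t : ℝ => t - m) 1 t := (hasDerivAt_id t).sub_const _
      have e3 := ((e2.pow 2).neg.div_const 2).exp
      have e4 := ((e1.pow 2).div e2 htm).mul e3
      refine (e4.congr_deriv ?_)
      simp only [hG', Pi.pow_apply, Pi.div_apply, Pi.neg_apply]
      field_simp
      ring
    refine h1.congr_of_eventuallyEq ?_
    filter_upwards [isOpen_ne.mem_nhds ht] with u hu
    have hum : u - m ≠ 0 := sub_ne_zero.mpr hu
    simp only [hG]
    rw [dslope_of_ne _ hu, slope_def_field]
    field_simp
  have hle : ∀ t, t ≠ m → G' t ≤ (F' t ^ 2 - (F t - F m) ^ 2) * exp (-(t - m) ^ 2 / 2) := by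
    intro t ht
    have htm : t - m ≠ 0 := sub_ne_zero.mpr ht
    refine mul_le_mul_of_nonneg_right ?_ (exp_pos _).le
    have := sq_nonneg (F' t - (F t - F m) / (t - m))
    have e : (F' t - (F t - F m) / (t - m)) ^ 2 = F' t ^ 2 -
      (2 * (F t - F m) * F' t / (t - m) - (F t - F m) ^ 2 / (t - m) ^ 2) := by
      field_simp
      ring
    linarith
  have hic : Continuous fun t => (F' t ^ 2 - (F t - F m) ^ 2) * exp (-(t - m) ^ 2 / 2) := by
    fun_prop
  have hGm : G m = 0 := by simp [hG]
  have sgn : ∀ t, G t * (t - m) = (F t - F m) ^ 2 * exp (-(t - m) ^ 2 / 2) := by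
    intro t
    by_cases h : t = m
    · subst h; simp
    · have htm : t - m ≠ 0 := sub_ne_zero.mpr h
      simp only [hG]
      rw [dslope_of_ne _ h, slope_def_field]
      field_simp
  have hr := intervalIntegral.sub_le_integral_of_hasDeriv_right_of_le hmb hGc.continuousOn
    (fun x hx => (hGd x hx.1.ne').hasDerivWithinAt) hic.continuousOn.integrableOn_Icc
    (fun x hx => hle x hx.1.ne')
  have hl := intervalIntegral.sub_le_integral_of_hasDeriv_right_of_le ham hGc.continuousOn
    (fun x hx => (hGd x hx.2.ne).hasDerivWithinAt) hic.continuousOn.integrableOn_Icc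
    (fun x hx => hle x hx.2.ne)
  have hGb : 0 ≤ G b := by
    rcases hmb.eq_or_lt with h | h
    · rw [← h, hGm]
    · have h1 := sgn b
      have h2 : 0 ≤ G b * (b - m) := by rw [h1]; positivity
      exact nonneg_of_mul_nonneg_left h2 (sub_pos.mpr h)
  have hGa : G a ≤ 0 := by
    rcases ham.eq_or_lt with h | h
    · rw [h, hGm]
    · have h1 := sgn a
      have h2 : 0 ≤ G a * (a - m) := by rw [h1]; positivity
      by_contra hc
      push Not at hc
      nlinarith
  rw [← intervalIntegral.integral_add_adjacent_intervals (b := m)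
    (hic.intervalIntegrable _ _) (hic.intervalIntegrable _ _)]
  linarith

/-- Gaussian Poincaré inequality, in the form where the constant subtracted from `F` is its value
at the centre of the Gaussian. -/
lemma gauss_poincare {F F' : ℝ → ℝ} (hF : ∀ t, HasDerivAt F (F' t) t) (hF' : Continuous F')
    (m : ℝ)
    (h1 : Integrable fun t => (F t - F m) ^ 2 * exp (-(t - m) ^ 2 / 2))
    (h2 : Integrable fun t => F' t ^ 2 * exp (-(t - m) ^ 2 / 2)) :
    ∫ t, (F t - F m) ^ 2 * exp (-(t - m) ^ 2 / 2) ≤ ∫ t, F' t ^ 2 * exp (-(t - m) ^ 2 / 2) := by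
  have hi : Integrable fun t => (F' t ^ 2 - (F t - F m) ^ 2) * exp (-(t - m) ^ 2 / 2) := by
    refine (h2.sub h1).congr (ae_of_all _ fun t => ?_)
    simp only [Pi.sub_apply]; ring
  have ht := intervalIntegral_tendsto_integral hi tendsto_neg_atTop_atBot tendsto_id
  have h0 : 0 ≤ ∫ t, (F' t ^ 2 - (F t - F m) ^ 2) * exp (-(t - m) ^ 2 / 2) := by
    refine ge_of_tendsto ht ?_
    filter_upwards [eventually_ge_atTop |m|] with r hr
    exact gauss_interval hF hF' m _ _ (by linarith [neg_abs_le m]) ((le_abs_self m).trans hr)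
  have e : ∫ t, (F' t ^ 2 - (F t - F m) ^ 2) * exp (-(t - m) ^ 2 / 2)
      = (∫ t, F' t ^ 2 * exp (-(t - m) ^ 2 / 2))
        - ∫ t, (F t - F m) ^ 2 * exp (-(t - m) ^ 2 / 2) := by
    rw [← integral_sub h2 h1]
    congr 1; ext t; ring
  linarith

/-- The conditional law of one spin when the sum of its neighbours, weighted by the couplings,
equals `s`. -/
def nu (ψ : ℝ → ℝ) (s : ℝ) : Measure ℝ := (volume : Measure ℝ).tilted fun t => s * t - ψ t

/-- Single-site potentials that are bounded perturbations, between `a` and `b`, of `t² / 2`. -/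
structure Pot (ψ : ℝ → ℝ) (a b : ℝ) : Prop where
  cont : Continuous ψ
  lo : ∀ t, t ^ 2 / 2 + a ≤ ψ t
  hi : ∀ t, ψ t ≤ t ^ 2 / 2 + b

section Pot
variable {ψ : ℝ → ℝ} {a b : ℝ}

lemma Pot.integrable_exp (hψ : Pot ψ a b) (s : ℝ) : Integrable fun t => exp (s * t - ψ t) := by
  have hg : Integrable fun t : ℝ => exp (s ^ 2 - a) * exp (-(1 / 4) * t ^ 2) :=
    (integrable_exp_neg_mul_sq (by norm_num)).const_mul _
  refine hg.mono' ?_ (ae_of_all _ fun t => ?_)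
  · have := hψ.cont
    exact (by fun_prop : Continuous fun t => exp (s * t - ψ t)).aestronglyMeasurable
  · rw [Real.norm_eq_abs, abs_exp, ← exp_add, exp_le_exp]
    have := hψ.lo t
    nlinarith [sq_nonneg (s - t / 2)]

lemma Pot.prob (hψ : Pot ψ a b) (s : ℝ) : IsProbabilityMeasure (nu ψ s) :=
  isProbabilityMeasure_tilted (hψ.integrable_exp s)

lemma Pot.Z_pos (hψ : Pot ψ a b) (s : ℝ) : 0 < ∫ t, exp (s * t - ψ t) :=
  integral_exp_pos (hψ.integrable_exp s)

/-- Every function of at most exponential growth, uniformly for tilts in a bounded range, is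
dominated by the two exponentials on the right. -/
lemma growth_bound {ψ : ℝ → ℝ} {S s C v : ℝ} (hs : |s| ≤ S) (t : ℝ)
    (hv : |v| ≤ C * (1 + |t|)) :
    ‖v * exp (s * t - ψ t)‖ ≤
      C * (exp ((S + 1) * t - ψ t) + exp (-(S + 1) * t - ψ t)) := by
  have hC : 0 ≤ C := by
    by_contra h
    have : 0 < 1 + |t| := by positivity
    nlinarith [abs_nonneg v]
  rw [norm_mul, Real.norm_eq_abs, Real.norm_eq_abs, abs_exp]
  have h1 : |v| ≤ C * exp |t| := hv.trans (by
    gcongr; linarith [add_one_le_exp |t|])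
  have h2 : s * t ≤ S * |t| := by
    calc s * t ≤ |s * t| := le_abs_self _
      _ = |s| * |t| := abs_mul _ _
      _ ≤ _ := by gcongr
  calc |v| * exp (s * t - ψ t) ≤ (C * exp |t|) * exp (S * |t| - ψ t) := by
        gcongr
    _ = C * exp ((S + 1) * |t| - ψ t) := by rw [mul_assoc, ← exp_add]; ring_nf
    _ ≤ _ := by
        gcongr
        rcases abs_cases t with ⟨h, _⟩ | ⟨h, _⟩
        · rw [h]; linarith [exp_pos (-(S + 1) * t - ψ t)]
        · rw [h]
          have e : (S + 1) * -t - ψ t = -(S + 1) * t - ψ t := by ring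
          rw [e]; linarith [exp_pos ((S + 1) * t - ψ t)]

lemma Pot.integrable_dom (hψ : Pot ψ a b) (S C : ℝ) :
    Integrable fun t => C * (exp ((S + 1) * t - ψ t) + exp (-(S + 1) * t - ψ t)) :=
  ((hψ.integrable_exp _).add (hψ.integrable_exp _)).const_mul _

lemma Pot.integrable_nu (hψ : Pot ψ a b) (s : ℝ) {φ : ℝ → ℝ} (hφ : Continuous φ) {C : ℝ}
    (hb : ∀ t, |φ t| ≤ C * (1 + |t|)) : Integrable φ (nu ψ s) := by
  rw [nu, integrable_tilted_iff (hψ.integrable_exp s)]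
  refine (hψ.integrable_dom |s| C).mono' ?_ (ae_of_all _ fun t => ?_)
  · have := hψ.cont
    exact (by fun_prop : Continuous fun t => exp (s * t - ψ t) • φ t).aestronglyMeasurable
  · rw [smul_eq_mul, mul_comm]
    exact growth_bound le_rfl t (hb t)

lemma nu_integral (ψ : ℝ → ℝ) (s : ℝ) (φ : ℝ → ℝ) :
    ∫ t, φ t ∂(nu ψ s) = (∫ t, φ t * exp (s * t - ψ t)) / ∫ t, exp (s * t - ψ t) := by
  rw [nu, integral_tilted, ← integral_div]
  congr 1; ext t; rw [smul_eq_mul]; ring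

/-- Poincaré inequality for the conditional single-site laws, with the constant given by the
bounded perturbation principle of Holley and Stroock. -/
lemma Pot.poincare (hψ : Pot ψ a b) (s : ℝ) {F F' : ℝ → ℝ} (hF : ∀ t, HasDerivAt F (F' t) t)
    (hF' : Continuous F') (h1 : Integrable F (nu ψ s))
    (h2 : Integrable (fun t => F t ^ 2) (nu ψ s))
    (h3 : Integrable (fun t => F' t ^ 2) (nu ψ s)) :
    ∫ t, F t ^ 2 ∂(nu ψ s) - (∫ t, F t ∂(nu ψ s)) ^ 2 ≤
      exp (b - a) * ∫ t, F' t ^ 2 ∂(nu ψ s) := by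
  have hp := hψ.prob s
  have hFc : Continuous F := continuous_iff_continuousAt.mpr fun t => (hF t).continuousAt
  have hψc := hψ.cont
  -- the variance is at most the second moment about the centre of the Gaussian
  have hvar : ∫ t, F t ^ 2 ∂(nu ψ s) - (∫ t, F t ∂(nu ψ s)) ^ 2
      ≤ ∫ t, (F t - F s) ^ 2 ∂(nu ψ s) := by
    have e : ∫ t, (F t - F s) ^ 2 ∂(nu ψ s) = ∫ t, F t ^ 2 ∂(nu ψ s)
        - 2 * F s * ∫ t, F t ∂(nu ψ s) + F s ^ 2 := by
      have : ∀ t, (F t - F s) ^ 2 = F t ^ 2 - (2 * F s) * F t + F s ^ 2 := fun t => by ring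
      simp_rw [this]
      have i1 : Integrable (fun t => (2 * F s) * F t) (nu ψ s) := h1.const_mul _
      have i2 : Integrable (fun t => F t ^ 2 - (2 * F s) * F t) (nu ψ s) := h2.sub i1
      rw [integral_add i2 (integrable_const _), integral_sub h2 i1, integral_const_mul]
      simp
    rw [e]
    nlinarith [sq_nonneg (∫ t, F t ∂(nu ψ s) - F s)]
  refine hvar.trans ?_
  have h4 : Integrable (fun t => (F t - F s) ^ 2) (nu ψ s) := by
    have : (fun t => (F t - F s) ^ 2) = fun t => F t ^ 2 - (2 * F s) * F t + F s ^ 2 := by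
      ext t; ring
    rw [this]
    exact (h2.sub (h1.const_mul _)).add (integrable_const _)
  rw [nu, integrable_tilted_iff (hψ.integrable_exp s)] at h3 h4
  simp only [smul_eq_mul] at h3 h4
  -- comparison of the density with the Gaussian density centred at `s`
  have cmp1 : ∀ t, exp (-(t - s) ^ 2 / 2) ≤ exp (b - s ^ 2 / 2) * exp (s * t - ψ t) := by
    intro t
    rw [← exp_add, exp_le_exp]
    have := hψ.hi t
    nlinarith
  have cmp2 : ∀ t, exp (s * t - ψ t) ≤ exp (s ^ 2 / 2 - a) * exp (-(t - s) ^ 2 / 2) := by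
    intro t
    rw [← exp_add, exp_le_exp]
    have := hψ.lo t
    nlinarith
  have dom : ∀ u : ℝ → ℝ, Continuous u → Integrable (fun t => exp (s * t - ψ t) * u t ^ 2) →
      Integrable fun t => u t ^ 2 * exp (-(t - s) ^ 2 / 2) := by
    intro u hu hi
    refine (hi.const_mul (exp (b - s ^ 2 / 2))).mono' ?_ (ae_of_all _ fun t => ?_)
    · exact (by fun_prop :
        Continuous fun t => u t ^ 2 * exp (-(t - s) ^ 2 / 2)).aestronglyMeasurable
    · rw [Real.norm_eq_abs, abs_of_nonneg (by positivity)]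
      have := mul_le_mul_of_nonneg_left (cmp1 t) (sq_nonneg (u t))
      linarith
  have g4 := dom (fun t => F t - F s) (by fun_prop) h4
  have g3 := dom F' hF' h3
  have key := gauss_poincare hF hF' s g4 g3
  rw [nu_integral, nu_integral, ← mul_div_assoc]
  refine div_le_div_of_nonneg_right ?_ (hψ.Z_pos s).le
  calc ∫ t, (F t - F s) ^ 2 * exp (s * t - ψ t)
      ≤ ∫ t, exp (s ^ 2 / 2 - a) * ((F t - F s) ^ 2 * exp (-(t - s) ^ 2 / 2)) := by
        refine integral_mono (by simpa only [mul_comm] using h4) (g4.const_mul _) fun t => ?_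
        have := mul_le_mul_of_nonneg_left (cmp2 t) (sq_nonneg (F t - F s))
        simp only; linarith
    _ = exp (s ^ 2 / 2 - a) * ∫ t, (F t - F s) ^ 2 * exp (-(t - s) ^ 2 / 2) :=
        integral_const_mul _ _
    _ ≤ exp (s ^ 2 / 2 - a) * ∫ t, F' t ^ 2 * exp (-(t - s) ^ 2 / 2) := by gcongr
    _ ≤ exp (s ^ 2 / 2 - a) * ∫ t, exp (b - s ^ 2 / 2) * (F' t ^ 2 * exp (s * t - ψ t)) := by
        refine mul_le_mul_of_nonneg_left ?_ (exp_pos _).le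
        have h3' : Integrable fun t => F' t ^ 2 * exp (s * t - ψ t) := by
          simpa only [mul_comm] using h3
        refine integral_mono g3 (h3'.const_mul _) fun t => ?_
        have := mul_le_mul_of_nonneg_left (cmp1 t) (sq_nonneg (F' t))
        simp only; linarith
    _ = exp (b - a) * ∫ t, F' t ^ 2 * exp (s * t - ψ t) := by
        rw [integral_const_mul, ← mul_assoc, ← exp_add]
        ring_nf

end Pot

/-! ### Covariances on a probability space -/

section CauchySchwarz
variable {Ω : Type*} [MeasurableSpace Ω] {P : Measure Ω}

lemma cauchy_schwarz {f g : Ω → ℝ} (hf : Integrable (fun x => f x ^ 2) P)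
    (hg : Integrable (fun x => g x ^ 2) P) (hfg : Integrable (fun x => f x * g x) P) :
    |∫ x, f x * g x ∂P| ≤ √(∫ x, f x ^ 2 ∂P) * √(∫ x, g x ^ 2 ∂P) := by
  have h : ∀ l : ℝ, 0 ≤ (∫ x, g x ^ 2 ∂P) * (l * l) + (2 * ∫ x, f x * g x ∂P) * l
      + ∫ x, f x ^ 2 ∂P := by
    intro l
    have e : ∫ x, (f x + l * g x) ^ 2 ∂P = (∫ x, g x ^ 2 ∂P) * (l * l)
        + (2 * ∫ x, f x * g x ∂P) * l + ∫ x, f x ^ 2 ∂P := by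
      have i1 : Integrable (fun x => (l * l) * g x ^ 2) P := hg.const_mul _
      have i2 : Integrable (fun x => (2 * l) * (f x * g x)) P := hfg.const_mul _
      have i3 : Integrable (fun x => (l * l) * g x ^ 2 + (2 * l) * (f x * g x)) P := i1.add i2
      have : ∀ x, (f x + l * g x) ^ 2 = (l * l) * g x ^ 2 + (2 * l) * (f x * g x) + f x ^ 2 :=
        fun x => by ring
      simp_rw [this]
      rw [integral_add i3 hf, integral_add i1 i2, integral_const_mul, integral_const_mul]
      ring
    rw [← e]
    exact integral_nonneg fun x => sq_nonneg _
  have hd := discrim_le_zero h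
  rw [discrim] at hd
  rw [← Real.sqrt_mul (integral_nonneg fun x => sq_nonneg _)]
  apply Real.le_sqrt_of_sq_le
  rw [sq_abs]
  nlinarith

lemma minkowski {f g : Ω → ℝ} (hf : Integrable (fun x => f x ^ 2) P)
    (hg : Integrable (fun x => g x ^ 2) P) (hfg : Integrable (fun x => f x * g x) P) :
    √(∫ x, (f x + g x) ^ 2 ∂P) ≤ √(∫ x, f x ^ 2 ∂P) + √(∫ x, g x ^ 2 ∂P) := by
  have h := (le_abs_self _).trans (cauchy_schwarz hf hg hfg)
  have i2 : Integrable (fun x => 2 * (f x * g x)) P := hfg.const_mul _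
  have i3 : Integrable (fun x => f x ^ 2 + 2 * (f x * g x)) P := hf.add i2
  have e : ∫ x, (f x + g x) ^ 2 ∂P
      = ∫ x, f x ^ 2 ∂P + 2 * ∫ x, f x * g x ∂P + ∫ x, g x ^ 2 ∂P := by
    have : ∀ x, (f x + g x) ^ 2 = f x ^ 2 + 2 * (f x * g x) + g x ^ 2 := fun x => by ring
    simp_rw [this]
    rw [integral_add i3 hg, integral_add hf i2, integral_const_mul]
  apply Real.sqrt_le_iff.mpr
  refine ⟨by positivity, ?_⟩
  have s1 := Real.sq_sqrt (integral_nonneg (μ := P) fun x => sq_nonneg (f x))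
  have s2 := Real.sq_sqrt (integral_nonneg (μ := P) fun x => sq_nonneg (g x))
  rw [e]
  nlinarith

/-- The covariance of `f` and `g` under `P`, in the form `∫ fg - ∫ f ∫ g`. -/
def cv (P : Measure Ω) (f g : Ω → ℝ) : ℝ :=
  ∫ x, f x * g x ∂P - (∫ x, f x ∂P) * ∫ x, g x ∂P

lemma integral_centered [IsProbabilityMeasure P] {f g : Ω → ℝ} (hf : Integrable f P)
    (hg : Integrable g P) (hfg : Integrable (fun x => f x * g x) P) :
    ∫ x, (f x - ∫ y, f y ∂P) * (g x - ∫ y, g y ∂P) ∂P = cv P f g := by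
  set A := ∫ y, f y ∂P
  set B := ∫ y, g y ∂P
  have i1 : Integrable (fun x => B * f x) P := hf.const_mul _
  have i2 : Integrable (fun x => A * g x) P := hg.const_mul _
  have i3 : Integrable (fun x => f x * g x - B * f x) P := hfg.sub i1
  have i4 : Integrable (fun x => f x * g x - B * f x - A * g x) P := i3.sub i2
  have : ∀ x, (f x - A) * (g x - B) = f x * g x - B * f x - A * g x + A * B := fun x => by ring
  simp_rw [this]
  rw [integral_add i4 (integrable_const _), integral_sub i3 i2, integral_sub hfg i1,
    integral_const_mul, integral_const_mul]
  simp only [cv, integral_const, probReal_univ, one_smul]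
  ring

lemma abs_cv_le [IsProbabilityMeasure P] {f g : Ω → ℝ} (hf : Integrable f P)
    (hg : Integrable g P) (hfg : Integrable (fun x => f x * g x) P)
    (hf2 : Integrable (fun x => f x ^ 2) P) (hg2 : Integrable (fun x => g x ^ 2) P) :
    |cv P f g| ≤ √(∫ x, f x ^ 2 ∂P - (∫ x, f x ∂P) ^ 2)
      * √(∫ x, g x ^ 2 ∂P - (∫ x, g x ∂P) ^ 2) := by
  have sqc : ∀ {u : Ω → ℝ}, Integrable u P → Integrable (fun x => u x ^ 2) P →
      ∫ x, (u x - ∫ y, u y ∂P) ^ 2 ∂P = ∫ x, u x ^ 2 ∂P - (∫ x, u x ∂P) ^ 2 := by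
    intro u h1 h2
    have := integral_centered h1 h1 (by simpa only [sq] using h2)
    simp only [cv, ← sq] at this
    exact this
  have isq : ∀ {u : Ω → ℝ} (c : ℝ), Integrable u P → Integrable (fun x => u x ^ 2) P →
      Integrable (fun x => (u x - c) ^ 2) P := by
    intro u c h1 h2
    have : (fun x => (u x - c) ^ 2) = fun x => u x ^ 2 - (2 * c) * u x + c ^ 2 := by
      ext x; ring
    rw [this]
    exact (h2.sub (h1.const_mul _)).add (integrable_const _)
  have ifg : Integrable (fun x => (f x - ∫ y, f y ∂P) * (g x - ∫ y, g y ∂P)) P := by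
    set A := ∫ y, f y ∂P
    set B := ∫ y, g y ∂P
    have : (fun x => (f x - A) * (g x - B))
        = fun x => f x * g x - B * f x - A * g x + A * B := by
      ext x; ring
    rw [this]
    exact ((hfg.sub (hf.const_mul _)).sub (hg.const_mul _)).add (integrable_const _)
  rw [← integral_centered hf hg hfg, ← sqc hf hf2, ← sqc hg hg2]
  exact cauchy_schwarz (isq _ hf hf2) (isq _ hg hg2) ifg

/-- Jensen's inequality for the square. -/
lemma sq_integral_le [IsProbabilityMeasure P] {f : Ω → ℝ} (hf : Integrable f P)
    (hf2 : Integrable (fun x => f x ^ 2) P) : (∫ x, f x ∂P) ^ 2 ≤ ∫ x, f x ^ 2 ∂P := by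
  have h := integral_centered hf hf (by simpa only [sq] using hf2)
  simp only [cv, ← sq] at h
  have : 0 ≤ ∫ x, (f x - ∫ y, f y ∂P) ^ 2 ∂P := integral_nonneg fun x => sq_nonneg _
  linarith

lemma integrable_of_bdd [TopologicalSpace Ω] [OpensMeasurableSpace Ω]
    [SecondCountableTopology Ω] [IsFiniteMeasure P] {f : Ω → ℝ} (hf : Continuous f) {C : ℝ}
    (hC : ∀ x, |f x| ≤ C) : Integrable f P :=
  (integrable_const C).mono' hf.aestronglyMeasurable (ae_of_all _ hC)

end CauchySchwarz

/-! ### Conditional laws depending on a parameter -/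

section Param
variable {ψ : ℝ → ℝ} {a b : ℝ}

/-- Covariance estimate for the conditional single-site laws. -/
lemma Pot.cov_le (hψ : Pot ψ a b) (s : ℝ) {F F' G G' : ℝ → ℝ} {C : ℝ}
    (hF : ∀ t, HasDerivAt F (F' t) t) (hF' : Continuous F')
    (hG : ∀ t, HasDerivAt G (G' t) t) (hG' : Continuous G')
    (bF : ∀ t, |F t| ≤ C) (bF' : ∀ t, |F' t| ≤ C) (bG : ∀ t, |G t| ≤ C * (1 + |t|))
    (bG' : ∀ t, |G' t| ≤ C) (hG2 : Integrable (fun t => G t ^ 2) (nu ψ s)) :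
    |cv (nu ψ s) F G| ≤ exp (b - a) * √(∫ t, F' t ^ 2 ∂(nu ψ s))
      * √(∫ t, G' t ^ 2 ∂(nu ψ s)) := by
  have hp := hψ.prob s
  have hFc : Continuous F := continuous_iff_continuousAt.mpr fun t => (hF t).continuousAt
  have hGc : Continuous G := continuous_iff_continuousAt.mpr fun t => (hG t).continuousAt
  have hC : 0 ≤ C := (abs_nonneg _).trans (bF 0)
  have sqb : ∀ {u : ℝ → ℝ}, Continuous u → (∀ t, |u t| ≤ C) →
      Integrable (fun t => u t ^ 2) (nu ψ s) := by
    intro u hu hb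
    refine integrable_of_bdd (C := C ^ 2) (by fun_prop) fun t => ?_
    rw [abs_pow]
    exact pow_le_pow_left₀ (abs_nonneg _) (hb t) 2
  have iF : Integrable F (nu ψ s) := integrable_of_bdd hFc bF
  have iG : Integrable G (nu ψ s) := hψ.integrable_nu s hGc bG
  have iFG : Integrable (fun t => F t * G t) (nu ψ s) := by
    refine hψ.integrable_nu s (C := C * C) (hFc.mul hGc) fun t => ?_
    rw [abs_mul, mul_assoc]
    exact mul_le_mul (bF t) (bG t) (abs_nonneg _) hC
  have h1 := hψ.poincare s hF hF' iF (sqb hFc bF) (sqb hF' bF')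
  have h2 := hψ.poincare s hG hG' iG hG2 (sqb hG' bG')
  refine (abs_cv_le iF iG iFG (sqb hFc bF) hG2).trans ?_
  refine (mul_le_mul (Real.sqrt_le_sqrt h1) (Real.sqrt_le_sqrt h2) (Real.sqrt_nonneg _)
    (Real.sqrt_nonneg _)).trans_eq ?_
  rw [Real.sqrt_mul (exp_pos _).le, Real.sqrt_mul (exp_pos _).le]
  have := Real.mul_self_sqrt (exp_pos (b - a)).le
  linear_combination (√(∫ t, F' t ^ 2 ∂(nu ψ s)) * √(∫ t, G' t ^ 2 ∂(nu ψ s))) * this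

/-- Covariance of a test function with the spin itself. -/
lemma Pot.cov_id_le (hψ : Pot ψ a b) (s : ℝ) {F F' : ℝ → ℝ} {C : ℝ}
    (hF : ∀ t, HasDerivAt F (F' t) t) (hF' : Continuous F')
    (bF : ∀ t, |F t| ≤ C) (bF' : ∀ t, |F' t| ≤ C) :
    |cv (nu ψ s) F (fun t => t)| ≤ exp (b - a) * √(∫ t, F' t ^ 2 ∂(nu ψ s)) := by
  have hp := hψ.prob s
  have hC : 0 ≤ C := (abs_nonneg _).trans (bF 0)
  have hsq : Integrable (fun t : ℝ => t ^ 2) (nu ψ s) := by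
    rw [nu, integrable_tilted_iff (hψ.integrable_exp s)]
    have hψc := hψ.cont
    refine (((hψ.integrable_exp (s + 1)).add (hψ.integrable_exp (s - 1))).const_mul 2).mono'
      (by fun_prop : Continuous fun t => exp (s * t - ψ t) • t ^ 2).aestronglyMeasurable
      (ae_of_all _ fun t => ?_)
    have h1 : t ^ 2 ≤ 2 * (exp t + exp (-t)) := by
      have h2 := Real.quadratic_le_exp_of_nonneg (abs_nonneg t)
      rw [sq_abs] at h2
      have h3 : exp |t| ≤ exp t + exp (-t) := by
        rcases abs_cases t with ⟨h, _⟩ | ⟨h, _⟩ <;> rw [h] <;>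
          linarith [exp_pos t, exp_pos (-t)]
      linarith [abs_nonneg t]
    rw [smul_eq_mul, Real.norm_eq_abs, abs_of_nonneg (by positivity)]
    have e1 : exp ((s + 1) * t - ψ t) = exp (s * t - ψ t) * exp t := by
      rw [← exp_add]; ring_nf
    have e2 : exp ((s - 1) * t - ψ t) = exp (s * t - ψ t) * exp (-t) := by
      rw [← exp_add]; ring_nf
    simp only [Pi.add_apply]
    rw [e1, e2]
    have := mul_le_mul_of_nonneg_left h1 (exp_pos (s * t - ψ t)).le
    linarith
  have := hψ.cov_le s (C := C + 1) hF hF' (fun t => hasDerivAt_id' t) continuous_const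
    (fun t => (bF t).trans (by linarith)) (fun t => (bF' t).trans (by linarith))
    (fun t => by nlinarith [abs_nonneg t]) (fun t => by simp [hC]) hsq
  simpa using this

/-- Expectations under the single-site laws depend continuously on the field and on the
integrand. -/
lemma Pot.continuous_param {X : Type*} [TopologicalSpace X] [FirstCountableTopology X]
    (hψ : Pot ψ a b) {φ : X → ℝ → ℝ} (hφ : Continuous (Function.uncurry φ)) {C : ℝ}
    (hb : ∀ x t, |φ x t| ≤ C * (1 + |t|)) {s : X → ℝ} (hs : Continuous s) :
    Continuous fun x => ∫ t, φ x t ∂(nu ψ (s x)) := by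
  have hψc := hψ.cont
  have num : ∀ {φ : X → ℝ → ℝ} {C : ℝ}, Continuous (Function.uncurry φ) →
      (∀ x t, |φ x t| ≤ C * (1 + |t|)) →
      Continuous fun x => ∫ t, φ x t * exp (s x * t - ψ t) := by
    intro φ C hφ hb
    have hc : Continuous fun p : X × ℝ => φ p.1 p.2 * exp (s p.1 * p.2 - ψ p.2) :=
      hφ.mul (by fun_prop)
    rw [continuous_iff_continuousAt]
    intro x0
    refine continuousAt_of_dominated (bound := fun t =>
      C * (exp ((|s x0| + 1 + 1) * t - ψ t) + exp (-(|s x0| + 1 + 1) * t - ψ t))) ?_ ?_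
      (hψ.integrable_dom _ _) ?_
    · exact Eventually.of_forall fun x =>
        (hc.comp (by fun_prop : Continuous fun t : ℝ => (x, t))).aestronglyMeasurable
    · have : ∀ᶠ x in 𝓝 x0, |s x| < |s x0| + 1 :=
        hs.abs.continuousAt.eventually_lt continuousAt_const (by linarith)
      filter_upwards [this] with x hx
      exact ae_of_all _ fun t => growth_bound hx.le t (hb x t)
    · exact ae_of_all _ fun t =>
        (hc.comp (by fun_prop : Continuous fun x : X => (x, t))).continuousAt
  simp_rw [nu_integral]
  have hZ : Continuous fun x => ∫ t, exp (s x * t - ψ t) := by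
    have := num (φ := fun _ _ => 1) (C := 1) (by exact continuous_const)
      (fun x t => by simp)
    simpa only [one_mul] using this
  exact (num hφ hb).div hZ fun x => (hψ.Z_pos _).ne'

/-- Differentiating a conditional expectation in the boundary condition produces the expectation
of the derivative and a covariance with the spin. -/
lemma Pot.hasDerivAt_param (hψ : Pot ψ a b) {φ φ' : ℝ → ℝ → ℝ} {C c κ : ℝ}
    (hφ : ∀ r, Continuous (φ r)) (hφ' : ∀ r, Continuous (φ' r))
    (hb : ∀ r t, |φ r t| ≤ C) (hb' : ∀ r t, |φ' r t| ≤ C)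
    (hd : ∀ r t, HasDerivAt (fun r => φ r t) (φ' r t) r) (r0 : ℝ) :
    HasDerivAt (fun r => ∫ t, φ r t ∂(nu ψ (c + κ * r)))
      (∫ t, φ' r0 t ∂(nu ψ (c + κ * r0)) + κ * cv (nu ψ (c + κ * r0)) (φ r0) (fun t => t)) r0 := by
  have hψc := hψ.cont
  have num : ∀ {φ φ' : ℝ → ℝ → ℝ} {C : ℝ}, (∀ r, Continuous (φ r)) → (∀ r, Continuous (φ' r)) →
      (∀ r t, |φ r t| ≤ C) → (∀ r t, |φ' r t| ≤ C) →
      (∀ r t, HasDerivAt (fun r => φ r t) (φ' r t) r) →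
      HasDerivAt (fun r => ∫ t, φ r t * exp ((c + κ * r) * t - ψ t))
        (∫ t, (φ' r0 t + κ * (φ r0 t * t)) * exp ((c + κ * r0) * t - ψ t)) r0 := by
    intro φ φ' C hφ hφ' hb hb' hd
    have hC : 0 ≤ C := (abs_nonneg _).trans (hb 0 0)
    set S := |c| + |κ| * (|r0| + 1) with hS
    have hm : ∀ r, Continuous fun t => φ r t * exp ((c + κ * r) * t - ψ t) := fun r =>
      (hφ r).mul (by fun_prop)
    have hsr : ∀ r ∈ Metric.ball r0 1, |c + κ * r| ≤ S := by
      intro r hr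
      rw [Metric.mem_ball, Real.dist_eq] at hr
      have h1 : |r| ≤ |r0| + 1 := by
        have := abs_add_le (r - r0) r0
        rw [sub_add_cancel] at this
        linarith
      calc |c + κ * r| ≤ |c| + |κ * r| := abs_add_le _ _
        _ = |c| + |κ| * |r| := by rw [abs_mul]
        _ ≤ _ := by rw [hS]; gcongr
    refine (hasDerivAt_integral_of_dominated_loc_of_deriv_le
      (F' := fun r t => (φ' r t + κ * (φ r t * t)) * exp ((c + κ * r) * t - ψ t))
      (bound := fun t => (C + |κ| * C) * (exp ((S + 1) * t - ψ t) + exp (-(S + 1) * t - ψ t)))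
      (Metric.ball_mem_nhds r0 one_pos) ?_ ?_ ?_ ?_ (hψ.integrable_dom _ _) ?_).2
    · exact Eventually.of_forall fun r => (hm r).aestronglyMeasurable
    · refine (hψ.integrable_dom S C).mono' (hm r0).aestronglyMeasurable (ae_of_all _ fun t => ?_)
      refine growth_bound (hsr r0 (Metric.mem_ball_self one_pos)) t ((hb r0 t).trans ?_)
      nlinarith [abs_nonneg t]
    · have h1 := hφ r0
      have h2 := hφ' r0
      exact (by fun_prop : Continuous fun t =>
        (φ' r0 t + κ * (φ r0 t * t)) * exp ((c + κ * r0) * t - ψ t)).aestronglyMeasurable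
    · refine ae_of_all _ fun t r hr => growth_bound (hsr r hr) t ?_
      calc |φ' r t + κ * (φ r t * t)| ≤ |φ' r t| + |κ * (φ r t * t)| := abs_add_le _ _
        _ = |φ' r t| + |κ| * (|φ r t| * |t|) := by rw [abs_mul, abs_mul]
        _ ≤ C + |κ| * (C * |t|) := by gcongr <;> [exact hb' r t; exact hb r t]
        _ ≤ (C + |κ| * C) * (1 + |t|) := by
          have : 0 ≤ |κ| * C := by positivity
          nlinarith [abs_nonneg t]
    · refine ae_of_all _ fun t r _ => ?_
      have h1 : HasDerivAt (fun r : ℝ => (c + κ * r) * t - ψ t) (κ * t) r := by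
        have := ((((hasDerivAt_id r).const_mul κ).const_add c).mul_const t).sub_const (ψ t)
        simpa using this
      refine ((hd r t).mul h1.exp).congr_deriv ?_
      ring
  have d1 := num hφ hφ' hb hb' hd
  have d2 := num (φ := fun _ _ => 1) (φ' := fun _ _ => 0) (C := 1) (fun _ => continuous_const)
    (fun _ => continuous_const) (fun _ _ => by simp) (fun _ _ => by simp)
    (fun r t => hasDerivAt_const r 1)
  simp only [one_mul, zero_add] at d2
  simp_rw [nu_integral]
  have hZ := (hψ.Z_pos (c + κ * r0)).ne'
  refine (d1.div d2 hZ).congr_deriv ?_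
  set s := c + κ * r0
  have hp := hψ.prob s
  have i1 : Integrable (φ' r0) (nu ψ s) := integrable_of_bdd (hφ' r0) (hb' r0)
  have hC : 0 ≤ C := (abs_nonneg _).trans (hb 0 0)
  have i2 : Integrable (fun t => κ * (φ r0 t * t)) (nu ψ s) := by
    refine (hψ.integrable_nu s (C := C) ((hφ r0).mul continuous_id) fun t => ?_).const_mul κ
    show |φ r0 t * t| ≤ C * (1 + |t|)
    rw [abs_mul]
    nlinarith [hb r0 t, abs_nonneg t]
  have e1 : (∫ t, (φ' r0 t + κ * (φ r0 t * t)) * exp (s * t - ψ t)) / ∫ t, exp (s * t - ψ t)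
      = ∫ t, φ' r0 t ∂(nu ψ s) + κ * ∫ t, φ r0 t * t ∂(nu ψ s) := by
    rw [← nu_integral ψ s (fun t => φ' r0 t + κ * (φ r0 t * t)), integral_add i1 i2,
      integral_const_mul]
  have e2 : (∫ t, κ * t * exp (s * t - ψ t)) / ∫ t, exp (s * t - ψ t)
      = κ * ∫ t, t ∂(nu ψ s) := by
    rw [← nu_integral ψ s (fun t => κ * t), integral_const_mul]
  have e3 := nu_integral ψ s (φ r0)
  rw [← nu_integral ψ s (φ' r0), cv]
  have e4 : ∀ n n' z z' : ℝ, z ≠ 0 → (n' * z - n * z') / z ^ 2 = n' / z - (n / z) * (z' / z) := by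
    intro n n' z z' hz
    field_simp
  rw [e4 _ _ _ _ hZ, e1]
  have e2' : (∫ t, κ * (1 * t) * exp (s * t - ψ t)) = ∫ t, κ * t * exp (s * t - ψ t) := by
    simp only [one_mul]
  rw [e2, ← e3]
  ring

end Param

/-! ### Gibbs measures with pair interactions and single-site resampling -/

section Lattice
open Function
variable {ι : Type*} [Fintype ι] [DecidableEq ι]

/-- Ferromagnetic pair couplings: symmetric, nonnegative, without self-interaction. -/
structure Coupling (J : ι → ι → ℝ) : Prop where
  symm : ∀ i k, J i k = J k i
  diag : ∀ i, J i i = 0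
  nonneg : ∀ i k, 0 ≤ J i k

/-- The field `∑ₖ J i k xₖ` felt by the spin at `i`. -/
def field (J : ι → ι → ℝ) (i : ι) (x : ι → ℝ) : ℝ := ∑ k, J i k * x k

/-- The exponent `-H` of the Gibbs density. -/
def nH (ψ : ℝ → ℝ) (J : ι → ι → ℝ) (x : ι → ℝ) : ℝ :=
  1 / 2 * (∑ k, ∑ l, J k l * (x k * x l)) - ∑ k, ψ (x k)

/-- The Gibbs measure on `ι → ℝ`. -/
def mu (ψ : ℝ → ℝ) (J : ι → ι → ℝ) : Measure (ι → ℝ) :=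
  (volume : Measure (ι → ℝ)).tilted (nH ψ J)

/-- Resampling of the spin at `i`: the conditional expectation given all other spins. -/
def cE (ψ : ℝ → ℝ) (J : ι → ι → ℝ) (i : ι) (f : (ι → ℝ) → ℝ) (x : ι → ℝ) : ℝ :=
  ∫ t, f (update x i t) ∂(nu ψ (field J i x))

variable {ψ : ℝ → ℝ} {a b : ℝ} {J : ι → ι → ℝ}

lemma field_update (J : ι → ι → ℝ) (i k : ι) (x : ι → ℝ) (t : ℝ) :
    field J i (update x k t) = field J i x - J i k * x k + J i k * t := by
  unfold field
  rw [← Finset.add_sum_erase _ _ (Finset.mem_univ k),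
    ← Finset.add_sum_erase (a := k) (f := fun l => J i l * x l) _ (Finset.mem_univ k)]
  have : ∑ l ∈ Finset.univ.erase k, J i l * update x k t l
      = ∑ l ∈ Finset.univ.erase k, J i l * x l :=
    Finset.sum_congr rfl fun l hl => by rw [update_of_ne (Finset.ne_of_mem_erase hl)]
  rw [this, update_self]
  ring

lemma field_update_self (hJ : Coupling J) (i : ι) (x : ι → ℝ) (t : ℝ) :
    field J i (update x i t) = field J i x := by
  rw [field_update, hJ.diag]; ring

@[fun_prop]
lemma continuous_field (J : ι → ι → ℝ) (i : ι) : Continuous (field J i) := by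
  unfold field; fun_prop

lemma continuous_nH (hψ : Continuous ψ) : Continuous (nH ψ J) := by
  unfold nH; fun_prop

/-- As a function of the spin at `i` alone, `-H` is `t ↦ field · t - ψ t` up to a constant, in
subtraction-free form. -/
lemma nH_update (hJ : Coupling J) (i : ι) (x : ι → ℝ) (t : ℝ) :
    nH ψ J (update x i t) + (field J i x * x i - ψ (x i))
      = nH ψ J x + (field J i x * t - ψ t) := by
  -- twice the interaction energy is `∑ₖ xₖ · field k`
  have q : ∀ y : ι → ℝ, ∑ k, ∑ l, J k l * (y k * y l) = ∑ k, y k * field J k y := by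
    intro y
    refine Finset.sum_congr rfl fun k _ => ?_
    rw [field, Finset.mul_sum]
    exact Finset.sum_congr rfl fun l _ => by ring
  have e1 : ∑ k, update x i t k * field J k (update x i t)
      = ∑ k, x k * field J k x + 2 * (t - x i) * field J i x := by
    have h1 : ∀ k, update x i t k * field J k (update x i t)
        = x k * field J k x + (if k = i then (t - x i) * field J i x else 0)
          + (t - x i) * (J i k * x k) := by
      intro k
      by_cases h : k = i
      · subst h
        rw [field_update_self hJ, update_self, if_pos rfl, hJ.diag]
        ring
      · rw [field_update, update_of_ne h, if_neg h, hJ.symm i k]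
        ring
    simp_rw [h1, Finset.sum_add_distrib, ← Finset.mul_sum]
    rw [Finset.sum_ite_eq' Finset.univ i]
    simp only [Finset.mem_univ, if_true]
    unfold field
    ring
  have e2 : ∑ k, ψ (update x i t k) = ∑ k, ψ (x k) + (ψ t - ψ (x i)) := by
    have h1 : ∀ k, ψ (update x i t k) = ψ (x k) + if k = i then ψ t - ψ (x i) else 0 := by
      intro k
      by_cases h : k = i
      · subst h; simp
      · simp [h]
    simp_rw [h1, Finset.sum_add_distrib]
    simp
  unfold nH
  rw [q, q, e1, e2]
  ring

/-- Exchanging the spin at `i` with an independent coordinate preserves Lebesgue measure. -/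
lemma measurePreserving_exchange (i : ι) :
    MeasurePreserving (fun p : (ι → ℝ) × ℝ => (update p.1 i p.2, p.1 i))
      ((volume : Measure (ι → ℝ)).prod (volume : Measure ℝ))
      ((volume : Measure (ι → ℝ)).prod (volume : Measure ℝ)) := by
  have hm : Measurable fun p : (ι → ℝ) × ℝ => (update p.1 i p.2, p.1 i) := by
    have : Continuous fun p : (ι → ℝ) × ℝ => (update p.1 i p.2, p.1 i) := by fun_prop
    exact this.measurable
  refine ⟨hm, ?_⟩
  symm
  let S : (volume : Measure (ι → ℝ)).FiniteSpanningSetsIn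
      (Set.image (Set.pi Set.univ) (Set.pi Set.univ fun _ => {s : Set ℝ | MeasurableSet s})) := by
    rw [volume_pi]
    exact Measure.FiniteSpanningSetsIn.pi fun _ =>
      (volume : Measure ℝ).toFiniteSpanningSetsIn
  let T : (volume : Measure ℝ).FiniteSpanningSetsIn {s : Set ℝ | MeasurableSet s} :=
    (volume : Measure ℝ).toFiniteSpanningSetsIn
  refine Measure.prod_eq_generateFrom generateFrom_pi MeasurableSpace.generateFrom_measurableSet
    isPiSystem_pi MeasurableSpace.isPiSystem_measurableSet S T ?_
  rintro _ ⟨s, hs, rfl⟩ u hu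
  simp only [Set.mem_pi, Set.mem_univ, Set.mem_ofPred_eq, true_imp_iff] at hs hu
  rw [Measure.map_apply hm ((MeasurableSet.univ_pi hs).prod hu)]
  have hpre : (fun p : (ι → ℝ) × ℝ => (update p.1 i p.2, p.1 i)) ⁻¹' ((Set.univ.pi s) ×ˢ u)
      = (Set.univ.pi (update s i u)) ×ˢ (s i) := by
    ext ⟨x, t⟩
    simp only [Set.mem_preimage, Set.mem_prod, Set.mem_pi, Set.mem_univ, true_imp_iff]
    constructor
    · rintro ⟨h1, h2⟩
      refine ⟨fun k => ?_, by simpa using h1 i⟩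
      by_cases h : k = i
      · subst h; simpa using h2
      · have := h1 k; simpa [h] using this
    · rintro ⟨h1, h2⟩
      refine ⟨fun k => ?_, by simpa using h1 i⟩
      by_cases h : k = i
      · subst h; simpa using h2
      · have := h1 k; simpa [h] using this
  rw [hpre, Measure.prod_prod, volume_pi, Measure.pi_pi, Measure.pi_pi,
    ← Finset.mul_prod_erase _ _ (Finset.mem_univ i),
    ← Finset.mul_prod_erase (a := i) (f := fun k => volume (s k)) _ (Finset.mem_univ i)]
  have : ∏ k ∈ Finset.univ.erase i, volume (update s i u k)
      = ∏ k ∈ Finset.univ.erase i, volume (s k) :=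
    Finset.prod_congr rfl fun k hk => by rw [update_of_ne (Finset.ne_of_mem_erase hk)]
  rw [this, update_self]
  ring

lemma continuous_cE (hψ : Pot ψ a b) (i : ι) {f : (ι → ℝ) → ℝ} (hf : Continuous f) {C : ℝ}
    (hC : ∀ x, |f x| ≤ C) : Continuous (cE ψ J i f) := by
  have h0 : 0 ≤ C := (abs_nonneg _).trans (hC 0)
  refine hψ.continuous_param (φ := fun x t => f (update x i t)) (C := C) ?_ ?_
    (continuous_field J i)
  · exact hf.comp (by fun_prop : Continuous fun p : (ι → ℝ) × ℝ => update p.1 i p.2)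
  · intro x t
    refine (hC _).trans ?_
    nlinarith [abs_nonneg t]

lemma continuous_slice {f : (ι → ℝ) → ℝ} (hf : Continuous f) (i : ι) (x : ι → ℝ) :
    Continuous fun t => f (update x i t) :=
  hf.comp (by fun_prop)

lemma integrable_slice (hψ : Pot ψ a b) (i : ι) {f : (ι → ℝ) → ℝ} (hf : Continuous f) {C : ℝ}
    (hC : ∀ x, |f x| ≤ C) (x : ι → ℝ) (s : ℝ) :
    Integrable (fun t => f (update x i t)) (nu ψ s) := by
  have := hψ.prob s
  exact integrable_of_bdd (continuous_slice hf i x) fun t => hC _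

lemma abs_cE_le (hψ : Pot ψ a b) (i : ι) {f : (ι → ℝ) → ℝ} {C : ℝ}
    (hC : ∀ x, |f x| ≤ C) (x : ι → ℝ) : |cE ψ J i f x| ≤ C := by
  have := hψ.prob (field J i x)
  have h := norm_integral_le_of_norm_le_const (μ := nu ψ (field J i x))
    (f := fun t => f (update x i t)) (ae_of_all _ fun t => hC _)
  simpa [cE] using h

lemma cE_update (hJ : Coupling J) (i : ι) (f : (ι → ℝ) → ℝ) (x : ι → ℝ) (t : ℝ) :
    cE ψ J i f (update x i t) = cE ψ J i f x := by
  simp only [cE, field_update_self hJ, update_idem]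

/-- The Gibbs measure is invariant under resampling a spin (the DLR equation). -/
lemma integral_cE (hψ : Pot ψ a b) (hJ : Coupling J)
    (hI : Integrable fun x => exp (nH ψ J x)) (i : ι) {f : (ι → ℝ) → ℝ} (hf : Continuous f)
    {C : ℝ} (hC : ∀ x, |f x| ≤ C) :
    ∫ x, cE ψ J i f x ∂(mu ψ J) = ∫ x, f x ∂(mu ψ J) := by
  have hψc := hψ.cont
  have hnc : Continuous (nH ψ J) := continuous_nH hψc
  set Z : (ι → ℝ) → ℝ := fun x => ∫ t, exp (field J i x * t - ψ t) with hZ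
  have hZpos : ∀ x, 0 < Z x := fun x => hψ.Z_pos _
  have hZm : Measurable Z := by
    have : StronglyMeasurable fun x : ι → ℝ => ∫ t, exp (field J i x * t - ψ t) := by
      refine StronglyMeasurable.integral_prod_right
        (f := fun x t => exp (field J i x * t - ψ t)) ?_
      have h2 := continuous_field J i
      exact (by fun_prop : Continuous fun p : (ι → ℝ) × ℝ =>
        exp (field J i p.1 * p.2 - ψ p.2)).stronglyMeasurable
    exact this.measurable
  set K : (ι → ℝ) × ℝ → ℝ := fun p =>
    exp (nH ψ J p.1) * exp (field J i p.1 * p.2 - ψ p.2) / Z p.1 with hK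
  have hKpos : ∀ p, 0 ≤ K p := fun p => div_nonneg (by positivity) (hZpos _).le
  have hKm : Measurable K := by
    have h2 := continuous_field J i
    have h3 : Continuous fun p : (ι → ℝ) × ℝ =>
        exp (nH ψ J p.1) * exp (field J i p.1 * p.2 - ψ p.2) := by fun_prop
    exact h3.measurable.div (hZm.comp measurable_fst)
  have hKint : ∀ x, ∫ t, K (x, t) = exp (nH ψ J x) := by
    intro x
    simp only [hK]
    rw [integral_div, integral_const_mul, mul_div_assoc, div_self (hZpos x).ne', mul_one]
  have hKslice : ∀ x, Integrable fun t => K (x, t) := fun x => by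
    simp only [hK]
    exact ((hψ.integrable_exp _).const_mul _).div_const _
  have hKI : Integrable K ((volume : Measure (ι → ℝ)).prod (volume : Measure ℝ)) := by
    rw [integrable_prod_iff hKm.aestronglyMeasurable]
    refine ⟨ae_of_all _ hKslice, ?_⟩
    have : (fun x => ∫ t, ‖K (x, t)‖) = fun x => exp (nH ψ J x) := by
      ext x
      rw [← hKint x]
      congr 1; ext t
      rw [Real.norm_eq_abs, abs_of_nonneg (hKpos _)]
    rw [this]
    exact hI
  -- the weight is symmetric under the exchange of the two candidate values at `i`
  have hKswap : ∀ p : (ι → ℝ) × ℝ, K (update p.1 i p.2, p.1 i) = K p := by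
    rintro ⟨x, t⟩
    simp only [hK, hZ, field_update_self hJ, ← exp_add, nH_update hJ]
  have hfK : Integrable (fun p : (ι → ℝ) × ℝ => f p.1 * K p)
      ((volume : Measure (ι → ℝ)).prod (volume : Measure ℝ)) :=
    hKI.bdd_mul (c := C) (hf.comp continuous_fst).aestronglyMeasurable
      (ae_of_all _ fun p => hC p.1)
  have hex := measurePreserving_exchange (ι := ι) i
  have hcomp : Integrable (fun p : (ι → ℝ) × ℝ => f (update p.1 i p.2) * K p)
      ((volume : Measure (ι → ℝ)).prod (volume : Measure ℝ)) := by
    have := hex.integrable_comp_of_integrable hfK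
    refine this.congr (ae_of_all _ fun p => ?_)
    simp only [Function.comp, hKswap]
  have heq : ∫ p, f (update p.1 i p.2) * K p
        ∂((volume : Measure (ι → ℝ)).prod (volume : Measure ℝ))
      = ∫ p, f p.1 * K p ∂((volume : Measure (ι → ℝ)).prod (volume : Measure ℝ)) := by
    have h1 := integral_map hex.measurable.aemeasurable
      (f := fun p : (ι → ℝ) × ℝ => f p.1 * K p) (by
        rw [hex.map_eq]; exact hfK.aestronglyMeasurable)
    rw [hex.map_eq] at h1
    rw [h1]
    congr 1; ext p
    simp only [hKswap]
  rw [integral_prod _ hcomp, integral_prod _ hfK] at heq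
  have l : ∀ x, ∫ t, f (update x i t) * K (x, t) = exp (nH ψ J x) * cE ψ J i f x := by
    intro x
    rw [cE, nu_integral, ← mul_div_assoc, ← integral_const_mul, ← integral_div]
    congr 1; ext t
    simp only [hK, hZ]
    ring
  have r : ∀ x, ∫ t, f x * K (x, t) = exp (nH ψ J x) * f x := by
    intro x
    rw [integral_const_mul, hKint, mul_comm]
  simp only [l, r] at heq
  simp only [mu, integral_tilted, smul_eq_mul, div_mul_eq_mul_div, integral_div, heq]

end Lattice

/-! ### Effect of one resampling on partial derivatives and covariances -/

section Step
open Function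
variable {ι : Type*} [Fintype ι] [DecidableEq ι]

/-- A Gibbs measure with ferromagnetic pair couplings and finite partition function, whose
single-site potential lies between `t²/2 + a` and `t²/2 + b`. -/
structure Model (ψ : ℝ → ℝ) (a b : ℝ) (J : ι → ι → ℝ) : Prop where
  pot : Pot ψ a b
  coup : Coupling J
  int : Integrable fun x => exp (nH ψ J x)

/-- `D k` is the partial derivative of `f` in direction `k`; `f` is bounded by `C` and `D k`
by `L k`. -/
structure Adm (f : (ι → ℝ) → ℝ) (D : ι → (ι → ℝ) → ℝ) (C : ℝ) (L : ι → ℝ) : Prop where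
  cont : Continuous f
  contD : ∀ k, Continuous (D k)
  bdd : ∀ x, |f x| ≤ C
  bddD : ∀ k x, |D k x| ≤ L k
  deriv : ∀ k x t, HasDerivAt (fun t => f (update x k t)) (D k (update x k t)) t

/-- The covariance of `f` with the spin at `i`, given all other spins. -/
def cvSpin (ψ : ℝ → ℝ) (J : ι → ι → ℝ) (i : ι) (f : (ι → ℝ) → ℝ) (x : ι → ℝ) : ℝ :=
  cv (nu ψ (field J i x)) (fun t => f (update x i t)) (fun t => t)

/-- The partial derivatives of `cE ψ J i f`, in terms of those of `f`. -/
def stepD (ψ : ℝ → ℝ) (J : ι → ι → ℝ) (i : ι) (f : (ι → ℝ) → ℝ) (D : ι → (ι → ℝ) → ℝ)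
    (k : ι) (x : ι → ℝ) : ℝ :=
  if k = i then 0 else cE ψ J i (D k) x + J i k * cvSpin ψ J i f x

/-- The `L²` norm. -/
def nrm {Ω : Type*} [MeasurableSpace Ω] (P : Measure Ω) (h : Ω → ℝ) : ℝ := √(∫ x, h x ^ 2 ∂P)

lemma nrm_nonneg {Ω : Type*} [MeasurableSpace Ω] (P : Measure Ω) (h : Ω → ℝ) : 0 ≤ nrm P h :=
  Real.sqrt_nonneg _

variable {ψ : ℝ → ℝ} {a b : ℝ} {J : ι → ι → ℝ} {f g : (ι → ℝ) → ℝ}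
  {D E : ι → (ι → ℝ) → ℝ} {C C' : ℝ} {L L' : ι → ℝ}

lemma Model.prob (hM : Model ψ a b J) : IsProbabilityMeasure (mu ψ J) :=
  isProbabilityMeasure_tilted hM.int

lemma Adm.nonneg (hf : Adm f D C L) : 0 ≤ C := (abs_nonneg _).trans (hf.bdd 0)

lemma Adm.nonnegL (hf : Adm f D C L) (k : ι) : 0 ≤ L k := (abs_nonneg _).trans (hf.bddD k 0)

lemma Adm.sq_le (hf : Adm f D C L) (k : ι) (x : ι → ℝ) : |D k x ^ 2| ≤ L k ^ 2 := by
  rw [abs_pow]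
  exact pow_le_pow_left₀ (abs_nonneg _) (hf.bddD k x) 2

lemma Adm.contSq (hf : Adm f D C L) (k : ι) : Continuous fun x => D k x ^ 2 :=
  (hf.contD k).pow 2

lemma cE_sq_nonneg (i : ι) (h : (ι → ℝ) → ℝ) (x : ι → ℝ) :
    0 ≤ cE ψ J i (fun y => h y ^ 2) x :=
  integral_nonneg fun _ => sq_nonneg _

lemma abs_cvSpin_le (hM : Model ψ a b J) (hf : Adm f D C L) (i : ι) (x : ι → ℝ) :
    |cvSpin ψ J i f x| ≤ exp (b - a) * √(cE ψ J i (fun y => D i y ^ 2) x) := by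
  refine hM.pot.cov_id_le (field J i x) (F' := fun t => D i (update x i t)) (C := max C (L i))
    (hf.deriv i x) (continuous_slice (hf.contD i) i x)
    (fun t => (hf.bdd _).trans (le_max_left _ _)) (fun t => (hf.bddD _ _).trans (le_max_right _ _))

lemma continuous_cvSpin (hM : Model ψ a b J) (hf : Adm f D C L) (i : ι) :
    Continuous (cvSpin ψ J i f) := by
  have hC := hf.nonneg
  have hc : Continuous fun p : (ι → ℝ) × ℝ => f (update p.1 i p.2) :=
    hf.cont.comp (by fun_prop : Continuous fun p : (ι → ℝ) × ℝ => update p.1 i p.2)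
  have h1 : Continuous fun x => ∫ t, f (update x i t) * t ∂(nu ψ (field J i x)) := by
    refine hM.pot.continuous_param (φ := fun x t => f (update x i t) * t) (C := C)
      (hc.mul continuous_snd) (fun x t => ?_) (continuous_field J i)
    rw [abs_mul]
    nlinarith [hf.bdd (update x i t), abs_nonneg t]
  have h2 : Continuous fun x => ∫ t, t ∂(nu ψ (field J i x)) :=
    hM.pot.continuous_param (φ := fun _ t => t) (C := 1) continuous_snd
      (fun x t => by nlinarith [abs_nonneg t]) (continuous_field J i)
  exact h1.sub ((continuous_cE hM.pot i hf.cont hf.bdd).mul h2)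

lemma continuous_stepD (hM : Model ψ a b J) (hf : Adm f D C L) (i k : ι) :
    Continuous (stepD ψ J i f D k) := by
  unfold stepD
  by_cases h : k = i
  · simp only [h, if_true]; exact continuous_const
  · simp only [h, if_false]
    exact (continuous_cE hM.pot i (hf.contD k) (hf.bddD k)).add
      (continuous_const.mul (continuous_cvSpin hM hf i))

/-- Resampling at `i` preserves regularity, and moves a fraction of the derivative at `i` to the
sites coupled to `i`. -/
lemma Adm.step (hM : Model ψ a b J) (hf : Adm f D C L) (i : ι) :
    Adm (cE ψ J i f) (stepD ψ J i f D) C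
      (fun k => if k = i then 0 else L k + J i k * exp (b - a) * L i) where
  cont := continuous_cE hM.pot i hf.cont hf.bdd
  contD := continuous_stepD hM hf i
  bdd := abs_cE_le hM.pot i hf.bdd
  bddD k x := by
    unfold stepD
    by_cases h : k = i
    · simp [h]
    · simp only [h, if_false]
      refine (abs_add_le _ _).trans (add_le_add (abs_cE_le hM.pot i (hf.bddD k) x) ?_)
      rw [abs_mul, abs_of_nonneg (hM.coup.nonneg i k), mul_assoc]
      refine mul_le_mul_of_nonneg_left ((abs_cvSpin_le hM hf i x).trans ?_) (hM.coup.nonneg i k)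
      refine mul_le_mul_of_nonneg_left (Real.sqrt_le_iff.2 ⟨hf.nonnegL i, ?_⟩) (exp_pos _).le
      exact (le_abs_self _).trans (abs_cE_le hM.pot i (hf.sq_le i) x)
  deriv k x t := by
    unfold stepD
    by_cases h : k = i
    · subst h
      simp only [cE_update hM.coup, if_true]
      exact hasDerivAt_const _ _
    · simp only [h, if_false]
      have key := hM.pot.hasDerivAt_param (φ := fun r s => f (update (update x i s) k r))
        (φ' := fun r s => D k (update (update x i s) k r)) (C := max C (L k))
        (c := field J i x - J i k * x k) (κ := J i k)
        (fun r => hf.cont.comp (by fun_prop)) (fun r => (hf.contD k).comp (by fun_prop))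
        (fun r s => (hf.bdd _).trans (le_max_left _ _))
        (fun r s => (hf.bddD _ _).trans (le_max_right _ _))
        (fun r s => hf.deriv k (update x i s) r) t
      have e : ∀ r s, update (update x i s) k r = update (update x k r) i s := fun r s =>
        update_comm (Ne.symm h) _ _ _
      simp only [e, ← field_update] at key
      exact key

/-- The `L²` version of the transport of derivatives under resampling. -/
lemma nrm_stepD_le (hM : Model ψ a b J) (hf : Adm f D C L) (i k : ι) :
    nrm (mu ψ J) (stepD ψ J i f D k) ≤
      if k = i then 0 else nrm (mu ψ J) (D k) + J i k * exp (b - a) * nrm (mu ψ J) (D i) := by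
  have := hM.prob
  by_cases h : k = i
  · simp [nrm, stepD, h]
  simp only [nrm, stepD, h, if_false]
  have hJ := hM.coup.nonneg i k
  have hcE := continuous_cE (J := J) hM.pot i (hf.contD k) (hf.bddD k)
  have hcv := continuous_cvSpin hM hf i
  have bcv : ∀ x, |cvSpin ψ J i f x| ≤ exp (b - a) * L i := fun x => by
    refine (abs_cvSpin_le hM hf i x).trans ?_
    refine mul_le_mul_of_nonneg_left (Real.sqrt_le_iff.2 ⟨hf.nonnegL i, ?_⟩) (exp_pos _).le
    exact (le_abs_self _).trans (abs_cE_le hM.pot i (hf.sq_le i) x)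
  have bJcv : ∀ x, |J i k * cvSpin ψ J i f x| ≤ J i k * (exp (b - a) * L i) := fun x => by
    rw [abs_mul, abs_of_nonneg hJ]
    exact mul_le_mul_of_nonneg_left (bcv x) hJ
  have bE := abs_cE_le (J := J) hM.pot i (hf.bddD k)
  have sqb : ∀ {u : (ι → ℝ) → ℝ} {B : ℝ}, (∀ x, |u x| ≤ B) → ∀ x, |u x ^ 2| ≤ B ^ 2 := by
    intro u B hu x
    rw [abs_pow]
    exact pow_le_pow_left₀ (abs_nonneg _) (hu x) 2
  have iE : Integrable (fun x => cE ψ J i (D k) x ^ 2) (mu ψ J) :=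
    integrable_of_bdd (hcE.pow 2) (sqb bE)
  have iV : Integrable (fun x => (J i k * cvSpin ψ J i f x) ^ 2) (mu ψ J) :=
    integrable_of_bdd ((continuous_const.mul hcv).pow 2) (sqb bJcv)
  have iEV : Integrable (fun x => cE ψ J i (D k) x * (J i k * cvSpin ψ J i f x)) (mu ψ J) := by
    refine integrable_of_bdd (C := L k * (J i k * (exp (b - a) * L i)))
      (hcE.mul (continuous_const.mul hcv)) fun x => ?_
    rw [abs_mul]
    exact mul_le_mul (bE x) (bJcv x) (abs_nonneg _) (hf.nonnegL k)
  refine (minkowski iE iV iEV).trans (add_le_add (Real.sqrt_le_sqrt ?_) ?_)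
  · rw [← integral_cE hM.pot hM.coup hM.int i (hf.contSq k) (hf.sq_le k)]
    refine integral_mono iE (integrable_of_bdd (continuous_cE hM.pot i (hf.contSq k)
      (hf.sq_le k)) (abs_cE_le hM.pot i (hf.sq_le k))) fun x => ?_
    have := hM.pot.prob (field J i x)
    exact sq_integral_le (integrable_slice hM.pot i (hf.contD k) (hf.bddD k) x _)
      (integrable_slice hM.pot i (hf.contSq k) (hf.sq_le k) x _)
  · rw [← Real.sqrt_sq (mul_nonneg hJ (exp_pos (b - a)).le), ← Real.sqrt_mul (sq_nonneg _)]
    refine Real.sqrt_le_sqrt ?_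
    rw [← integral_cE hM.pot hM.coup hM.int i (hf.contSq i) (hf.sq_le i),
      ← integral_const_mul]
    refine integral_mono iV ((integrable_of_bdd (continuous_cE hM.pot i (hf.contSq i)
      (hf.sq_le i)) (abs_cE_le hM.pot i (hf.sq_le i))).const_mul _) fun x => ?_
    have h1 := abs_cvSpin_le hM hf i x
    have h2 := pow_le_pow_left₀ (abs_nonneg _) h1 2
    rw [sq_abs, mul_pow, Real.sq_sqrt (cE_sq_nonneg i (D i) x)] at h2
    show (J i k * cvSpin ψ J i f x) ^ 2 ≤ (J i k * exp (b - a)) ^ 2 * _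
    rw [mul_pow, mul_pow, mul_assoc]
    exact mul_le_mul_of_nonneg_left h2 (sq_nonneg _)

/-- The law of total covariance for one resampling, with the conditional covariance estimated by
the single-site inequality. -/
lemma cv_step_le (hM : Model ψ a b J) (hf : Adm f D C L) (hg : Adm g E C' L') (i : ι) :
    |cv (mu ψ J) f g| ≤
      |cv (mu ψ J) (cE ψ J i f) g| + exp (b - a) * nrm (mu ψ J) (D i) * nrm (mu ψ J) (E i) := by
  have := hM.prob
  have hC := hf.nonneg
  have cf := continuous_cE (J := J) hM.pot i hf.cont hf.bdd
  have cg := continuous_cE (J := J) hM.pot i hg.cont hg.bdd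
  have bf := abs_cE_le (J := J) hM.pot i hf.bdd
  have bg := abs_cE_le (J := J) hM.pot i hg.bdd
  have mb : ∀ {u v : (ι → ℝ) → ℝ}, (∀ x, |u x| ≤ C) → (∀ x, |v x| ≤ C') →
      ∀ x, |u x * v x| ≤ C * C' := fun hu hv x => by
    rw [abs_mul]
    exact mul_le_mul (hu x) (hv x) (abs_nonneg _) hC
  have c1 : Continuous fun x => f x * g x := hf.cont.mul hg.cont
  have c2 : Continuous fun x => cE ψ J i f x * g x := cf.mul hg.cont
  have c3 : Continuous fun x => cE ψ J i f x * cE ψ J i g x := cf.mul cg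
  have c4 : Continuous fun x => g x ^ 2 := hg.cont.pow 2
  have cfg := continuous_cE (J := J) hM.pot i c1 (mb hf.bdd hg.bdd)
  have bfg := abs_cE_le (J := J) hM.pot i (mb hf.bdd hg.bdd)
  -- the conditional covariance
  set V : (ι → ℝ) → ℝ := fun x =>
    cE ψ J i (fun y => f y * g y) x - cE ψ J i f x * cE ψ J i g x with hV
  have e1 : ∫ x, f x * g x ∂(mu ψ J)
      = ∫ x, cE ψ J i f x * g x ∂(mu ψ J) + ∫ x, V x ∂(mu ψ J) := by
    have i1 := integrable_of_bdd (P := mu ψ J) cfg bfg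
    have i2 := integrable_of_bdd (P := mu ψ J) c3 (mb bf bg)
    rw [hV, integral_sub i1 i2, integral_cE hM.pot hM.coup hM.int i c1
      (mb hf.bdd hg.bdd),
      ← integral_cE hM.pot hM.coup hM.int i c2 (mb bf hg.bdd)]
    have : ∀ x, cE ψ J i (fun y => cE ψ J i f y * g y) x = cE ψ J i f x * cE ψ J i g x := by
      intro x
      rw [cE]
      simp only [cE_update hM.coup]
      rw [integral_const_mul]
      rfl
    simp only [this]
    ring
  have e2 : cv (mu ψ J) f g = cv (mu ψ J) (cE ψ J i f) g + ∫ x, V x ∂(mu ψ J) := by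
    rw [cv, cv, e1, integral_cE hM.pot hM.coup hM.int i hf.cont hf.bdd]
    ring
  have hVle : ∀ x, |V x| ≤ exp (b - a) * (√(cE ψ J i (fun y => D i y ^ 2) x) *
      √(cE ψ J i (fun y => E i y ^ 2) x)) := by
    intro x
    have hp := hM.pot.prob (field J i x)
    set M := max (max C (L i)) (max C' (L' i)) with hMdef
    have m1 : C ≤ M := (le_max_left _ _).trans (le_max_left _ _)
    have m2 : L i ≤ M := (le_max_right _ _).trans (le_max_left _ _)
    have m3 : C' ≤ M := (le_max_left _ _).trans (le_max_right _ _)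
    have m4 : L' i ≤ M := (le_max_right _ _).trans (le_max_right _ _)
    rw [← mul_assoc]
    refine hM.pot.cov_le (field J i x) (F' := fun t => D i (update x i t))
      (G' := fun t => E i (update x i t)) (C := M) (hf.deriv i x)
      (continuous_slice (hf.contD i) i x) (hg.deriv i x) (continuous_slice (hg.contD i) i x)
      (fun t => (hf.bdd _).trans m1) (fun t => (hf.bddD _ _).trans m2)
      (fun t => (hg.bdd _).trans ?_) (fun t => (hg.bddD _ _).trans m4) ?_
    · nlinarith [abs_nonneg t, hC]
    · refine integrable_slice hM.pot i c4 (C := C' ^ 2) (fun y => ?_) x _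
      rw [abs_pow]
      exact pow_le_pow_left₀ (abs_nonneg _) (hg.bdd y) 2
  have cD := continuous_cE (J := J) hM.pot i (hf.contSq i) (hf.sq_le i)
  have cE' := continuous_cE (J := J) hM.pot i (hg.contSq i) (hg.sq_le i)
  have bD := abs_cE_le (J := J) hM.pot i (hf.sq_le i)
  have bE := abs_cE_le (J := J) hM.pot i (hg.sq_le i)
  have iDE : Integrable (fun x => √(cE ψ J i (fun y => D i y ^ 2) x) *
      √(cE ψ J i (fun y => E i y ^ 2) x)) (mu ψ J) := by
    refine integrable_of_bdd (C := √(L i ^ 2) * √(L' i ^ 2)) (cD.sqrt.mul cE'.sqrt) fun x => ?_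
    rw [abs_mul, abs_of_nonneg (Real.sqrt_nonneg _), abs_of_nonneg (Real.sqrt_nonneg _)]
    exact mul_le_mul (Real.sqrt_le_sqrt ((le_abs_self _).trans (bD x)))
      (Real.sqrt_le_sqrt ((le_abs_self _).trans (bE x))) (Real.sqrt_nonneg _)
      (Real.sqrt_nonneg _)
  have hVint : |∫ x, V x ∂(mu ψ J)| ≤ exp (b - a) * (nrm (mu ψ J) (D i) * nrm (mu ψ J) (E i)) := by
    refine (abs_integral_le_integral_abs).trans ?_
    refine (integral_mono_of_nonneg (ae_of_all _ fun x => abs_nonneg _) (iDE.const_mul _)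
      (ae_of_all _ hVle)).trans ?_
    rw [integral_const_mul]
    refine mul_le_mul_of_nonneg_left ?_ (exp_pos _).le
    have s1 : ∀ x, √(cE ψ J i (fun y => D i y ^ 2) x) ^ 2 = cE ψ J i (fun y => D i y ^ 2) x :=
      fun x => Real.sq_sqrt (cE_sq_nonneg i (D i) x)
    have s2 : ∀ x, √(cE ψ J i (fun y => E i y ^ 2) x) ^ 2 = cE ψ J i (fun y => E i y ^ 2) x :=
      fun x => Real.sq_sqrt (cE_sq_nonneg i (E i) x)
    have cs := cauchy_schwarz (P := mu ψ J)
      (f := fun x => √(cE ψ J i (fun y => D i y ^ 2) x))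
      (g := fun x => √(cE ψ J i (fun y => E i y ^ 2) x))
      (by simp only [s1]; exact integrable_of_bdd cD bD)
      (by simp only [s2]; exact integrable_of_bdd cE' bE) iDE
    simp only [s1, s2] at cs
    rw [integral_cE hM.pot hM.coup hM.int i (hf.contSq i) (hf.sq_le i),
      integral_cE hM.pot hM.coup hM.int i (hg.contSq i) (hg.sq_le i)] at cs
    exact (le_abs_self _).trans cs
  rw [e2, mul_assoc]
  exact (abs_add_le _ _).trans (add_le_add le_rfl hVint)

end Step

/-! ### Iterating the resampling -/

section Iterate
open Function
variable {ι : Type*} [Fintype ι] [DecidableEq ι] {ψ : ℝ → ℝ} {a b : ℝ} {J : ι → ι → ℝ}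
  {f g : (ι → ℝ) → ℝ} {D E : ι → (ι → ℝ) → ℝ} {C C' : ℝ} {L L' : ι → ℝ}

lemma Adm.lipschitz (hf : Adm f D C L) (x y : ι → ℝ) :
    |f x - f y| ≤ ∑ k, L k * |x k - y k| := by
  have key : ∀ s : Finset ι, |f (s.piecewise x y) - f y| ≤ ∑ k ∈ s, L k * |x k - y k| := by
    intro s
    induction s using Finset.induction_on with
    | empty => simp
    | insert k s hk ih =>
      rw [Finset.sum_insert hk, Finset.piecewise_insert]
      set z := s.piecewise x y with hz
      have hzk : update z k (y k) = z := by
        rw [update_eq_self_iff, hz, Finset.piecewise_eq_of_notMem _ _ _ hk]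
      have h1 := Convex.norm_image_sub_le_of_norm_hasDerivWithin_le
        (f := fun t => f (update z k t)) (f' := fun t => D k (update z k t)) (C := L k)
        (s := Set.univ) (x := y k) (y := x k) (fun t _ => (hf.deriv k z t).hasDerivWithinAt)
        (fun t _ => hf.bddD k _) convex_univ (Set.mem_univ _) (Set.mem_univ _)
      simp only [hzk, Real.norm_eq_abs] at h1
      calc |f (update z k (x k)) - f y|
          = |(f (update z k (x k)) - f z) + (f z - f y)| := by ring_nf
        _ ≤ _ := (abs_add_le _ _).trans (add_le_add h1 ih)
  simpa using key Finset.univ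

/-- Resampling at the site with the largest derivative decreases the total Lipschitz constant by a
fixed factor, while the potential function `∑ₖ Bₖ ‖∂ₖf‖` pays for the conditional covariance. -/
lemma step_greedy [Nonempty ι] (hM : Model ψ a b J) {q : ℝ} (hq1 : q < 1)
    (hrow : ∀ i, exp (b - a) * ∑ k, J i k ≤ q) {B : ι → ℝ} (hB0 : ∀ k, 0 ≤ B k)
    (hg : Adm g E C' L')
    (hB : ∀ i, nrm (mu ψ J) (E i) + exp (b - a) * ∑ k, J i k * B k ≤ B i)
    (hf : Adm f D C L) :
    ∃ f' D' L₁, Adm f' D' C L₁ ∧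
      ∑ k, L₁ k ≤ (1 - (1 - q) / Fintype.card ι) * ∑ k, L k ∧
      |cv (mu ψ J) f g| + exp (b - a) * ∑ k, B k * nrm (mu ψ J) (D' k) ≤
        exp (b - a) * (∑ k, B k * nrm (mu ψ J) (D k)) + |cv (mu ψ J) f' g| := by
  obtain ⟨i, -, hi⟩ := Finset.exists_max_image Finset.univ L Finset.univ_nonempty
  have split : ∀ u : ι → ℝ, ∑ k, (if k = i then 0 else u k) = ∑ k, u k - u i := by
    intro u
    have : ∀ k, (if k = i then 0 else u k) = u k - if k = i then u i else 0 := by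
      intro k
      by_cases h : k = i
      · subst h; simp
      · simp [h]
    simp_rw [this, Finset.sum_sub_distrib]
    simp
  refine ⟨_, _, _, hf.step hM i, ?_, ?_⟩
  · rw [split, hM.coup.diag, Finset.sum_add_distrib]
    have e : ∑ k, J i k * exp (b - a) * L i = exp (b - a) * (∑ k, J i k) * L i := by
      rw [Finset.mul_sum, Finset.sum_mul]
      exact Finset.sum_congr rfl fun k _ => by ring
    rw [e]
    have h1 := mul_le_mul_of_nonneg_right (hrow i) (hf.nonnegL i)
    have hn : (0 : ℝ) < Fintype.card ι := by exact_mod_cast Fintype.card_pos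
    have h2 : ∑ k, L k ≤ Fintype.card ι * L i := by
      have := Finset.sum_le_card_nsmul Finset.univ L (L i) hi
      simpa using this
    have h3 : (1 - q) / Fintype.card ι * ∑ k, L k ≤ (1 - q) * L i := by
      rw [div_mul_eq_mul_div, div_le_iff₀ hn, mul_assoc]
      refine mul_le_mul_of_nonneg_left (h2.trans_eq (mul_comm _ _)) (by linarith)
    nlinarith
  · set v := fun k => nrm (mu ψ J) (D k) with hv
    have hv0 : ∀ k, 0 ≤ v k := fun k => nrm_nonneg _ _
    have h1 := cv_step_le hM hf hg i
    have h2 : ∑ k, B k * nrm (mu ψ J) (stepD ψ J i f D k)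
        ≤ ∑ k, B k * v k + exp (b - a) * (∑ k, J i k * B k) * v i - B i * v i := by
      calc _ ≤ ∑ k, (if k = i then 0 else B k * (v k + J i k * exp (b - a) * v i)) := by
            refine Finset.sum_le_sum fun k _ => ?_
            refine (mul_le_mul_of_nonneg_left (nrm_stepD_le hM hf i k) (hB0 k)).trans_eq ?_
            by_cases h : k = i <;> simp [h, hv]
        _ = _ := by
            rw [split, hM.coup.diag]
            simp only [mul_add, Finset.sum_add_distrib]
            have : ∑ k, B k * (J i k * exp (b - a) * v i)
                = exp (b - a) * (∑ k, J i k * B k) * v i := by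
              rw [Finset.mul_sum, Finset.sum_mul]
              exact Finset.sum_congr rfl fun k _ => by ring
            rw [this]
            ring
    have h3 := mul_le_mul_of_nonneg_right (hB i) (hv0 i)
    have h4 : ∑ k, B k * nrm (mu ψ J) (stepD ψ J i f D k) + nrm (mu ψ J) (E i) * v i
        ≤ ∑ k, B k * v k := by linarith
    have h5 := mul_le_mul_of_nonneg_left h4 (exp_pos (b - a)).le
    have h6 : exp (b - a) * nrm (mu ψ J) (D i) * nrm (mu ψ J) (E i)
        = exp (b - a) * (nrm (mu ψ J) (E i) * v i) := by rw [hv]; ring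
    rw [h6] at h1
    linarith

/-- `T` greedy resamplings: the potential telescopes, and the total Lipschitz constant decays
geometrically. -/
lemma iterate_greedy [Nonempty ι] (hM : Model ψ a b J) {q : ℝ} (hq0 : 0 ≤ q) (hq1 : q < 1)
    (hrow : ∀ i, exp (b - a) * ∑ k, J i k ≤ q) {B : ι → ℝ} (hB0 : ∀ k, 0 ≤ B k)
    (hg : Adm g E C' L')
    (hB : ∀ i, nrm (mu ψ J) (E i) + exp (b - a) * ∑ k, J i k * B k ≤ B i) (T : ℕ)
    (hf : Adm f D C L) :
    ∃ f' D' L₁, Adm f' D' C L₁ ∧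
      ∑ k, L₁ k ≤ (1 - (1 - q) / Fintype.card ι) ^ T * ∑ k, L k ∧
      |cv (mu ψ J) f g| ≤
        exp (b - a) * (∑ k, B k * nrm (mu ψ J) (D k)) + |cv (mu ψ J) f' g| := by
  have hn : (1 : ℝ) ≤ Fintype.card ι := by exact_mod_cast Fintype.card_pos (α := ι)
  have hθ : 0 ≤ 1 - (1 - q) / Fintype.card ι := by
    rw [sub_nonneg, div_le_one (by linarith)]
    linarith
  induction T generalizing f D L with
  | zero =>
    refine ⟨f, D, L, hf, by simp, ?_⟩
    have : 0 ≤ exp (b - a) * (∑ k, B k * nrm (mu ψ J) (D k)) :=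
      mul_nonneg (exp_pos _).le
        (Finset.sum_nonneg fun k _ => mul_nonneg (hB0 k) (nrm_nonneg _ _))
    linarith
  | succ T ih =>
    obtain ⟨f₁, D₁, L₁, hf₁, hL₁, hc₁⟩ := step_greedy hM hq1 hrow hB0 hg hB hf
    obtain ⟨f₂, D₂, L₂, hf₂, hL₂, hc₂⟩ := ih hf₁
    refine ⟨f₂, D₂, L₂, hf₂, ?_, by linarith⟩
    rw [pow_succ, mul_assoc]
    exact hL₂.trans (mul_le_mul_of_nonneg_left hL₁ (pow_nonneg hθ T))

/-- The covariance estimate for bounded functions with bounded derivatives. `B` is a supersolution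
of the linear system governing the propagation of correlations. -/
lemma abs_cv_le_potential [Nonempty ι] (hM : Model ψ a b J) {q : ℝ} (hq0 : 0 ≤ q) (hq1 : q < 1)
    (hrow : ∀ i, exp (b - a) * ∑ k, J i k ≤ q) {B : ι → ℝ} (hB0 : ∀ k, 0 ≤ B k)
    (hg : Adm g E C' L')
    (hB : ∀ i, nrm (mu ψ J) (E i) + exp (b - a) * ∑ k, J i k * B k ≤ B i)
    (hf : Adm f D C L) :
    |cv (mu ψ J) f g| ≤ exp (b - a) * ∑ k, B k * nrm (mu ψ J) (D k) := by
  have := hM.prob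
  choose F D' L₁ hF hL hc using fun T => iterate_greedy hM hq0 hq1 hrow hB0 hg hB T hf
  have hn : (1 : ℝ) ≤ Fintype.card ι := by exact_mod_cast Fintype.card_pos (α := ι)
  have hθ : 0 ≤ 1 - (1 - q) / Fintype.card ι := by
    rw [sub_nonneg, div_le_one (by linarith)]
    linarith
  have hθ1 : 1 - (1 - q) / Fintype.card ι < 1 := by
    have : 0 < (1 - q) / Fintype.card ι := div_pos (by linarith) (by linarith)
    linarith
  -- the iterates flatten out pointwise
  have hptw : ∀ x, Tendsto (fun T => F T x - F T 0) atTop (𝓝 0) := by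
    intro x
    have hlim : Tendsto (fun T => ((1 - (1 - q) / Fintype.card ι) ^ T * ∑ k, L k) * ‖x‖)
        atTop (𝓝 0) := by
      have := ((tendsto_pow_atTop_nhds_zero_of_lt_one hθ hθ1).mul_const (∑ k, L k)).mul_const ‖x‖
      simpa using this
    refine squeeze_zero_norm (fun T => ?_) hlim
    refine ((hF T).lipschitz x 0).trans ?_
    refine le_trans ?_ (mul_le_mul_of_nonneg_right (hL T) (norm_nonneg x))
    rw [Finset.sum_mul]
    refine Finset.sum_le_sum fun k _ => mul_le_mul_of_nonneg_left ?_ ((hF T).nonnegL k)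
    simpa using norm_le_pi_norm x k
  have hbd : ∀ T x, |F T x - F T 0| ≤ 2 * C := fun T x => by
    have := abs_sub (F T x) (F T 0)
    linarith [(hF T).bdd x, (hF T).bdd 0]
  have hcont : ∀ T, Continuous fun x => F T x - F T 0 := fun T =>
    (hF T).cont.sub continuous_const
  have e : ∀ T, cv (mu ψ J) (F T) g = cv (mu ψ J) (fun x => F T x - F T 0) g := by
    intro T
    have iF := integrable_of_bdd (P := mu ψ J) (hF T).cont (hF T).bdd
    have ig := integrable_of_bdd (P := mu ψ J) hg.cont hg.bdd
    have iFg : Integrable (fun x => F T x * g x) (mu ψ J) :=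
      ig.bdd_mul (c := C) (hF T).cont.aestronglyMeasurable (ae_of_all _ (hF T).bdd)
    unfold cv
    simp only [sub_mul]
    rw [integral_sub iFg (ig.const_mul _), integral_sub iF (integrable_const _),
      integral_const_mul]
    simp only [integral_const, probReal_univ, smul_eq_mul, one_mul]
    ring
  have l1 : Tendsto (fun T => ∫ x, (F T x - F T 0) * g x ∂(mu ψ J)) atTop (𝓝 0) := by
    have := tendsto_integral_of_dominated_convergence (μ := mu ψ J)
      (F := fun T x => (F T x - F T 0) * g x) (f := fun _ => 0) (fun _ => 2 * C * C')
      (fun T => ((hcont T).mul hg.cont).aestronglyMeasurable) (integrable_const _)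
      (fun T => ae_of_all _ fun x => by
        rw [Real.norm_eq_abs, abs_mul]
        exact mul_le_mul (hbd T x) (hg.bdd x) (abs_nonneg _) (by linarith [hf.nonneg]))
      (ae_of_all _ fun x => by simpa using (hptw x).mul_const (g x))
    simpa using this
  have l2 : Tendsto (fun T => ∫ x, (F T x - F T 0) ∂(mu ψ J)) atTop (𝓝 0) := by
    have := tendsto_integral_of_dominated_convergence (μ := mu ψ J)
      (F := fun T x => F T x - F T 0) (f := fun _ => 0) (fun _ => 2 * C)
      (fun T => (hcont T).aestronglyMeasurable) (integrable_const _)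
      (fun T => ae_of_all _ fun x => hbd T x) (ae_of_all _ hptw)
    simpa using this
  have l3 : Tendsto (fun T => |cv (mu ψ J) (F T) g|) atTop (𝓝 0) := by
    simp only [e]
    have := (l1.sub (l2.mul_const (∫ x, g x ∂(mu ψ J)))).abs
    simpa [cv] using this
  refine ge_of_tendsto' (b := |cv (mu ψ J) f g|)
    (f := fun T => exp (b - a) * (∑ k, B k * nrm (mu ψ J) (D k)) + |cv (mu ψ J) (F T) g|)
    (x := atTop) ?_ hc
  simpa using l3.const_add (exp (b - a) * ∑ k, B k * nrm (mu ψ J) (D k))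

end Iterate

/-! ### Functions of one spin, and removal of the boundedness assumption -/

section Truncate
open Function

/-- A `C¹` function on the line is a pointwise limit, together with its derivative, of compactly
supported `C¹` functions. The approximants are dominated by the function itself, and their
derivatives by its derivative up to an additive constant. -/
lemma exists_truncation {F F' : ℝ → ℝ} (hF : ∀ t, HasDerivAt F (F' t) t) (hF' : Continuous F') :
    ∃ (c : ℝ) (Φ Φ' : ℕ → ℝ → ℝ), (∀ n t, HasDerivAt (Φ n) (Φ' n t) t) ∧
      (∀ n, Continuous (Φ' n)) ∧ (∀ n, ∃ C, ∀ t, |Φ n t| ≤ C ∧ |Φ' n t| ≤ C) ∧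
      (∀ n t, |Φ n t| ≤ |F t|) ∧ (∀ n t, |Φ' n t| ≤ c + |F' t|) ∧
      (∀ t, Tendsto (fun n => Φ n t) atTop (𝓝 (F t))) ∧
      (∀ t, Tendsto (fun n => Φ' n t) atTop (𝓝 (F' t))) := by
  have hFc : Continuous F := continuous_iff_continuousAt.2 fun t => (hF t).continuousAt
  obtain ⟨β, hβ, hβs, hβ1, hβone'⟩ : ∃ β : ℝ → ℝ, ContDiff ℝ 1 β ∧ HasCompactSupport β ∧
      (∀ t, |β t| ≤ 1) ∧ ∀ t, |t| ≤ 1 → β t = 1 := by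
    let β : ContDiffBump (0 : ℝ) := ⟨1, 2, one_pos, one_lt_two⟩
    refine ⟨β, β.contDiff, β.hasCompactSupport, fun t => ?_, fun t ht => ?_⟩
    · rw [abs_of_nonneg β.nonneg]
      exact β.le_one
    · exact β.one_of_mem_closedBall (by rwa [mem_closedBall_zero_iff, Real.norm_eq_abs])
  have hβ' : Continuous (deriv β) := hβ.continuous_deriv le_rfl
  have hβd : ∀ t, HasDerivAt β (deriv β t) t := fun t =>
    (hβ.differentiable one_ne_zero t).hasDerivAt
  obtain ⟨c, hc⟩ := hβ'.bounded_above_of_compact_support hβs.deriv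
  simp only [Real.norm_eq_abs] at hc
  have hc0 : 0 ≤ c := (abs_nonneg _).trans (hc 0)
  set N : ℕ → ℝ := fun n => (n : ℝ) + 1 with hN
  have hN1 : ∀ n, 1 ≤ N n := fun n => by simp [hN]
  have hN0 : ∀ n, 0 < N n := fun n => by linarith [hN1 n]
  have hNt : Tendsto N atTop atTop := tendsto_atTop_add_const_right _ _ tendsto_natCast_atTop_atTop
  have hNi : Tendsto (fun n => (N n)⁻¹) atTop (𝓝 0) := tendsto_inv_atTop_zero.comp hNt
  -- the cutoff is eventually equal to one at every point
  have hβone : ∀ t, ∀ᶠ n in atTop, β (t / N n ^ 2) = 1 := by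
    intro t
    filter_upwards [hNt.eventually_ge_atTop |t|] with n hn
    refine hβone' _ ?_
    rw [abs_div, abs_of_pos (pow_pos (hN0 n) 2), div_le_iff₀ (pow_pos (hN0 n) 2)]
    nlinarith [hN1 n]
  -- `N sin (F / N)` is bounded by `N`, so a cutoff at scale `N²` perturbs the derivative by `O(1/N)`
  set Φ : ℕ → ℝ → ℝ := fun n t => β (t / N n ^ 2) * (N n * sin (F t / N n)) with hΦ
  set Φ' : ℕ → ℝ → ℝ := fun n t =>
    deriv β (t / N n ^ 2) / N n ^ 2 * (N n * sin (F t / N n))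
      + β (t / N n ^ 2) * (cos (F t / N n) * F' t) with hΦ'
  have hd : ∀ n t, HasDerivAt (Φ n) (Φ' n t) t := by
    intro n t
    have h0 := (hN0 n).ne'
    have d1 : HasDerivAt (fun t => β (t / N n ^ 2)) (deriv β (t / N n ^ 2) * (1 / N n ^ 2)) t :=
      (hβd (t / N n ^ 2)).comp t ((hasDerivAt_id t).div_const _)
    have d2 : HasDerivAt (fun t => N n * sin (F t / N n))
        (N n * (cos (F t / N n) * (F' t / N n))) t :=
      (((hF t).div_const (N n)).sin).const_mul (N n)
    refine (d1.mul d2).congr_deriv ?_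
    simp only [hΦ']
    field_simp
  have hcont' : ∀ n, Continuous (Φ' n) := by
    intro n
    have := hβ.continuous
    simp only [hΦ']
    have e1 : Continuous fun t : ℝ => deriv β (t / N n ^ 2) := hβ'.comp (by fun_prop)
    have e2 : Continuous fun t : ℝ => β (t / N n ^ 2) := this.comp (by fun_prop)
    fun_prop
  have hcont : ∀ n, Continuous (Φ n) := fun n =>
    continuous_iff_continuousAt.2 fun t => (hd n t).continuousAt
  have hsupp : ∀ n, HasCompactSupport (Φ n) := by
    intro n
    have h1 : HasCompactSupport fun t : ℝ => β (t / N n ^ 2) := by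
      have := hβs.comp_homeomorph
        (Homeomorph.mulRight₀ (N n ^ 2)⁻¹ (inv_ne_zero (pow_ne_zero 2 (hN0 n).ne')))
      simpa [Function.comp_def, div_eq_mul_inv] using this
    exact h1.mul_right
  have hderiv : ∀ n, deriv (Φ n) = Φ' n := fun n => funext fun t => (hd n t).deriv
  -- `|N sin (y / N)| ≤ min N |y|`
  have hs1 : ∀ n y, |N n * sin (y / N n)| ≤ |y| := by
    intro n y
    rw [abs_mul, abs_of_pos (hN0 n)]
    have h1 : |sin (y / N n)| ≤ |y / N n| := abs_sin_le_abs
    rw [abs_div, abs_of_pos (hN0 n), le_div_iff₀ (hN0 n)] at h1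
    linarith
  have hs2 : ∀ n y, |N n * sin (y / N n)| ≤ N n := by
    intro n y
    rw [abs_mul, abs_of_pos (hN0 n)]
    exact mul_le_of_le_one_right (hN0 n).le (abs_sin_le_one _)
  have hfirst : ∀ n t, |deriv β (t / N n ^ 2) / N n ^ 2 * (N n * sin (F t / N n))|
      ≤ c * (N n)⁻¹ := by
    intro n t
    rw [abs_mul, abs_div, abs_of_pos (pow_pos (hN0 n) 2)]
    calc _ ≤ c / N n ^ 2 * N n := by
          gcongr
          · exact hc _
          · exact hs2 n _
      _ = c * (N n)⁻¹ := by
          have := (hN0 n).ne'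
          field_simp
  refine ⟨c, Φ, Φ', hd, hcont', ?_, ?_, ?_, ?_, ?_⟩
  · intro n
    obtain ⟨C₁, h₁⟩ := (hcont n).bounded_above_of_compact_support (hsupp n)
    obtain ⟨C₂, h₂⟩ := (hcont' n).bounded_above_of_compact_support
      (by rw [← hderiv]; exact (hsupp n).deriv)
    exact ⟨max C₁ C₂, fun t => ⟨(h₁ t).trans (le_max_left _ _), (h₂ t).trans (le_max_right _ _)⟩⟩
  · intro n t
    simp only [hΦ, abs_mul (β _)]
    calc _ ≤ 1 * |F t| := mul_le_mul (hβ1 _) (hs1 n _) (abs_nonneg _) zero_le_one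
      _ = _ := one_mul _
  · intro n t
    refine (abs_add_le _ _).trans (add_le_add ((hfirst n t).trans ?_) ?_)
    · exact mul_le_of_le_one_right hc0 (inv_le_one_of_one_le₀ (hN1 n))
    · rw [abs_mul, abs_mul]
      calc _ ≤ 1 * (1 * |F' t|) := by
            gcongr
            · exact hβ1 _
            · exact abs_cos_le_one _
        _ = _ := by ring
  · intro t
    have h1 : Tendsto (fun n => F t * sinc (F t / N n)) atTop (𝓝 (F t)) := by
      have h2 : Tendsto (fun n => F t / N n) atTop (𝓝 0) := by
        simpa [div_eq_mul_inv] using hNi.const_mul (F t)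
      have := ((continuous_sinc.tendsto 0).comp h2).const_mul (F t)
      simpa using this
    refine h1.congr' ?_
    filter_upwards [hβone t] with n hn
    simp only [hΦ, hn, one_mul]
    by_cases h : F t = 0
    · simp [h]
    · have h0 := (hN0 n).ne'
      rw [sinc_of_ne_zero (div_ne_zero h h0)]
      field_simp
  · intro t
    have h1 : Tendsto (fun n => deriv β (t / N n ^ 2) / N n ^ 2 * (N n * sin (F t / N n)))
        atTop (𝓝 0) := by
      refine squeeze_zero_norm (fun n => hfirst n t) ?_
      simpa using hNi.const_mul c
    have h2 : Tendsto (fun n => β (t / N n ^ 2) * (cos (F t / N n) * F' t)) atTop (𝓝 (F' t)) := by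
      have h3 : Tendsto (fun n => F t / N n) atTop (𝓝 0) := by
        simpa [div_eq_mul_inv] using hNi.const_mul (F t)
      have h4 := ((continuous_cos.tendsto 0).comp h3).mul_const (F' t)
      rw [cos_zero, one_mul] at h4
      refine h4.congr' ?_
      filter_upwards [hβone t] with n hn
      rw [hn, one_mul]
      rfl
    simpa using h1.add h2

variable {ι : Type*} [Fintype ι] [DecidableEq ι] {ψ : ℝ → ℝ} {a b : ℝ} {J : ι → ι → ℝ}

lemma adm_coord (i : ι) {F F' : ℝ → ℝ} {C : ℝ} (hF : ∀ t, HasDerivAt F (F' t) t)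
    (hF' : Continuous F') (hb : ∀ t, |F t| ≤ C ∧ |F' t| ≤ C) :
    Adm (fun x : ι → ℝ => F (x i)) (fun k x => if k = i then F' (x i) else 0) C (fun _ => C) where
  cont := by
    have hFc : Continuous F := continuous_iff_continuousAt.2 fun t => (hF t).continuousAt
    fun_prop
  contD k := by
    by_cases h : k = i
    · simp only [h, if_true]; fun_prop
    · simp only [h, if_false]; fun_prop
  bdd x := (hb _).1
  bddD k x := by
    by_cases h : k = i
    · simpa [h] using (hb _).2
    · simpa [h] using (abs_nonneg _).trans (hb 0).1
  deriv k x t := by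
    by_cases h : k = i
    · subst h
      simpa using hF t
    · simp only [h, if_false, update_of_ne (Ne.symm h)]
      exact hasDerivAt_const _ _

/-- The covariance estimate for bounded functions of one spin each. -/
lemma abs_cv_coord_le_of_bdd (hM : Model ψ a b J) {q : ℝ} (hq0 : 0 ≤ q) (hq1 : q < 1)
    (hrow : ∀ i, exp (b - a) * ∑ k, J i k ≤ q) {i j : ι} {c : ι → ℝ} (hc0 : ∀ k, 0 ≤ c k)
    (hc : ∀ k, (if k = j then 1 else 0) + exp (b - a) * ∑ l, J k l * c l ≤ c k)
    {F F' G G' : ℝ → ℝ} {C C' : ℝ}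
    (hF : ∀ t, HasDerivAt F (F' t) t) (hF' : Continuous F') (hbF : ∀ t, |F t| ≤ C ∧ |F' t| ≤ C)
    (hG : ∀ t, HasDerivAt G (G' t) t) (hG' : Continuous G')
    (hbG : ∀ t, |G t| ≤ C' ∧ |G' t| ≤ C') :
    |cv (mu ψ J) (fun x => F (x i)) (fun x => G (x j))| ≤
      exp (b - a) * c i * nrm (mu ψ J) (fun x => F' (x i)) * nrm (mu ψ J) (fun x => G' (x j)) := by
  have : Nonempty ι := ⟨i⟩
  set w := nrm (mu ψ J) (fun x => G' (x j)) with hw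
  have hw0 : 0 ≤ w := nrm_nonneg _ _
  have key := abs_cv_le_potential hM hq0 hq1 hrow (B := fun k => c k * w)
    (fun k => mul_nonneg (hc0 k) hw0) (adm_coord j hG hG' hbG) ?_ (adm_coord i hF hF' hbF)
  · refine key.trans_eq ?_
    rw [Finset.sum_eq_single i]
    · simp only [if_true]
      ring
    · intro k _ hk
      simp [hk, nrm]
    · simp
  · intro k
    have h1 := mul_le_mul_of_nonneg_right (hc k) hw0
    have h2 : nrm (mu ψ J) (fun x => if k = j then G' (x j) else 0) = (if k = j then 1 else 0) * w := by
      by_cases h : k = j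
      · simp [h, hw]
      · simp [h, nrm]
    rw [h2]
    refine le_trans (le_of_eq ?_) h1
    have h3 : ∑ l, J k l * (c l * w) = (∑ l, J k l * c l) * w := by
      rw [Finset.sum_mul]
      exact Finset.sum_congr rfl fun l _ => by ring
    rw [h3]
    ring

/-- Covariances are continuous under pointwise convergence dominated in `L²`. -/
lemma tendsto_cv {Ω : Type*} [MeasurableSpace Ω] {P : Measure Ω} [IsProbabilityMeasure P]
    {u v : Ω → ℝ} {U V : ℕ → Ω → ℝ} (hU : ∀ n, AEStronglyMeasurable (U n) P)
    (hV : ∀ n, AEStronglyMeasurable (V n) P) (hu : AEStronglyMeasurable u P)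
    (hv : AEStronglyMeasurable v P) (iu : Integrable (fun x => u x ^ 2) P)
    (iv : Integrable (fun x => v x ^ 2) P) (leU : ∀ n x, |U n x| ≤ |u x|)
    (leV : ∀ n x, |V n x| ≤ |v x|) (tU : ∀ x, Tendsto (fun n => U n x) atTop (𝓝 (u x)))
    (tV : ∀ x, Tendsto (fun n => V n x) atTop (𝓝 (v x))) :
    Tendsto (fun n => cv P (U n) (V n)) atTop (𝓝 (cv P u v)) := by
  have mu2 : MemLp u 2 P := (memLp_two_iff_integrable_sq hu).2 iu
  have mv2 : MemLp v 2 P := (memLp_two_iff_integrable_sq hv).2 iv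
  have l1 : Tendsto (fun n => ∫ x, U n x ∂P) atTop (𝓝 (∫ x, u x ∂P)) :=
    tendsto_integral_of_dominated_convergence (fun x => |u x|) hU
      (mu2.integrable one_le_two).abs (fun n => ae_of_all _ fun x => leU n x) (ae_of_all _ tU)
  have l2 : Tendsto (fun n => ∫ x, V n x ∂P) atTop (𝓝 (∫ x, v x ∂P)) :=
    tendsto_integral_of_dominated_convergence (fun x => |v x|) hV
      (mv2.integrable one_le_two).abs (fun n => ae_of_all _ fun x => leV n x) (ae_of_all _ tV)
  have l3 : Tendsto (fun n => ∫ x, U n x * V n x ∂P) atTop (𝓝 (∫ x, u x * v x ∂P)) := by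
    refine tendsto_integral_of_dominated_convergence (fun x => |u x * v x|)
      (fun n => (hU n).mul (hV n)) (mu2.integrable_mul mv2).abs
      (fun n => ae_of_all _ fun x => ?_) (ae_of_all _ fun x => (tU x).mul (tV x))
    rw [Real.norm_eq_abs, abs_mul, abs_mul]
    exact mul_le_mul (leU n x) (leV n x) (abs_nonneg _) (abs_nonneg _)
  exact l3.sub (l1.mul l2)

lemma tendsto_nrm {Ω : Type*} [MeasurableSpace Ω] {P : Measure Ω} [IsProbabilityMeasure P]
    {u : Ω → ℝ} {U : ℕ → Ω → ℝ} {c : ℝ} (hU : ∀ n, AEStronglyMeasurable (U n) P)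
    (iu : Integrable (fun x => u x ^ 2) P) (leU : ∀ n x, |U n x| ≤ c + |u x|)
    (tU : ∀ x, Tendsto (fun n => U n x) atTop (𝓝 (u x))) :
    Tendsto (fun n => nrm P (U n)) atTop (𝓝 (nrm P u)) := by
  refine (continuous_sqrt.tendsto _).comp ?_
  refine tendsto_integral_of_dominated_convergence (fun x => 2 * c ^ 2 + 2 * u x ^ 2)
    (fun n => (hU n).pow 2) ((integrable_const _).add (iu.const_mul 2))
    (fun n => ae_of_all _ fun x => ?_) (ae_of_all _ fun x => (tU x).pow 2)
  rw [Real.norm_eq_abs, abs_of_nonneg (sq_nonneg _)]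
  have h1 := pow_le_pow_left₀ (abs_nonneg _) (leU n x) 2
  rw [sq_abs] at h1
  nlinarith [sq_abs (u x), sq_nonneg (c - |u x|)]

/-- The covariance estimate for functions of one spin each. -/
lemma abs_cv_coord_le (hM : Model ψ a b J) {q : ℝ} (hq0 : 0 ≤ q) (hq1 : q < 1)
    (hrow : ∀ i, exp (b - a) * ∑ k, J i k ≤ q) {i j : ι} {c : ι → ℝ} (hc0 : ∀ k, 0 ≤ c k)
    (hc : ∀ k, (if k = j then 1 else 0) + exp (b - a) * ∑ l, J k l * c l ≤ c k)
    {F F' G G' : ℝ → ℝ}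
    (hF : ∀ t, HasDerivAt F (F' t) t) (hF' : Continuous F')
    (hG : ∀ t, HasDerivAt G (G' t) t) (hG' : Continuous G')
    (iF : Integrable (fun x => F (x i) ^ 2) (mu ψ J))
    (iF' : Integrable (fun x => F' (x i) ^ 2) (mu ψ J))
    (iG : Integrable (fun x => G (x j) ^ 2) (mu ψ J))
    (iG' : Integrable (fun x => G' (x j) ^ 2) (mu ψ J)) :
    |cv (mu ψ J) (fun x => F (x i)) (fun x => G (x j))| ≤
      exp (b - a) * c i * nrm (mu ψ J) (fun x => F' (x i)) * nrm (mu ψ J) (fun x => G' (x j)) := by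
  have hprob := hM.prob
  have m : ∀ {h : ℝ → ℝ} (k : ι), Continuous h →
      AEStronglyMeasurable (fun x : ι → ℝ => h (x k)) (mu ψ J) := fun k hh =>
    (hh.comp (continuous_apply k)).aestronglyMeasurable
  have hcont : ∀ {F F' : ℝ → ℝ}, (∀ t, HasDerivAt F (F' t) t) → Continuous F := fun h =>
    continuous_iff_continuousAt.2 fun t => (h t).continuousAt
  have hFc := hcont hF
  have hGc := hcont hG
  obtain ⟨_, Φ, Φ', dΦ, cΦ, bΦ, leΦ, leΦ', tΦ, tΦ'⟩ := exists_truncation hF hF'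
  obtain ⟨_, Γ, Γ', dΓ, cΓ, bΓ, leΓ, leΓ', tΓ, tΓ'⟩ := exists_truncation hG hG'
  have hΦc := fun n => hcont (dΦ n)
  have hΓc := fun n => hcont (dΓ n)
  have l3 := (tendsto_cv (P := mu ψ J) (fun n => m i (hΦc n)) (fun n => m j (hΓc n)) (m i hFc)
    (m j hGc) iF iG (fun n x => leΦ n (x i)) (fun n x => leΓ n (x j)) (fun x => tΦ (x i))
    (fun x => tΓ (x j))).abs
  have l4 := ((tendsto_nrm (P := mu ψ J) (fun n => m i (cΦ n)) iF' (fun n x => leΦ' n (x i))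
    (fun x => tΦ' (x i))).const_mul (exp (b - a) * c i)).mul
      (tendsto_nrm (P := mu ψ J) (fun n => m j (cΓ n)) iG' (fun n x => leΓ' n (x j))
        (fun x => tΓ' (x j)))
  refine le_of_tendsto_of_tendsto' l3 l4 fun n => ?_
  obtain ⟨C, hC⟩ := bΦ n
  obtain ⟨C', hC'⟩ := bΓ n
  exact abs_cv_coord_le_of_bdd hM hq0 hq1 hrow hc0 hc (dΦ n) (cΦ n) hC (dΓ n) (cΓ n) hC'

end Truncate

/-! ### Finiteness of the partition function, and passage to Euclidean space -/

section Transfer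
variable {ι : Type*} [Fintype ι] [DecidableEq ι] {ψ : ℝ → ℝ} {a b : ℝ} {J : ι → ι → ℝ}

/-- The interaction is dominated by `q/2 ∑ₖ xₖ²`, so that a Gaussian weight of curvature `1 - q`
remains. -/
lemma integrable_exp_nH (hψ : Pot ψ a b) (hJ : Coupling J) {q : ℝ} (hq : q < 1)
    (hrow : ∀ i, ∑ k, J i k ≤ q) : Integrable fun x => exp (nH ψ J x) := by
  have hd : Integrable fun x : ι → ℝ => ∏ i, (exp (-a) * exp (-((1 - q) / 2) * x i ^ 2)) := by
    rw [volume_pi]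
    refine Integrable.fintype_prod (f := fun _ (t : ℝ) => exp (-a) * exp (-((1 - q) / 2) * t ^ 2))
      fun _ => ?_
    exact (integrable_exp_neg_mul_sq (by linarith)).const_mul _
  refine hd.mono' (continuous_exp.comp (continuous_nH hψ.cont)).aestronglyMeasurable
    (ae_of_all _ fun x => ?_)
  rw [Real.norm_eq_abs, abs_of_pos (exp_pos _)]
  simp_rw [← exp_add]
  rw [← exp_sum]
  refine exp_le_exp.2 ?_
  have h1 : ∑ k, ∑ l, J k l * (x k * x l) ≤ q * ∑ k, x k ^ 2 := by
    calc _ ≤ ∑ k, ∑ l, (J k l * x k ^ 2 / 2 + J l k * x l ^ 2 / 2) := by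
          refine Finset.sum_le_sum fun k _ => Finset.sum_le_sum fun l _ => ?_
          rw [hJ.symm l k]
          nlinarith [mul_nonneg (hJ.nonneg k l) (sq_nonneg (x k - x l))]
      _ = ∑ k, (∑ l, J k l) * x k ^ 2 := by
          simp_rw [Finset.sum_add_distrib]
          rw [Finset.sum_comm (f := fun k l => J l k * x l ^ 2 / 2), ← Finset.sum_add_distrib]
          refine Finset.sum_congr rfl fun k _ => ?_
          rw [← Finset.sum_add_distrib, Finset.sum_mul]
          exact Finset.sum_congr rfl fun l _ => by ring
      _ ≤ ∑ k, q * x k ^ 2 :=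
          Finset.sum_le_sum fun k _ => mul_le_mul_of_nonneg_right (hrow k) (sq_nonneg _)
      _ = _ := (Finset.mul_sum _ _ _).symm
  have h2 : ∑ k, (x k ^ 2 / 2 + a) ≤ ∑ k, ψ (x k) := Finset.sum_le_sum fun k _ => hψ.lo _
  have h3 : ∑ k, (-a + -((1 - q) / 2) * x k ^ 2)
      = q / 2 * ∑ k, x k ^ 2 - ∑ k, (x k ^ 2 / 2 + a) := by
    rw [Finset.mul_sum, ← Finset.sum_sub_distrib]
    exact Finset.sum_congr rfl fun k _ => by ring
  rw [h3, nH]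
  linarith

/-- The normalized Gibbs measure on Euclidean space is the image of `mu` under the identification
of `ι → ℝ` with Euclidean space. -/
lemma gibbsN_eq_map (hψ : Continuous ψ) (hI : Integrable fun x => exp (nH ψ J x))
    {H : EuclideanSpace ℝ ι → ℝ} (hH : ∀ x, -H x = nH ψ J x.ofLp) :
    gibbsN H = (mu ψ J).map (MeasurableEquiv.toLp 2 (ι → ℝ)) := by
  have mp : MeasurePreserving (MeasurableEquiv.toLp 2 (ι → ℝ)) :=
    (EuclideanSpace.volume_preserving_symm_measurableEquiv_toLp ι).symm
  set e := MeasurableEquiv.toLp 2 (ι → ℝ) with he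
  have hρ : Measurable fun x => ENNReal.ofReal (exp (nH ψ J x)) :=
    (continuous_exp.comp (continuous_nH hψ)).measurable.ennreal_ofReal
  have g1 : ∀ s, MeasurableSet s → gibbs H s
      = ∫⁻ x in e ⁻¹' s, ENNReal.ofReal (exp (nH ψ J x)) := by
    intro s hs
    rw [gibbs, withDensity_apply _ hs,
      ← mp.setLIntegral_comp_preimage_emb e.measurableEmbedding]
    simp only [hH]
    rfl
  have hZ : 0 < ∫ x, exp (nH ψ J x) := integral_exp_pos hI
  have g2 : gibbs H Set.univ = ENNReal.ofReal (∫ x, exp (nH ψ J x)) := by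
    rw [g1 _ MeasurableSet.univ, Set.preimage_univ, Measure.restrict_univ,
      ofReal_integral_eq_lintegral_ofReal hI (ae_of_all _ fun x => (exp_pos _).le)]
  ext s hs
  rw [e.map_apply, mu, tilted_apply' _ _ (e.measurable hs), gibbsN, Measure.smul_apply, g1 s hs, g2,
    smul_eq_mul, ← lintegral_const_mul _ hρ]
  refine lintegral_congr fun x => ?_
  rw [ENNReal.ofReal_div_of_pos hZ, ENNReal.div_eq_inv_mul]

/-- A smooth function of one coordinate factors through a `C¹` function on the line, whose
derivative gives the partial derivative. -/
lemma hasDerivAt_single {f : EuclideanSpace ℝ ι → ℝ} {i : ι} (hf : ContDiff ℝ (⊤ : ℕ∞) f)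
    (hdep : ∀ x y : EuclideanSpace ℝ ι, x i = y i → f x = f y) :
    ∃ F F' : ℝ → ℝ, (∀ t, HasDerivAt F (F' t) t) ∧ Continuous F' ∧ (∀ x, f x = F (x i)) ∧
      ∀ x, pd f i x = F' (x i) := by
  set u : EuclideanSpace ℝ ι := EuclideanSpace.single i 1 with hu
  have hui : u i = 1 := by simp [hu]
  have hfd : Differentiable ℝ f := hf.differentiable (by simp)
  have hline : ∀ (x : EuclideanSpace ℝ ι) (s : ℝ),
      HasDerivAt (fun s : ℝ => f (x + s • u)) (fderiv ℝ f (x + s • u) u) s := by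
    intro x s
    have h1 : HasDerivAt (fun s : ℝ => x + s • u) u s := by
      simpa using ((hasDerivAt_id s).smul_const u).const_add x
    exact (hfd _).hasFDerivAt.comp_hasDerivAt s h1
  have hF : ∀ x, f x = f (x i • u) := fun x => hdep _ _ (by simp [hui])
  refine ⟨fun t => f (t • u), fun t => fderiv ℝ f (t • u) u, fun t => ?_, ?_, hF, fun x => ?_⟩
  · simpa using hline 0 t
  · have := hf.continuous_fderiv (by simp)
    fun_prop
  · have h1 := hline x 0
    have e : ∀ s : ℝ, f (x + s • u) = f (0 + (x i + s) • u) := fun s => hdep _ _ (by simp [hui])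
    have h3 : HasDerivAt (fun s : ℝ => f (0 + (x i + s) • u))
        (fderiv ℝ f (0 + (x i + 0) • u) u) 0 := by
      exact (hline 0 (x i + 0)).comp_const_add (x i) 0
    simp only [e] at h1
    have := h1.unique h3
    simpa [pd, hu] using this

end Transfer

/-! ### Combinatorics of the discrete torus -/

section Torus

lemma circDist_eq (m : ℕ) [NeZero m] (x y : ZMod m) :
    circDist m x y = (x - y).valMinAbs.natAbs := by
  rw [circDist, ZMod.valMinAbs_natAbs_eq_min, ← neg_sub x y, ZMod.neg_val]
  split_ifs with h
  · simp [h]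
  · rfl

lemma circDist_comm (m : ℕ) [NeZero m] (x y : ZMod m) : circDist m x y = circDist m y x :=
  min_comm _ _

lemma circDist_triangle (m : ℕ) [NeZero m] (x y z : ZMod m) :
    circDist m x z ≤ circDist m x y + circDist m y z := by
  simp only [circDist_eq]
  rw [← sub_add_sub_cancel x y z]
  exact (ZMod.natAbs_valMinAbs_add_le _ _).trans (Int.natAbs_add_le _ _)

lemma eq_of_circDist_eq_zero {m : ℕ} [NeZero m] {x y : ZMod m} (h : circDist m x y = 0) :
    y = x := by
  rw [circDist_eq, Int.natAbs_eq_zero, ZMod.valMinAbs_eq_zero, sub_eq_zero] at h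
  exact h.symm

lemma eq_of_circDist_eq_one {m : ℕ} [NeZero m] {x y : ZMod m} (h : circDist m x y = 1) :
    y = x + 1 ∨ y = x - 1 := by
  have key : ∀ z : ZMod m, z.val = 1 → z = 1 := fun z hz => by
    rw [← ZMod.natCast_zmod_val z, hz, Nat.cast_one]
  rcases min_choice (x - y).val (y - x).val with h1 | h1
  · right
    have := key (x - y) (by rw [← h1]; exact h)
    rw [← this]; ring
  · left
    have := key (y - x) (by rw [← h1]; exact h)
    rw [← this]; ring

variable (m n : ℕ) [NeZero m] [NeZero n]

lemma torusDist_comm (k l : ZMod m × ZMod n) : torusDist m n k l = torusDist m n l k := by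
  simp only [torusDist, circDist_comm m k.1, circDist_comm n k.2]

lemma torusDist_self (k : ZMod m × ZMod n) : torusDist m n k k = 0 := by
  simp [torusDist, circDist]

lemma torusDist_triangle (k l j : ZMod m × ZMod n) :
    torusDist m n k j ≤ torusDist m n k l + torusDist m n l j := by
  have h1 := circDist_triangle m k.1 l.1 j.1
  have h2 := circDist_triangle n k.2 l.2 j.2
  simp only [torusDist]
  lia

lemma card_neighbors_le (k : ZMod m × ZMod n) :
    (Finset.univ.filter fun l => torusDist m n k l = 1).card ≤ 4 := by
  refine (Finset.card_le_card (t := {(k.1 + 1, k.2), (k.1 - 1, k.2), (k.1, k.2 + 1),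
    (k.1, k.2 - 1)}) fun l hl => ?_).trans Finset.card_le_four
  have hl' : circDist m k.1 l.1 + circDist n k.2 l.2 = 1 := (Finset.mem_filter.1 hl).2
  simp only [Finset.mem_insert, Finset.mem_singleton, Prod.ext_iff]
  rcases Nat.add_eq_one_iff.1 hl' with ⟨h0, h1⟩ | ⟨h1, h0⟩
  · have := eq_of_circDist_eq_zero h0
    have := eq_of_circDist_eq_one h1
    tauto
  · have := eq_of_circDist_eq_zero h0
    have := eq_of_circDist_eq_one h1
    tauto

/-- Nearest-neighbor coupling of strength `ε`. -/
def nnJ (ε : ℝ) (k l : ZMod m × ZMod n) : ℝ := if torusDist m n k l = 1 then ε else 0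

lemma coupling_nnJ {ε : ℝ} (hε : 0 ≤ ε) : Coupling (nnJ m n ε) where
  symm k l := by simp only [nnJ, torusDist_comm m n k l]
  diag k := by simp [nnJ, torusDist_self]
  nonneg k l := by unfold nnJ; split_ifs <;> simp [hε]

lemma sum_nnJ_mul_le {ε : ℝ} (hε : 0 ≤ ε) (k : ZMod m × ZMod n) {c : ZMod m × ZMod n → ℝ} {M : ℝ}
    (hM0 : 0 ≤ M) (hM : ∀ l, torusDist m n k l = 1 → c l ≤ M) :
    ∑ l, nnJ m n ε k l * c l ≤ 4 * (ε * M) := by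
  simp only [nnJ, ite_mul, zero_mul]
  rw [← Finset.sum_filter]
  refine (Finset.sum_le_card_nsmul _ _ (ε * M) fun l hl =>
    mul_le_mul_of_nonneg_left (hM l (Finset.mem_filter.1 hl).2) hε).trans ?_
  rw [nsmul_eq_mul]
  refine mul_le_mul_of_nonneg_right ?_ (mul_nonneg hε hM0)
  exact_mod_cast card_neighbors_le m n k

/-- `exp (-δ(·, j))` is, up to a constant, a supersolution: the neighbors of `k` are at distance at
least `δ(k, j) - 1` from `j`. -/
lemma supersolution {ε κ : ℝ} (hε : 0 ≤ ε) (hκ : 0 ≤ κ) (hr : κ * (4 * (ε * exp 1)) < 1)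
    (j k : ZMod m × ZMod n) :
    (if k = j then 1 else 0) + κ * ∑ l, nnJ m n ε k l *
        (exp (-(torusDist m n l j : ℝ)) / (1 - κ * (4 * (ε * exp 1))))
      ≤ exp (-(torusDist m n k j : ℝ)) / (1 - κ * (4 * (ε * exp 1))) := by
  set r := κ * (4 * (ε * exp 1)) with hrdef
  have h1r : 0 < 1 - r := by linarith
  set c := exp (-(torusDist m n k j : ℝ)) / (1 - r) with hc
  have hc0 : 0 ≤ c := by positivity
  have hsum := sum_nnJ_mul_le m n hε k (M := exp 1 * c)
    (c := fun l => exp (-(torusDist m n l j : ℝ)) / (1 - r)) (by positivity) (fun l hl => by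
      rw [hc, ← mul_div_assoc, ← exp_add]
      refine div_le_div_of_nonneg_right (exp_le_exp.2 ?_) h1r.le
      have h := torusDist_triangle m n k l j
      rw [hl] at h
      have : (torusDist m n k j : ℝ) ≤ 1 + torusDist m n l j := by exact_mod_cast h
      linarith)
  have h1 := mul_le_mul_of_nonneg_left hsum hκ
  have h2 : κ * (4 * (ε * (exp 1 * c))) = r * c := by rw [hrdef]; ring
  have h3 : (if k = j then (1 : ℝ) else 0) ≤ (1 - r) * c := by
    rw [hc, mul_div_cancel₀ _ h1r.ne']
    split_ifs with h
    · simp [h, torusDist_self]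
    · positivity
  rw [h2] at h1
  linarith

end Torus

end GibbsDecay

/-- **Exponential decay of correlations for a two-dimensional lattice system with
non-convex single-site potential and weak nearest-neighbor interaction.** -/
theorem decay_of_correlations_2d_lattice (m n : ℕ) [NeZero m] [NeZero n]
    (hm : 3 ≤ m) (hn : 3 ≤ n)
    (ψ δψ : ℝ → ℝ) (hψ : ∀ t, ψ t = t ^ 2 / 2 + δψ t)
    (hδψsmooth : ContDiff ℝ (⊤ : ℕ∞) δψ) (hδψbdd : ∃ C : ℝ, ∀ t, |δψ t| ≤ C)
    (ε : ℝ) (hε : 0 < ε)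
    -- the Hamiltonian: `H(x) = Σ_i ψ(x_i) - ε Σ_{δ(i,j)=1} x_i x_j`, where each
    -- unordered nearest-neighbor pair is counted once
    (H : EuclideanSpace ℝ (ZMod m × ZMod n) → ℝ)
    (hHdef : ∀ x, H x = ∑ i, ψ (x i) -
      ε * ((1 : ℝ) / 2) * ∑ i, ∑ j, (if torusDist m n i j = 1 then x i * x j else 0))
    -- `Δ := exp(-osc δψ)`
    (Δ : ℝ) (hΔ : Δ = Real.exp (-(sSup (Set.range δψ) - sInf (Set.range δψ))))
    -- weak interaction: `ε < (Δ/4) e⁻¹`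
    (hweak : ε < Δ / 4 * Real.exp (-1))
    -- functions depending only on the coordinates `x_i` and `x_j` respectively
    (i j : ZMod m × ZMod n)
    (f g : EuclideanSpace ℝ (ZMod m × ZMod n) → ℝ)
    (hfdep : ∀ x y : EuclideanSpace ℝ (ZMod m × ZMod n), x i = y i → f x = f y)
    (hgdep : ∀ x y : EuclideanSpace ℝ (ZMod m × ZMod n), x j = y j → g x = g y)
    (hf : ContDiff ℝ (⊤ : ℕ∞) f) (hg : ContDiff ℝ (⊤ : ℕ∞) g)
    (hfi : Integrable f (gibbsN H)) (hfi2 : Integrable (fun x => (f x) ^ 2) (gibbsN H))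
    (hfd : ∀ k, Integrable (fun x => (pd f k x) ^ 2) (gibbsN H))
    (hgi : Integrable g (gibbsN H)) (hgi2 : Integrable (fun x => (g x) ^ 2) (gibbsN H))
    (hgd : ∀ k, Integrable (fun x => (pd g k x) ^ 2) (gibbsN H)) :
    |covar (gibbsN H) f g| ≤ (Δ - 4 * ε * Real.exp 1)⁻¹ *
      Real.exp (-(torusDist m n i j : ℝ)) *
      Real.sqrt (∫ x, (pd f i x) ^ 2 ∂(gibbsN H)) *
      Real.sqrt (∫ x, (pd g j x) ^ 2 ∂(gibbsN H)) := by
  obtain ⟨C, hC⟩ := hδψbdd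
  set a := sInf (Set.range δψ) with ha
  set b := sSup (Set.range δψ) with hb
  have hlo : ∀ t, a ≤ δψ t := fun t =>
    csInf_le ⟨-C, by rintro _ ⟨s, rfl⟩; exact (abs_le.1 (hC s)).1⟩ ⟨t, rfl⟩
  have hhi : ∀ t, δψ t ≤ b := fun t =>
    le_csSup ⟨C, by rintro _ ⟨s, rfl⟩; exact (abs_le.1 (hC s)).2⟩ ⟨t, rfl⟩
  have hpot : GibbsDecay.Pot ψ a b := by
    refine ⟨?_, fun t => by rw [hψ]; linarith [hlo t], fun t => by rw [hψ]; linarith [hhi t]⟩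
    have := hδψsmooth.continuous
    rw [funext hψ]
    fun_prop
  set κ := exp (b - a) with hκ
  have hκ0 : 0 < κ := exp_pos _
  have hκΔ : κ * Δ = 1 := by rw [hΔ, hκ, ← exp_add]; simp
  have hκ1 : 1 ≤ κ := one_le_exp (by linarith [hlo 0, hhi 0])
  have hr : κ * (4 * (ε * exp 1)) < 1 := by
    have h1 : ε * exp 1 < Δ / 4 := by
      have := mul_lt_mul_of_pos_right hweak (exp_pos 1)
      rwa [mul_assoc, ← exp_add, neg_add_cancel, exp_zero, mul_one] at this
    calc κ * (4 * (ε * exp 1)) < κ * Δ := mul_lt_mul_of_pos_left (by linarith) hκ0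
      _ = 1 := hκΔ
  have he1 : 1 ≤ exp 1 := one_le_exp zero_le_one
  have hq : κ * (4 * ε) < 1 := lt_of_le_of_lt
    (mul_le_mul_of_nonneg_left (by nlinarith) hκ0.le) hr
  have hrow : ∀ k, ∑ l, GibbsDecay.nnJ m n ε k l ≤ 4 * ε := fun k => by
    simpa using GibbsDecay.sum_nnJ_mul_le m n hε.le k (c := fun _ => 1) zero_le_one
      fun _ _ => le_rfl
  have hJ := GibbsDecay.coupling_nnJ m n hε.le
  have hI := GibbsDecay.integrable_exp_nH hpot hJ (q := 4 * ε) (by nlinarith) hrow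
  have hM : GibbsDecay.Model ψ a b (GibbsDecay.nnJ m n ε) := ⟨hpot, hJ, hI⟩
  have hmap := GibbsDecay.gibbsN_eq_map (H := H) hpot.cont hI fun x => by
    have h1 : ε * ∑ i, ∑ j, (if torusDist m n i j = 1 then x i * x j else 0)
        = ∑ k, ∑ l, GibbsDecay.nnJ m n ε k l * (x k * x l) := by
      simp_rw [Finset.mul_sum, GibbsDecay.nnJ, mul_ite, ite_mul, mul_zero, zero_mul]
    rw [hHdef, GibbsDecay.nH, ← h1]
    ring
  set P := GibbsDecay.mu ψ (GibbsDecay.nnJ m n ε) with hP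
  have hprob : IsProbabilityMeasure P := hM.prob
  obtain ⟨F, F', dF, cF', hF, hpF⟩ := GibbsDecay.hasDerivAt_single hf hfdep
  obtain ⟨G, G', dG, cG', hG, hpG⟩ := GibbsDecay.hasDerivAt_single hg hgdep
  have tr : ∀ {u : EuclideanSpace ℝ (ZMod m × ZMod n) → ℝ}, Integrable u (gibbsN H) →
      Integrable (fun x : ZMod m × ZMod n → ℝ => u (WithLp.toLp 2 x)) P := fun hu => by
    rw [hmap] at hu
    exact (integrable_map_equiv _ _).1 hu
  have ti : ∀ u : EuclideanSpace ℝ (ZMod m × ZMod n) → ℝ, ∫ x, u x ∂(gibbsN H)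
      = ∫ x : ZMod m × ZMod n → ℝ, u (WithLp.toLp 2 x) ∂P := fun u => by
    rw [hmap]
    exact integral_map_equiv _ _
  have iF := tr hfi
  have iF2 := tr hfi2
  have iF' := tr (hfd i)
  have iG := tr hgi
  have iG2 := tr hgi2
  have iG' := tr (hgd j)
  simp only [hF] at iF iF2
  simp only [hG] at iG iG2
  simp only [hpF] at iF'
  simp only [hpG] at iG'
  have iFG : Integrable (fun x : ZMod m × ZMod n → ℝ => F (x i) * G (x j)) P :=
    ((memLp_two_iff_integrable_sq iF.1).2 iF2).integrable_mul
      ((memLp_two_iff_integrable_sq iG.1).2 iG2)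
  have hcov : covar (gibbsN H) f g = GibbsDecay.cv P (fun x => F (x i)) (fun x => G (x j)) := by
    rw [covar, ti, ti, ti]
    simp only [hF, hG]
    exact GibbsDecay.integral_centered iF iG iFG
  have h1r : 0 < 1 - κ * (4 * (ε * exp 1)) := by linarith
  have key := GibbsDecay.abs_cv_coord_le hM (q := κ * (4 * ε)) (by positivity) hq
    (fun k => mul_le_mul_of_nonneg_left (hrow k) hκ0.le) (i := i) (j := j)
    (c := fun k => exp (-(torusDist m n k j : ℝ)) / (1 - κ * (4 * (ε * exp 1))))
    (fun k => by positivity) (GibbsDecay.supersolution m n hε.le hκ0.le hr j)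
    dF cF' dG cG' iF2 iF' iG2 iG'
  rw [hcov, ti, ti]
  simp only [hpF, hpG]
  refine key.trans_eq ?_
  simp only [GibbsDecay.nrm]
  congr 2
  -- `κ / (1 - κ · 4εe) = 1 / (Δ - 4εe)`, because `κ Δ = 1`
  have h2 : 1 - κ * (4 * (ε * exp 1)) = κ * (Δ - 4 * ε * exp 1) := by rw [← hκΔ]; ring
  have h3 : Δ - 4 * ε * exp 1 ≠ 0 := fun h => by rw [h2, h, mul_zero] at h1r; exact h1r.false
  rw [← hκ, h2]
  field_simp
end
end

section
/- Let Λ ⊂ ℤ^d be a finite subset, d ≥ 1. Let ρ_i > 0 (i ∈ Λ) and κ_{ij} = κ_{ji} ≥ 0 (i ≠ j ∈ Λ), and let A be the symmetric Λ×Λ matrix with A_{ii} = ρ_i and A_{ij} = -κ_{ij} for i ≠ j. Assume: (i) κ_{ij} ≤ C/(|i-j|^{d+α} + 1) for some C > 0, α > 0; (ii) there is c < 1 with Σ_{j≠i} κ_{ij}/ρ_i ≤ c for all i ∈ Λ, and inf_i ρ_i > 0. Then A is invertible and there exist constants C' > 0 and α̃ > 0, depending only on C, α, d, c and inf_i ρ_i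 (not on Λ), such that |(A^{-1})_{ij}| ≤ C'/(|i-j|^{d+α̃} + 1) for all i, j ∈ Λ. -/
/-!
Write `A = D - K` with `D = diag ρ` and `K` the off-diagonal part, and put `B = D⁻¹ K`. The rows of
`B` sum to at most `c < 1`, so `A⁻¹ = ∑ₙ Bⁿ D⁻¹`. The proof bounds each `Bⁿ D⁻¹` entrywise, with
decay exponent `s = d + α` (so `α̃ = α` works).

A path of `n + 1` steps from `i` to `j` has its first step of length at least `|i - j| / (n + 2)`, or
its remaining part has length at least `|i - j| (n + 1) / (n + 2)`. In the first case the decay of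
`B` is combined with the *column* sums of `Bⁿ D⁻¹`; in the second the induction hypothesis is
combined with the row sums of `B`. The columns of `B` itself need not sum to at most `c`, but
`Bⁿ D⁻¹ = D⁻¹ (K D⁻¹)ⁿ`, and by the symmetry of `κ` the columns of `K D⁻¹` do. This gives
`(Bⁿ D⁻¹) i j * |i - j| ^ s ≤ const * n * cⁿ * (n + 1) ^ s` (`pow_mul_decay`), which is summable in
`n` with a sum independent of `Λ`.
-/

open Matrix

noncomputable section

/-- Euclidean distance of lattice sites in `ℤ^d`. -/
def latDist {d : ℕ} (i j : Fin d → ℤ) : ℝ :=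
  Real.sqrt (∑ k, ((i k : ℝ) - (j k : ℝ)) ^ 2)

lemma latDist_eq_dist {d : ℕ} (i j : Fin d → ℤ) :
    latDist i j = dist (WithLp.toLp 2 (fun k => (i k : ℝ)) : EuclideanSpace ℝ (Fin d))
      (WithLp.toLp 2 (fun k => (j k : ℝ))) := by
  simp [latDist, EuclideanSpace.dist_eq, Real.dist_eq, sq_abs]

section MatrixBounds

variable {ι : Type*} [Fintype ι] [DecidableEq ι]

lemma abs_pow_mul_le {B X : Matrix ι ι ℝ} {c M : ℝ} (hM : 0 ≤ M) (hc : 0 ≤ c)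
    (hB : ∀ i j, 0 ≤ B i j) (hrow : ∀ i, ∑ j, B i j ≤ c) (hX : ∀ i j, |X i j| ≤ M) (n : ℕ) :
    ∀ i j, |(B ^ n * X) i j| ≤ c ^ n * M := by
  induction n with
  | zero => simpa using hX
  | succ n ih =>
    intro i j
    rw [pow_succ', Matrix.mul_assoc, Matrix.mul_apply]
    calc |∑ x, B i x * (B ^ n * X) x j| ≤ ∑ x, |B i x * (B ^ n * X) x j| :=
          Finset.abs_sum_le_sum_abs _ _
      _ ≤ ∑ x, B i x * (c ^ n * M) := by
          refine Finset.sum_le_sum fun x _ => ?_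
          rw [abs_mul, abs_of_nonneg (hB i x)]
          exact mul_le_mul_of_nonneg_left (ih x j) (hB i x)
      _ = (∑ x, B i x) * (c ^ n * M) := by rw [Finset.sum_mul]
      _ ≤ c * (c ^ n * M) := mul_le_mul_of_nonneg_right (hrow i) (by positivity)
      _ = c ^ (n + 1) * M := by ring

lemma pow_mul_nonneg {B X : Matrix ι ι ℝ} (hB : ∀ i j, 0 ≤ B i j) (hX : ∀ i j, 0 ≤ X i j)
    (n : ℕ) : ∀ i j, 0 ≤ (B ^ n * X) i j := by
  induction n with
  | zero => simpa using hX
  | succ n ih =>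
    intro i j
    rw [pow_succ', Matrix.mul_assoc, Matrix.mul_apply]
    exact Finset.sum_nonneg fun x _ => mul_nonneg (hB i x) (ih x j)

/-- Column sums of `Bⁿ P`, controlled through an intertwining `B P = P E` by the column sums
of `E`. -/
lemma col_sum_pow_mul_le {B P E : Matrix ι ι ℝ} {c q : ℝ} (hc : 0 ≤ c) (hq : 0 ≤ q)
    (hE : ∀ i j, 0 ≤ E i j) (hcol : ∀ j, ∑ i, E i j ≤ c)
    (hBP : B * P = P * E) (hPcol : ∀ j, ∑ i, P i j ≤ q) (n : ℕ) :
    ∀ j, ∑ i, (B ^ n * P) i j ≤ c ^ n * q := by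
  induction n with
  | zero => simpa using hPcol
  | succ n ih =>
    intro j
    have h : B ^ (n + 1) * P = (B ^ n * P) * E := by
      rw [pow_succ, Matrix.mul_assoc, hBP, Matrix.mul_assoc]
    calc ∑ i, (B ^ (n + 1) * P) i j = ∑ x, (∑ i, (B ^ n * P) i x) * E x j := by
          simp_rw [h, Matrix.mul_apply (M := B ^ n * P), Finset.sum_mul]
          exact Finset.sum_comm
      _ ≤ ∑ x, (c ^ n * q) * E x j :=
          Finset.sum_le_sum fun x _ => mul_le_mul_of_nonneg_right (ih x) (hE x j)
      _ = (c ^ n * q) * ∑ x, E x j := by rw [Finset.mul_sum]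
      _ ≤ (c ^ n * q) * c := mul_le_mul_of_nonneg_left (hcol j) (by positivity)
      _ = c ^ (n + 1) * q := by ring

/-- Decay of the entries of `Bⁿ P`, where `P` vanishes off the zero set of `δ`, the entries of `B`
decay like `δ ^ (-s)`, the row sums of `B` are at most `c`, and the column sums of `Bⁿ P` are at
most `cⁿ q`. -/
lemma pow_mul_decay {B P : Matrix ι ι ℝ} {δ : ι → ι → ℝ} {c q k s : ℝ}
    (hc : 0 < c) (hq : 0 ≤ q) (hk : 0 ≤ k) (hs : 0 < s)
    (hδ : ∀ i j, 0 ≤ δ i j) (htri : ∀ i j x, δ i j ≤ δ i x + δ x j)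
    (hB : ∀ i j, 0 ≤ B i j) (hP : ∀ i j, 0 ≤ P i j) (hrow : ∀ i, ∑ j, B i j ≤ c)
    (hcol : ∀ n j, ∑ i, (B ^ n * P) i j ≤ c ^ n * q)
    (hdec : ∀ i j, δ i j ^ s * B i j ≤ k) (hPδ : ∀ i j, δ i j ^ s * P i j = 0) (n : ℕ) :
    ∀ i j, δ i j ^ s * (B ^ n * P) i j ≤ (k * q / c * (n * c ^ n)) * ((n : ℝ) + 1) ^ s := by
  induction n with
  | zero => intro i j; simp [hPδ]
  | succ n ih =>
    intro i j
    set a : ℝ := k * q / c * (n * c ^ n) with ha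
    have ha0 : 0 ≤ a := by positivity
    have hn1 : (0 : ℝ) < (n : ℝ) + 1 := by positivity
    have hn2 : (0 : ℝ) < (n : ℝ) + 2 := by positivity
    have hN := pow_mul_nonneg hB hP n
    have key : ∀ x, δ i j ^ s * (B i x * (B ^ n * P) x j) ≤
        ((n : ℝ) + 2) ^ s * (k * (B ^ n * P) x j + B i x * a) := by
      intro x
      have hNx := hN x j
      have hBx := hB i x
      -- one of the two legs of the triangle carries its proportional share of the distance
      rcases le_or_gt (δ i j) (((n : ℝ) + 2) * δ i x) with h | h
      · have h1 : δ i j ^ s ≤ ((n : ℝ) + 2) ^ s * δ i x ^ s := by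
          rw [← Real.mul_rpow hn2.le (hδ _ _)]
          exact Real.rpow_le_rpow (hδ _ _) h hs.le
        calc δ i j ^ s * (B i x * (B ^ n * P) x j)
            ≤ (((n : ℝ) + 2) ^ s * δ i x ^ s) * (B i x * (B ^ n * P) x j) := by gcongr
          _ = ((n : ℝ) + 2) ^ s * ((δ i x ^ s * B i x) * (B ^ n * P) x j) := by ring
          _ ≤ ((n : ℝ) + 2) ^ s * (k * (B ^ n * P) x j) := by
              have := hdec i x
              gcongr
          _ ≤ _ := by
              gcongr
              nlinarith [mul_nonneg hBx ha0]
      · have h0 : ((n : ℝ) + 1) * δ i j ≤ ((n : ℝ) + 2) * δ x j := by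
          nlinarith [htri i j x]
        have h1 : ((n : ℝ) + 1) ^ s * δ i j ^ s ≤ ((n : ℝ) + 2) ^ s * δ x j ^ s := by
          rw [← Real.mul_rpow hn2.le (hδ _ _), ← Real.mul_rpow hn1.le (hδ _ _)]
          exact Real.rpow_le_rpow (mul_nonneg hn1.le (hδ _ _)) h0 hs.le
        have h2 : δ i j ^ s * (B ^ n * P) x j ≤ ((n : ℝ) + 2) ^ s * a := by
          have hp : 0 < ((n : ℝ) + 1) ^ s := by positivity
          refine le_of_mul_le_mul_left ?_ hp
          calc ((n : ℝ) + 1) ^ s * (δ i j ^ s * (B ^ n * P) x j)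
              = (((n : ℝ) + 1) ^ s * δ i j ^ s) * (B ^ n * P) x j := by ring
            _ ≤ (((n : ℝ) + 2) ^ s * δ x j ^ s) * (B ^ n * P) x j := by gcongr
            _ = ((n : ℝ) + 2) ^ s * (δ x j ^ s * (B ^ n * P) x j) := by ring
            _ ≤ ((n : ℝ) + 2) ^ s * (a * ((n : ℝ) + 1) ^ s) := by
                have := ih x j
                gcongr
            _ = _ := by ring
        calc δ i j ^ s * (B i x * (B ^ n * P) x j)
            = B i x * (δ i j ^ s * (B ^ n * P) x j) := by ring
          _ ≤ B i x * (((n : ℝ) + 2) ^ s * a) := by gcongr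
          _ = ((n : ℝ) + 2) ^ s * (B i x * a) := by ring
          _ ≤ _ := by
              gcongr
              nlinarith [mul_nonneg hk hNx]
    rw [pow_succ', Matrix.mul_assoc, Matrix.mul_apply, Finset.mul_sum]
    calc ∑ x, δ i j ^ s * (B i x * (B ^ n * P) x j)
        ≤ ∑ x, ((n : ℝ) + 2) ^ s * (k * (B ^ n * P) x j + B i x * a) :=
          Finset.sum_le_sum fun x _ => key x
      _ = ((n : ℝ) + 2) ^ s * (k * ∑ x, (B ^ n * P) x j + (∑ x, B i x) * a) := by
          rw [← Finset.mul_sum, Finset.sum_add_distrib, Finset.mul_sum, Finset.sum_mul]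
      _ ≤ ((n : ℝ) + 2) ^ s * (k * (c ^ n * q) + c * a) := by
          have h1 := hcol n j
          have h2 := hrow i
          gcongr
      _ = _ := by
          have : ((n + 1 : ℕ) : ℝ) + 1 = (n : ℝ) + 2 := by push_cast; ring
          rw [this, ha]
          push_cast
          field_simp
          ring

/-- Finite Neumann expansion with remainder of a solution of `X = P + B X`. -/
lemma eq_sum_add_pow_mul {B P X : Matrix ι ι ℝ} (h : X = P + B * X) (N : ℕ) :
    X = ∑ n ∈ Finset.range N, B ^ n * P + B ^ N * X := by
  induction N with
  | zero => simp
  | succ N ih =>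
    rw [Finset.sum_range_succ, pow_succ, Matrix.mul_assoc, add_assoc, ← Matrix.mul_add, ← h]
    exact ih

end MatrixBounds

lemma summable_bound {c s : ℝ} (hc0 : 0 < c) (hc : c < 1) :
    Summable fun n : ℕ => (n * c ^ n) * ((n : ℝ) + 1) ^ s := by
  obtain ⟨m, hm⟩ := exists_nat_ge s
  have h1 : Summable fun n : ℕ => ((n : ℝ) ^ (m + 1) * c ^ n) :=
    summable_pow_mul_geometric_of_norm_lt_one _ (by rwa [Real.norm_of_nonneg hc0.le])
  have h2 := ((summable_nat_add_iff 1).2 h1).mul_left c⁻¹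
  refine Summable.of_nonneg_of_le (fun n => by positivity) (fun n => ?_) h2
  have h3 : ((n : ℝ) + 1) ^ s ≤ ((n : ℝ) + 1) ^ m := by
    rw [← Real.rpow_natCast]
    exact Real.rpow_le_rpow_of_exponent_le (by linarith [(Nat.cast_nonneg n : (0 : ℝ) ≤ n)]) hm
  calc (n * c ^ n) * ((n : ℝ) + 1) ^ s ≤ (((n : ℝ) + 1) * c ^ n) * ((n : ℝ) + 1) ^ m := by
        gcongr
        linarith
    _ = c⁻¹ * (((n + 1 : ℕ) : ℝ) ^ (m + 1) * c ^ (n + 1)) := by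
        push_cast
        field_simp
        ring

/-- **Algebraic decay of the entries of the inverse of a strictly diagonally dominant
matrix with algebraically decaying off-diagonal entries.** The constants `C'` and `α̃`
depend only on `C`, `α`, `d`, `c` and the lower bound `r` on the `ρ_i`, not on `Λ`. -/
theorem algebraic_decay_of_inverse_entries
    (d : ℕ) (hd : 1 ≤ d) (C α c r : ℝ)
    (hC : 0 < C) (hα : 0 < α) (hc : c < 1) (hr : 0 < r) :
    ∃ C' αt : ℝ, 0 < C' ∧ 0 < αt ∧
      ∀ (Λ : Finset (Fin d → ℤ)) (ρ : ↥Λ → ℝ) (κ : ↥Λ → ↥Λ → ℝ) (A : Matrix ↥Λ ↥Λ ℝ),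
        (∀ i, 0 < ρ i) → (∀ i, r ≤ ρ i) →
        (∀ i j, i ≠ j → κ i j = κ j i) → (∀ i j, i ≠ j → 0 ≤ κ i j) →
        -- (i) algebraic decay of the off-diagonal entries
        (∀ i j, i ≠ j → κ i j ≤ C / (latDist i.1 j.1 ^ ((d : ℝ) + α) + 1)) →
        -- (ii) smallness: `Σ_{j≠i} κ_{ij}/ρ_i ≤ c < 1` for all `i`
        (∀ i : ↥Λ, (∑ j ∈ Finset.univ.filter (fun j => j ≠ i), κ i j) / ρ i ≤ c) →
        -- the matrix `A`
        (∀ i, A i i = ρ i) → (∀ i j, i ≠ j → A i j = -κ i j) →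
        IsUnit A ∧
          ∀ i j : ↥Λ, |A⁻¹ i j| ≤ C' / (latDist i.1 j.1 ^ ((d : ℝ) + αt) + 1) := by
  classical
  -- for nonempty `Λ` the hypotheses force `0 ≤ c`; enlarging `c` makes it positive in all cases
  obtain ⟨c₀, hc₀, hc₁, hcc⟩ : ∃ c₀ : ℝ, 0 < c₀ ∧ c₀ < 1 ∧ c ≤ c₀ :=
    ⟨max c (1 / 2), by positivity, max_lt hc (by norm_num), le_max_left _ _⟩
  set s : ℝ := (d : ℝ) + α with hs_def
  have hs : 0 < s := by positivity
  set b : ℕ → ℝ := fun n =>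
    (C / r * r⁻¹ / c₀) * ((n * c₀ ^ n) * ((n : ℝ) + 1) ^ s) + c₀ ^ n * r⁻¹ with hb
  have hb0 : ∀ n, 0 ≤ b n := fun n => by positivity
  have hbs : Summable b :=
    ((summable_bound hc₀ hc₁).mul_left _).add
      ((summable_geometric_of_lt_one hc₀.le hc₁).mul_right _)
  have hbpos : 0 < ∑' n, b n := hbs.tsum_pos hb0 0 (by simp [hb]; positivity)
  refine ⟨∑' n, b n, α, hbpos, hα, ?_⟩
  intro Λ ρ κ A hρ hrρ hsymm hκ hdec hsum hAd hAo
  set P : Matrix ↥Λ ↥Λ ℝ := Matrix.diagonal fun i => (ρ i)⁻¹ with hPdef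
  set K : Matrix ↥Λ ↥Λ ℝ := Matrix.of fun i j => if j = i then 0 else κ i j with hKdef
  have hKsymm : ∀ i j, K i j = K j i := by
    intro i j
    by_cases h : i = j
    · rw [h]
    · simp [hKdef, h, Ne.symm h, hsymm i j h]
  have hK0 : ∀ i j, 0 ≤ K i j := by
    intro i j
    by_cases h : j = i
    · simp [hKdef, h]
    · simpa [hKdef, h] using hκ i j (Ne.symm h)
  have hKrow : ∀ i, ∑ j, K i j ≤ c₀ * ρ i := by
    intro i
    have h1 := (div_le_iff₀ (hρ i)).1 (hsum i)
    have h2 : ∑ j, K i j = ∑ j ∈ Finset.univ.filter (fun j => j ≠ i), κ i j := by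
      rw [Finset.sum_filter]
      exact Finset.sum_congr rfl fun j _ => by by_cases h : j = i <;> simp [hKdef, h]
    rw [h2]
    exact h1.trans (mul_le_mul_of_nonneg_right hcc (hρ i).le)
  have hA : A = Matrix.diagonal ρ - K := by
    ext i j
    by_cases h : i = j
    · subst h; simp [hKdef, hAd]
    · simp [hKdef, h, Ne.symm h, hAo i j h]
  have hPi : ∀ i, 0 < (ρ i)⁻¹ := fun i => inv_pos.2 (hρ i)
  have hPr : ∀ i, (ρ i)⁻¹ ≤ r⁻¹ := fun i => inv_anti₀ hr (hrρ i)
  have hP0 : ∀ i j, 0 ≤ P i j := by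
    intro i j
    by_cases h : i = j
    · subst h; simpa [hPdef] using (hρ i).le
    · simp [hPdef, h]
  have hPabs : ∀ i j, |P i j| ≤ r⁻¹ := by
    intro i j
    rw [abs_of_nonneg (hP0 i j)]
    by_cases h : i = j
    · subst h; simpa [hPdef] using hPr i
    · simpa [hPdef, h] using hr.le
  have hPcol : ∀ j, ∑ i, P i j ≤ r⁻¹ := by
    intro j
    simpa [hPdef, Matrix.diagonal_apply] using hPr j
  set B := P * K with hBdef
  have hBij : ∀ i j, B i j = (ρ i)⁻¹ * K i j := fun i j => by
    simp [hBdef, hPdef, Matrix.diagonal_mul]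
  have hEij : ∀ i j, (K * P) i j = K i j * (ρ j)⁻¹ := fun i j => by
    simp [hPdef, Matrix.mul_diagonal]
  have hB0 : ∀ i j, 0 ≤ B i j := fun i j => by
    rw [hBij]; exact mul_nonneg (hPi i).le (hK0 i j)
  have hE0 : ∀ i j, 0 ≤ (K * P) i j := fun i j => by
    rw [hEij]; exact mul_nonneg (hK0 i j) (hPi j).le
  have hBrow : ∀ i, ∑ j, B i j ≤ c₀ := by
    intro i
    simp_rw [hBij, ← Finset.mul_sum]
    rw [inv_mul_le_iff₀ (hρ i), mul_comm]
    exact hKrow i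
  have hEcol : ∀ j, ∑ i, (K * P) i j ≤ c₀ := by
    intro j
    simp_rw [hEij, ← Finset.sum_mul, hKsymm _ j]
    rw [← div_eq_mul_inv, div_le_iff₀ (hρ j)]
    exact hKrow j
  have hcol := col_sum_pow_mul_le hc₀.le (inv_nonneg.2 hr.le) hE0 hEcol
    (Matrix.mul_assoc P K P) hPcol
  have hδ : ∀ i j : ↥Λ, 0 ≤ latDist i.1 j.1 := fun i j => Real.sqrt_nonneg _
  have htri : ∀ i j x : ↥Λ, latDist i.1 j.1 ≤ latDist i.1 x.1 + latDist x.1 j.1 := by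
    intro i j x
    simp_rw [latDist_eq_dist]
    exact dist_triangle _ _ _
  have hδs : ∀ i j : ↥Λ, 0 ≤ latDist i.1 j.1 ^ s := fun i j => Real.rpow_nonneg (hδ i j) s
  have hKdec : ∀ i j : ↥Λ, latDist i.1 j.1 ^ s * K i j ≤ C := by
    intro i j
    by_cases h : j = i
    · simpa [hKdef, h] using hC.le
    · have h1 := hdec i j (Ne.symm h)
      have h2 : K i j = κ i j := by simp [hKdef, h]
      have h3 := hκ i j (Ne.symm h)
      rw [le_div_iff₀ (by linarith [hδs i j])] at h1
      rw [h2]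
      linarith
  have hBdec : ∀ i j : ↥Λ, latDist i.1 j.1 ^ s * B i j ≤ C / r := by
    intro i j
    rw [hBij, div_eq_mul_inv]
    calc latDist i.1 j.1 ^ s * ((ρ i)⁻¹ * K i j)
        = (latDist i.1 j.1 ^ s * K i j) * (ρ i)⁻¹ := by ring
      _ ≤ C * r⁻¹ := mul_le_mul (hKdec i j) (hPr i) (hPi i).le hC.le
  have hPδ : ∀ i j : ↥Λ, latDist i.1 j.1 ^ s * P i j = 0 := by
    intro i j
    by_cases h : i = j
    · subst h; simp [latDist, Real.zero_rpow hs.ne']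
    · simp [hPdef, h]
  have hdecay := pow_mul_decay (δ := fun i j : ↥Λ => latDist i.1 j.1) hc₀ (inv_nonneg.2 hr.le)
    (div_nonneg hC.le hr.le) hs hδ htri hB0 hP0 hBrow hcol hBdec hPδ
  have hunit : IsUnit A := by
    rw [Matrix.isUnit_iff_isUnit_det]
    refine (det_ne_zero_of_sum_row_lt_diag fun i => ?_).isUnit
    have h1 : ∑ j ∈ Finset.univ.erase i, ‖A i j‖ ≤ ∑ j, K i j := by
      refine (Finset.sum_le_sum fun j hj => ?_).trans
        (Finset.sum_le_sum_of_subset_of_nonneg (Finset.subset_univ (Finset.univ.erase i))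
          fun j _ _ => hK0 i j)
      have h := Finset.ne_of_mem_erase hj
      rw [hAo i j (Ne.symm h), norm_neg, Real.norm_of_nonneg (hκ i j (Ne.symm h))]
      simp [hKdef, h]
    rw [hAd, Real.norm_of_nonneg (hρ i).le]
    have h2 := hKrow i
    nlinarith [hρ i]
  refine ⟨hunit, fun i j => ?_⟩
  have hPD : P * Matrix.diagonal ρ = 1 := by
    rw [hPdef, Matrix.diagonal_mul_diagonal, ← Matrix.diagonal_one]
    congr 1
    ext i
    exact inv_mul_cancel₀ (hρ i).ne'
  have hfix : A⁻¹ = P + B * A⁻¹ := by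
    have h1 : P * A = 1 - B := by rw [hA, Matrix.mul_sub, hPD]
    have h2 : P * A * A⁻¹ = P :=
      Matrix.mul_nonsing_inv_cancel_right A P ((Matrix.isUnit_iff_isUnit_det A).1 hunit)
    rw [h1, Matrix.sub_mul, Matrix.one_mul] at h2
    exact sub_eq_iff_eq_add.1 h2
  obtain ⟨M, hM⟩ : ∃ M : ℝ, ∀ x y, |A⁻¹ x y| ≤ M :=
    ⟨∑ x, ∑ y, |A⁻¹ x y|, fun x y =>
      (Finset.single_le_sum (f := fun y => |A⁻¹ x y|) (fun _ _ => abs_nonneg _)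
        (Finset.mem_univ y)).trans
      (Finset.single_le_sum (f := fun x => ∑ y, |A⁻¹ x y|)
        (fun _ _ => Finset.sum_nonneg fun _ _ => abs_nonneg _) (Finset.mem_univ x))⟩
  have hM0 : 0 ≤ M := (abs_nonneg _).trans (hM i j)
  set w : ℝ := latDist i.1 j.1 ^ s + 1 with hw
  have hw0 : 0 < w := by linarith [hδs i j]
  have hterm : ∀ n, |(B ^ n * P) i j| * w ≤ b n := by
    intro n
    have h1 := hdecay n i j
    have h2 := abs_pow_mul_le (inv_nonneg.2 hr.le) hc₀.le hB0 hBrow hPabs n i j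
    rw [abs_of_nonneg (pow_mul_nonneg hB0 hP0 n i j)] at h2 ⊢
    simp only [hw, hb]
    linarith
  have hN : ∀ N : ℕ, |A⁻¹ i j| * w ≤ ∑' n, b n + c₀ ^ N * M * w := by
    intro N
    have h1 := congrFun (congrFun (eq_sum_add_pow_mul hfix N) i) j
    rw [Matrix.add_apply, Matrix.sum_apply] at h1
    have h2 : |A⁻¹ i j| ≤ ∑ n ∈ Finset.range N, |(B ^ n * P) i j| + c₀ ^ N * M := by
      rw [h1]
      exact (abs_add_le _ _).trans (add_le_add (Finset.abs_sum_le_sum_abs _ _)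
        (abs_pow_mul_le hM0 hc₀.le hB0 hBrow hM N i j))
    calc |A⁻¹ i j| * w ≤ (∑ n ∈ Finset.range N, |(B ^ n * P) i j| + c₀ ^ N * M) * w :=
          mul_le_mul_of_nonneg_right h2 hw0.le
      _ = ∑ n ∈ Finset.range N, |(B ^ n * P) i j| * w + c₀ ^ N * M * w := by
          rw [add_mul, Finset.sum_mul]
      _ ≤ ∑ n ∈ Finset.range N, b n + c₀ ^ N * M * w := by
          gcongr with n _
          exact hterm n
      _ ≤ _ := by
          gcongr
          exact hbs.sum_le_tsum _ fun n _ => hb0 n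
  rw [le_div_iff₀ hw0]
  have hlim : Filter.Tendsto (fun N : ℕ => ∑' n, b n + c₀ ^ N * M * w) Filter.atTop
      (nhds (∑' n, b n + 0 * M * w)) :=
    (((tendsto_pow_atTop_nhds_zero_of_lt_one hc₀.le hc₁).mul_const M).mul_const w).const_add _
  simpa using ge_of_tendsto' hlim hN
end
end

section
/- Let Λ ⊂ ℤ^d be a finite subset. Let ρ_i > 0 (i ∈ Λ) and κ_{ij} ≥ 0 (i ≠ j ∈ Λ) satisfy: (i) κ_{ij} ≤ C/(|i-j|^{d+α} + 1) for some C > 0, α > 0; (ii) κ_{mn}/ρ_n ≤ Σ_m κ_{nm}/ρ_n ≤ c < 1 uniformly in n; and inf_i ρ_i > 0. For i, j ∈ Λ, i ≠ j, and k ≥ 0 define the k-th Neumann series term T_k := Σ_{s_1,…,s_k ∈ Λ} κ_{i s_1} κ_{s_1 s_2} ⋯ κ_{s_k j} / (ρ_i ρ_{s_1} ⋯ ρ_{s_k} ρ_j) (with T_0 := κ_{ij}/(ρ_i ρ_j)). Then there is a constant C' > 0, depending only on C, α, d, c and inf_i ρ_i, such that for all k ≥ 0 and all i ≠ j, T_k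 ≤ C' (k+1)^{d+α+1} / (|i-j|^{d+α} + 1). -/
/-!
Let `P i j = κ i j / ρ i`. Then `T_k = (P^(k+1)) i j / ρ j`
(`neumannTerm_eq`), so a bound `(P^n) i j ≤ M / w i j` with `w i j = |i-j|^p + 1`, `p = d + α`,
uniform in `n`, suffices (and is stronger than what is claimed).

The rows of `P^n` sum to at most `c^n`, but `κ` need not be symmetric, so nothing is assumed about
the columns. They are controlled by interpolation: for `0 < θ < 1` the two bounds
`(P^m) t j ≤ c^m` and `(P^m) t j ≤ M / w t j` give
`(P^m) t j ≤ c^(mθ) M^(1-θ) w t j^(-(1-θ))`, which is summable over the lattice as soon as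
`p (1-θ) > d`, with a sum at most some `Z` (`lattice_sum_bound`).

The uniform bound follows by strong induction on `n` (`pow_decay`). A walk of `n` steps from
`i` to `j` has a step of length at least `|i-j| / n` (`pow_le_sum_long_step`), and such a step
costs at most `B n^p / w i j` with `B = C / r`. Summing the initial segment over rows and the
final one over columns gives `(P^n) i j ≤ n^(p+1) c^(θ(n-1)) B Z M^(1-θ) / w i j`. The factor
`n^(p+1) c^(θ(n-1))` is bounded because `c < 1`, and since `M` enters only through `M^(1-θ)`,
the induction closes once `M` is large.
-/

noncomputable section

/-- The `k`-th term of the Neumann series (random walk expansion):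
`T_k = Σ_{s_1,…,s_k ∈ Λ} κ_{i s_1} κ_{s_1 s_2} ⋯ κ_{s_k j} / (ρ_i ρ_{s_1} ⋯ ρ_{s_k} ρ_j)`. -/
def neumannTerm {d : ℕ} (Λ : Finset (Fin d → ℤ)) (ρ : ↥Λ → ℝ) (κ : ↥Λ → ↥Λ → ℝ)
    (i j : ↥Λ) (k : ℕ) : ℝ :=
  ∑ s : Fin k → ↥Λ,
    let chain : Fin (k + 2) → ↥Λ := Fin.snoc (Fin.cons i s) j
    (∏ l : Fin (k + 1), κ (chain l.castSucc) (chain l.succ)) /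
      ∏ l : Fin (k + 2), ρ (chain l)

open Finset in
/-- A walk of `n` steps joining two points at distance at least `n δ` contains a step of length at
least `δ`; the right-hand side sums over the position `l` of such a step. -/
lemma pow_le_sum_long_step {ι : Type*} [Fintype ι] [DecidableEq ι] (P L : Matrix ι ι ℝ)
    (D : ι → ι → ℝ) (hP : ∀ i j, 0 ≤ P i j) (hD0 : ∀ i, D i i = 0)
    (htri : ∀ i s j, D i j ≤ D i s + D s j) (δ : ℝ) (hδ : 0 ≤ δ)
    (hL0 : ∀ i j, 0 ≤ L i j) (hL : ∀ i j, δ ≤ D i j → L i j = P i j) :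
    ∀ (n : ℕ) (i j : ι), i ≠ j → n * δ ≤ D i j →
      (P ^ n) i j ≤ ∑ l ∈ range n, (P ^ l * (L * P ^ (n - 1 - l))) i j := by
  have hPn : ∀ n : ℕ, ∀ i j, 0 ≤ (P ^ n) i j := by
    intro n
    induction n with
    | zero => intro i j; rw [pow_zero, Matrix.one_apply]; split_ifs <;> norm_num
    | succ n ih =>
      intro i j
      rw [pow_succ, Matrix.mul_apply]
      exact sum_nonneg fun s _ => mul_nonneg (ih i s) (hP s j)
  have hmul : ∀ A B : Matrix ι ι ℝ, (∀ i j, 0 ≤ A i j) → (∀ i j, 0 ≤ B i j) →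
      ∀ i j, 0 ≤ (A * B) i j := by
    intro A B hA hB i j
    rw [Matrix.mul_apply]
    exact sum_nonneg fun s _ => mul_nonneg (hA i s) (hB s j)
  intro n
  induction n with
  | zero => intro i j hij _; simp [Matrix.one_apply_ne hij]
  | succ n ih =>
    intro i j hij hd
    have hterm : ∀ l ∈ range n, ∀ s, 0 ≤ (P ^ l * (L * P ^ (n - 1 - l))) s j :=
      fun l _ s => hmul _ _ (hPn l) (hmul _ _ hL0 (hPn _)) s j
    have hR : ∑ l ∈ range (n + 1), (P ^ l * (L * P ^ (n + 1 - 1 - l))) i j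
        = ∑ s, (P i s * (∑ l ∈ range n, (P ^ l * (L * P ^ (n - 1 - l))) s j)
            + L i s * (P ^ n) s j) := by
      rw [sum_range_succ', sum_add_distrib]
      congr 1
      · simp_rw [mul_sum]
        rw [sum_comm]
        refine sum_congr rfl fun l _ => ?_
        rw [pow_succ', Matrix.mul_assoc, Matrix.mul_apply,
          show n + 1 - 1 - (l + 1) = n - 1 - l by omega]
      · rw [pow_zero, Matrix.one_mul, Matrix.mul_apply]; simp
    rw [hR, pow_succ', Matrix.mul_apply]
    refine sum_le_sum fun s _ => ?_
    by_cases h : δ ≤ D i s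
    · rw [hL i s h]
      have := mul_nonneg (hP i s) (sum_nonneg fun l hl => hterm l hl s)
      linarith
    · have h1 := htri i s j
      push_cast at hd
      have h2 : n * δ < D s j := by linarith
      have hsj : s ≠ j := by
        rintro rfl
        rw [hD0] at h2
        have : 0 ≤ n * δ := by positivity
        linarith
      have h3 := mul_le_mul_of_nonneg_left (ih s j hsj h2.le) (hP i s)
      have h4 := mul_nonneg (hL0 i s) (hPn n s j)
      linarith

open Finset in
/-- Powers of a nonnegative matrix with row sums at most `c < 1` and algebraic decay have the same
decay, uniformly in the power. The hypotheses `hK0` and `hM` are what closes the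
induction for the bound `M`, and `hZ` is the summability of the interpolated weight. -/
lemma pow_decay {ι : Type*} [Fintype ι] [DecidableEq ι] (P : Matrix ι ι ℝ)
    (D : ι → ι → ℝ) (hP : ∀ i j, 0 ≤ P i j) (hD : ∀ i j, 0 ≤ D i j) (hD0 : ∀ i, D i i = 0)
    (htri : ∀ i s j, D i j ≤ D i s + D s j)
    (p c B Z θ K₀ M : ℝ) (hp : 0 < p) (hc0 : 0 < c) (hc1 : c < 1) (hB : 0 ≤ B)
    (hθ0 : 0 < θ) (hθ1 : θ < 1) (hM1 : 1 ≤ M)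
    (hrow : ∀ i, ∑ j, P i j ≤ c) (hdec : ∀ i j, P i j ≤ B / (D i j ^ p + 1))
    (hZ : ∀ j, ∑ t, (D t j ^ p + 1) ^ (-(1 - θ)) ≤ Z)
    (hK0 : ∀ n : ℕ, ((n : ℝ) + 1) ^ (p + 1) * (c ^ θ) ^ n ≤ K₀)
    (hM : K₀ * B * Z ≤ M ^ θ) :
    ∀ (n : ℕ) (i j : ι), (P ^ n) i j ≤ M / (D i j ^ p + 1) := by
  have hw : ∀ i j, 0 < D i j ^ p + 1 := fun i j => by
    have := Real.rpow_nonneg (hD i j) p; linarith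
  have hPn : ∀ n : ℕ, ∀ i j, 0 ≤ (P ^ n) i j := by
    intro n
    induction n with
    | zero => intro i j; rw [pow_zero, Matrix.one_apply]; split_ifs <;> norm_num
    | succ n ih =>
      intro i j
      rw [pow_succ, Matrix.mul_apply]
      exact sum_nonneg fun s _ => mul_nonneg (ih i s) (hP s j)
  have hrown : ∀ n : ℕ, ∀ i, ∑ j, (P ^ n) i j ≤ c ^ n := by
    intro n
    induction n with
    | zero => intro i; simp [Matrix.one_apply]
    | succ n ih =>
      intro i
      simp_rw [pow_succ, Matrix.mul_apply]
      rw [sum_comm]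
      simp_rw [← mul_sum]
      calc ∑ s, (P ^ n) i s * ∑ j, P s j ≤ ∑ s, (P ^ n) i s * c :=
            sum_le_sum fun s _ => mul_le_mul_of_nonneg_left (hrow s) (hPn n i s)
        _ = (∑ s, (P ^ n) i s) * c := by rw [sum_mul]
        _ ≤ c ^ n * c := by gcongr; exact ih i
  have hent : ∀ n : ℕ, ∀ i j, (P ^ n) i j ≤ c ^ n := fun n i j =>
    (single_le_sum (f := fun j => (P ^ n) i j) (fun s _ => hPn n i s) (mem_univ j)).trans
      (hrown n i)
  set q := c ^ θ with hq
  have hq0 : 0 < q := Real.rpow_pos_of_pos hc0 θ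
  have hcq : c ≤ q := by
    simpa using Real.rpow_le_rpow_of_exponent_ge hc0 hc1.le hθ1.le
  intro n
  induction n using Nat.strong_induction_on with
  | _ n ih =>
  intro i j
  by_cases hij : i = j
  · subst hij
    rw [hD0, Real.zero_rpow hp.ne']
    have h1 := hent n i i
    have h2 : c ^ n ≤ 1 := pow_le_one₀ hc0.le hc1.le
    simp only [zero_add, div_one]
    linarith
  obtain _ | n := n
  · rw [pow_zero, Matrix.one_apply_ne hij]
    exact div_nonneg (by linarith) (hw i j).le
  -- interpolation between the row bound and the inductive decay bound
  have hcol : ∀ m, m < n + 1 → ∑ t, (P ^ m) t j ≤ q ^ m * M ^ (1 - θ) * Z := by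
    intro m hm
    calc ∑ t, (P ^ m) t j
        ≤ ∑ t, q ^ m * M ^ (1 - θ) * (D t j ^ p + 1) ^ (-(1 - θ)) := by
          refine sum_le_sum fun t _ => ?_
          have h0 := hPn m t j
          calc (P ^ m) t j = ((P ^ m) t j) ^ θ * ((P ^ m) t j) ^ (1 - θ) := by
                rw [← Real.rpow_add' h0 (by simp)]; simp
            _ ≤ (c ^ m) ^ θ * (M / (D t j ^ p + 1)) ^ (1 - θ) := by
                apply mul_le_mul
                · exact Real.rpow_le_rpow h0 (hent m t j) hθ0.le
                · exact Real.rpow_le_rpow h0 (ih m hm t j) (by linarith)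
                · exact Real.rpow_nonneg h0 _
                · positivity
            _ = q ^ m * M ^ (1 - θ) * (D t j ^ p + 1) ^ (-(1 - θ)) := by
                rw [Real.div_rpow (by linarith) (hw t j).le, Real.rpow_neg (hw t j).le, hq,
                  ← Real.rpow_natCast, ← Real.rpow_natCast, ← Real.rpow_mul hc0.le,
                  ← Real.rpow_mul hc0.le, mul_comm (m : ℝ) θ]
                ring
      _ = q ^ m * M ^ (1 - θ) * ∑ t, (D t j ^ p + 1) ^ (-(1 - θ)) := by rw [mul_sum]
      _ ≤ q ^ m * M ^ (1 - θ) * Z := by gcongr; exact hZ j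
  set N : ℝ := (n : ℝ) + 1 with hN
  have hN1 : 1 ≤ N := by rw [hN]; linarith [(Nat.cast_nonneg n : (0 : ℝ) ≤ n)]
  have hN0 : 0 < N := by linarith
  set δ := D i j / N with hδ
  have hδ0 : 0 ≤ δ := div_nonneg (hD i j) hN0.le
  set L : Matrix ι ι ℝ := Matrix.of fun s t => if δ ≤ D s t then P s t else 0 with hLdef
  have hL0 : ∀ s t, 0 ≤ L s t := by
    intro s t
    simp only [hLdef, Matrix.of_apply]
    split_ifs
    · exact hP s t
    · exact le_rfl
  have hL : ∀ s t, δ ≤ D s t → L s t = P s t := by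
    intro s t h
    simp [hLdef, h]
  set b := B * N ^ p / (D i j ^ p + 1) with hb
  have hb0 : 0 ≤ b := div_nonneg (by positivity) (hw i j).le
  have hLb : ∀ s t, L s t ≤ b := by
    intro s t
    by_cases h : δ ≤ D s t
    · rw [hL s t h]
      refine (hdec s t).trans ?_
      rw [hb, div_le_div_iff₀ (hw s t) (hw i j), mul_assoc]
      refine mul_le_mul_of_nonneg_left ?_ hB
      have h1 : D i j ≤ N * D s t := by
        rw [hδ, div_le_iff₀ hN0] at h; linarith
      have h2 : D i j ^ p ≤ N ^ p * D s t ^ p := by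
        rw [← Real.mul_rpow hN0.le (hD s t)]
        exact Real.rpow_le_rpow (hD i j) h1 hp.le
      have h3 : 1 ≤ N ^ p := Real.one_le_rpow hN1 hp.le
      linarith
    · simp [hLdef, h, hb0]
  have hlong := pow_le_sum_long_step P L D hP hD0 htri δ hδ0 hL0 hL (n + 1) i j hij
    (by push_cast; rw [hδ, mul_div_cancel₀ _ hN0.ne'])
  have hterm : ∀ l ∈ range (n + 1), (P ^ l * (L * P ^ (n + 1 - 1 - l))) i j
      ≤ b * (q ^ n * M ^ (1 - θ) * Z) := by
    intro l hl
    have hl' : l ≤ n := by simpa [Nat.lt_succ_iff] using hl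
    have hS : ∀ s, (L * P ^ (n + 1 - 1 - l)) s j
        ≤ b * (q ^ (n - l) * M ^ (1 - θ) * Z) := by
      intro s
      rw [Matrix.mul_apply]
      calc ∑ t, L s t * (P ^ (n - l)) t j ≤ ∑ t, b * (P ^ (n - l)) t j :=
            sum_le_sum fun t _ => mul_le_mul_of_nonneg_right (hLb s t) (hPn _ t j)
        _ = b * ∑ t, (P ^ (n - l)) t j := by rw [mul_sum]
        _ ≤ _ := mul_le_mul_of_nonneg_left (hcol (n - l) (by omega)) hb0
    have hX : 0 ≤ b * (q ^ (n - l) * M ^ (1 - θ) * Z) := by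
      refine mul_nonneg hb0 ((sum_nonneg fun t _ => hPn (n - l) t j).trans (hcol _ (by omega)))
    rw [Matrix.mul_apply]
    calc ∑ s, (P ^ l) i s * (L * P ^ (n + 1 - 1 - l)) s j
        ≤ ∑ s, (P ^ l) i s * (b * (q ^ (n - l) * M ^ (1 - θ) * Z)) :=
          sum_le_sum fun s _ => mul_le_mul_of_nonneg_left (hS s) (hPn l i s)
      _ = (∑ s, (P ^ l) i s) * (b * (q ^ (n - l) * M ^ (1 - θ) * Z)) := by rw [sum_mul]
      _ ≤ q ^ l * (b * (q ^ (n - l) * M ^ (1 - θ) * Z)) :=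
          mul_le_mul_of_nonneg_right
            ((hrown l i).trans (pow_le_pow_left₀ hc0.le hcq l)) hX
      _ = b * ((q ^ l * q ^ (n - l)) * M ^ (1 - θ) * Z) := by ring
      _ = _ := by rw [← pow_add, Nat.add_sub_cancel' hl']
  have hZ0 : 0 ≤ Z := (sum_nonneg fun t _ => Real.rpow_nonneg (hw t j).le _).trans (hZ j)
  have hM0 : 0 < M := by linarith
  calc (P ^ (n + 1)) i j ≤ _ := hlong
    _ ≤ ∑ l ∈ range (n + 1), b * (q ^ n * M ^ (1 - θ) * Z) := sum_le_sum hterm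
    _ = N * (b * (q ^ n * M ^ (1 - θ) * Z)) := by simp [hN]
    _ = (N ^ (p + 1) * q ^ n) * B * Z * M ^ (1 - θ) / (D i j ^ p + 1) := by
        rw [hb, Real.rpow_add hN0, Real.rpow_one]; ring
    _ ≤ K₀ * B * Z * M ^ (1 - θ) / (D i j ^ p + 1) := by
        have := hK0 n
        have := (hw i j).le
        gcongr
    _ ≤ M ^ θ * M ^ (1 - θ) / (D i j ^ p + 1) := by
        have := (hw i j).le
        gcongr
    _ = M / (D i j ^ p + 1) := by
        rw [← Real.rpow_add hM0]; simp

lemma latDist_nonneg {d : ℕ} (i j : Fin d → ℤ) : 0 ≤ latDist i j := Real.sqrt_nonneg _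

lemma latDist_self {d : ℕ} (i : Fin d → ℤ) : latDist i i = 0 := by simp [latDist]

lemma latDist_triangle {d : ℕ} (i s j : Fin d → ℤ) :
    latDist i j ≤ latDist i s + latDist s j := by
  have h : ∀ a b : Fin d → ℤ, latDist a b =
      dist (WithLp.toLp 2 (fun k => (a k : ℝ)) : EuclideanSpace ℝ (Fin d))
        (WithLp.toLp 2 (fun k => (b k : ℝ))) := by
    intro a b
    rw [EuclideanSpace.dist_eq]
    simp [latDist, Real.dist_eq, sq_abs]
  simp only [h]
  exact dist_triangle _ _ _

lemma abs_coord_le_latDist {d : ℕ} (i j : Fin d → ℤ) (k : Fin d) :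
    |((i k - j k : ℤ) : ℝ)| ≤ latDist i j := by
  rw [latDist]
  apply Real.abs_le_sqrt
  push_cast
  exact Finset.single_le_sum (f := fun k => ((i k : ℝ) - (j k : ℝ)) ^ 2)
    (fun _ _ => sq_nonneg _) (Finset.mem_univ k)

open Finset in
/-- Lattice sums of `(|t-j|^p + 1)^(-γ)` are bounded uniformly when `p γ > d`: the summand is
dominated by a product over coordinates, each factor having exponent `p γ / d > 1`. -/
lemma lattice_sum_bound (d : ℕ) (hd : 1 ≤ d) (p γ : ℝ) (hp : 0 < p) (hγ : 0 < γ)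
    (h : d < p * γ) :
    ∃ Z : ℝ, ∀ (Λ : Finset (Fin d → ℤ)) (j : ↥Λ),
      ∑ t : ↥Λ, (latDist t.1 j.1 ^ p + 1) ^ (-γ) ≤ Z := by
  have hd0 : (0 : ℝ) < d := by exact_mod_cast hd
  set β := γ / d with hβ
  have hβ0 : 0 < β := div_pos hγ hd0
  have hpβ : 1 < p * β := by
    rw [hβ, ← mul_div_assoc, lt_div_iff₀ hd0]; linarith
  let g : ℤ → ℝ := fun n => (|(n : ℝ)| ^ p + 1) ^ (-β)
  have hbase : ∀ n : ℤ, 1 ≤ |(n : ℝ)| ^ p + 1 := fun n => by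
    have := Real.rpow_nonneg (abs_nonneg (n : ℝ)) p; linarith
  have hg0 : ∀ n, 0 ≤ g n := fun n => Real.rpow_nonneg (by linarith [hbase n]) _
  have hgs : Summable g := by
    have h1 : Summable fun n : ℤ => |(n : ℝ)| ^ (-(p * β)) :=
      Real.summable_abs_int_rpow hpβ
    refine Summable.of_norm_bounded_eventually h1 ?_
    have : ∀ᶠ n : ℤ in Filter.cofinite, n ≠ 0 :=
      (Set.finite_singleton (0 : ℤ)).eventually_cofinite_notMem
    filter_upwards [this] with n hn
    rw [Real.norm_of_nonneg (hg0 n)]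
    have hn' : 0 < |(n : ℝ)| := abs_pos.mpr (by exact_mod_cast hn)
    have e : |(n : ℝ)| ^ (-(p * β)) = (|(n : ℝ)| ^ p) ^ (-β) := by
      rw [← Real.rpow_mul hn'.le]; ring_nf
    rw [e]
    exact Real.rpow_le_rpow_of_nonpos (Real.rpow_pos_of_pos hn' p) (by linarith) (by linarith)
  refine ⟨(∑' n, g n) ^ d, fun Λ j => ?_⟩
  have hpt : ∀ t : Fin d → ℤ, (latDist t j.1 ^ p + 1) ^ (-γ) ≤ ∏ k, g (t k - j.1 k) := by
    intro t
    have hw : 0 ≤ latDist t j.1 ^ p + 1 := by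
      have := Real.rpow_nonneg (latDist_nonneg t j.1) p; linarith
    calc (latDist t j.1 ^ p + 1) ^ (-γ)
        = ∏ _k : Fin d, (latDist t j.1 ^ p + 1) ^ (-β) := by
          rw [prod_const, card_univ, Fintype.card_fin, ← Real.rpow_natCast,
            ← Real.rpow_mul hw, hβ]
          congr 1; field_simp
      _ ≤ ∏ k, g (t k - j.1 k) := by
          refine prod_le_prod (fun k _ => Real.rpow_nonneg hw _) fun k _ => ?_
          refine Real.rpow_le_rpow_of_nonpos (by linarith [hbase (t k - j.1 k)]) ?_ (by linarith)
          have := Real.rpow_le_rpow (abs_nonneg _) (abs_coord_le_latDist t j.1 k) hp.le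
          linarith
  -- enlarge `Λ` to a box, over which the sum of products factorizes
  let S : Fin d → Finset ℤ := fun k => Λ.image fun t => t k
  have hsub : Λ ⊆ Fintype.piFinset S := by
    intro t ht
    rw [Fintype.mem_piFinset]
    exact fun k => mem_image_of_mem _ ht
  calc ∑ t : ↥Λ, (latDist t.1 j.1 ^ p + 1) ^ (-γ)
      ≤ ∑ t : ↥Λ, ∏ k, g (t.1 k - j.1 k) := sum_le_sum fun t _ => hpt t.1
    _ = ∑ t ∈ Λ, ∏ k, g (t k - j.1 k) := sum_coe_sort Λ fun t => ∏ k, g (t k - j.1 k)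
    _ ≤ ∑ t ∈ Fintype.piFinset S, ∏ k, g (t k - j.1 k) :=
        sum_le_sum_of_subset_of_nonneg hsub fun t _ _ => prod_nonneg fun k _ => hg0 _
    _ = ∏ k, ∑ n ∈ S k, g (n - j.1 k) := by
        rw [prod_univ_sum]
    _ ≤ ∏ _k : Fin d, ∑' n, g n := by
        refine prod_le_prod (fun k _ => sum_nonneg fun n _ => hg0 _) fun k _ => ?_
        have e : ∑' n, g (n - j.1 k) = ∑' n, g n := (Equiv.subRight (j.1 k)).tsum_eq g
        rw [← e]
        exact Summable.sum_le_tsum _ (fun n _ => hg0 _)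
          ((Equiv.subRight (j.1 k)).summable_iff.mpr hgs)
    _ = (∑' n, g n) ^ d := by simp

lemma exists_bound_rpow_mul_pow (a q : ℝ) (hq0 : 0 < q) (hq1 : q < 1) :
    ∃ K : ℝ, ∀ n : ℕ, ((n : ℝ) + 1) ^ a * q ^ n ≤ K := by
  have ht := tendsto_pow_const_mul_const_pow_of_abs_lt_one ⌈a⌉₊
    (show |q| < 1 by rwa [abs_of_pos hq0])
  obtain ⟨K, hK⟩ := ht.bddAbove_range
  refine ⟨K / q, fun n => ?_⟩
  have h1 := hK ⟨n + 1, rfl⟩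
  rw [le_div_iff₀ hq0]
  refine le_trans ?_ h1
  have h2 : ((n : ℝ) + 1) ^ a ≤ ((n : ℝ) + 1) ^ ⌈a⌉₊ := by
    rw [← Real.rpow_natCast]
    exact Real.rpow_le_rpow_of_exponent_le (by linarith [(Nat.cast_nonneg n : (0 : ℝ) ≤ n)])
      (Nat.le_ceil a)
  push_cast
  rw [pow_succ, mul_assoc]
  gcongr

/-- Splitting off the first step of the walk. -/
lemma neumannTerm_succ {d : ℕ} (Λ : Finset (Fin d → ℤ)) (ρ : ↥Λ → ℝ) (κ : ↥Λ → ↥Λ → ℝ)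
    (i j : ↥Λ) (k : ℕ) :
    neumannTerm Λ ρ κ i j (k + 1) = ∑ s, κ i s / ρ i * neumannTerm Λ ρ κ s j k := by
  unfold neumannTerm
  rw [← (Fin.consEquiv fun _ : Fin (k + 1) => ↥Λ).sum_comp, Fintype.sum_prod_type]
  refine Finset.sum_congr rfl fun s _ => ?_
  rw [Finset.mul_sum]
  refine Finset.sum_congr rfl fun t _ => ?_
  have hc : (Fin.snoc (Fin.cons i (Fin.cons s t : Fin (k + 1) → ↥Λ) : Fin (k + 2) → ↥Λ) j :
      Fin (k + 3) → ↥Λ) = Fin.cons i (Fin.snoc (Fin.cons s t : Fin (k + 1) → ↥Λ) j :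
        Fin (k + 2) → ↥Λ) :=
    (Fin.cons_snoc_eq_snoc_cons i (Fin.cons s t : Fin (k + 1) → ↥Λ) j).symm
  have h0 : (Fin.snoc (Fin.cons s t : Fin (k + 1) → ↥Λ) j : Fin (k + 2) → ↥Λ) 0 = s := by
    rw [← Fin.castSucc_zero, Fin.snoc_castSucc, Fin.cons_zero]
  have he : (Fin.consEquiv fun _ : Fin (k + 1) => ↥Λ) (s, t) = Fin.cons s t := rfl
  simp only [he]
  rw [hc, Fin.prod_univ_succ, Fin.prod_univ_succ (n := k + 2)]
  simp only [Fin.castSucc_zero, Fin.cons_zero, Fin.cons_succ, ← Fin.succ_castSucc, h0]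
  rw [mul_div_mul_comm]

lemma neumannTerm_eq {d : ℕ} (Λ : Finset (Fin d → ℤ)) (ρ : ↥Λ → ℝ) (κ : ↥Λ → ↥Λ → ℝ)
    (k : ℕ) (i j : ↥Λ) :
    neumannTerm Λ ρ κ i j k
      = ((Matrix.of fun a b => κ a b / ρ a : Matrix ↥Λ ↥Λ ℝ) ^ (k + 1)) i j / ρ j := by
  induction k generalizing i with
  | zero =>
    simp [neumannTerm, Fin.prod_univ_succ, Fin.snoc, div_div]
  | succ k ih =>
    rw [neumannTerm_succ, pow_succ', Matrix.mul_apply, Finset.sum_div]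
    refine Finset.sum_congr rfl fun s _ => ?_
    rw [ih s, mul_div_assoc]
    rfl

/-- **Uniform bound on the terms of the Neumann series:**
`T_k ≤ C' (k+1)^{d+α+1} / (|i-j|^{d+α} + 1)`. -/
theorem neumann_term_bound
    (d : ℕ) (hd : 1 ≤ d) (C α c r : ℝ)
    (hC : 0 < C) (hα : 0 < α) (hc : c < 1) (hr : 0 < r) :
    ∃ C' : ℝ, 0 < C' ∧
      ∀ (Λ : Finset (Fin d → ℤ)) (ρ : ↥Λ → ℝ) (κ : ↥Λ → ↥Λ → ℝ),
        (∀ i, 0 < ρ i) → (∀ i, r ≤ ρ i) →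
        (∀ i j, i ≠ j → 0 ≤ κ i j) →
        -- the diagonal of the off-diagonal interaction matrix vanishes
        (∀ i, κ i i = 0) →
        -- (i) algebraic decay of the interaction
        (∀ i j, i ≠ j → κ i j ≤ C / (latDist i.1 j.1 ^ ((d : ℝ) + α) + 1)) →
        -- (ii) smallness: `Σ_m κ_{nm}/ρ_n ≤ c < 1` uniformly in `n`
        (∀ n : ↥Λ, ∑ m, κ n m / ρ n ≤ c) →
        ∀ (k : ℕ) (i j : ↥Λ), i ≠ j →
          neumannTerm Λ ρ κ i j k ≤
            C' * ((k : ℝ) + 1) ^ ((d : ℝ) + α + 1) / (latDist i.1 j.1 ^ ((d : ℝ) + α) + 1) := by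
  have hd0 : (0 : ℝ) < d := by exact_mod_cast hd
  have hp : 0 < (d : ℝ) + α := by linarith
  -- this choice makes `p (1 - θ) = d + α / 2 > d`
  set θ := α / (2 * (d + α)) with hθ
  have hθ0 : 0 < θ := by positivity
  have hθ1 : θ < 1 := by rw [hθ, div_lt_one (by positivity)]; linarith
  have hpθ : (d : ℝ) < (d + α) * (1 - θ) := by
    have : ((d : ℝ) + α) * θ = α / 2 := by rw [hθ]; field_simp
    linarith
  -- `c` itself may be nonpositive
  set c₁ := max c (1 / 2) with hc₁
  have hc0 : 0 < c₁ := lt_of_lt_of_le (by norm_num) (le_max_right _ _)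
  have hc1 : c₁ < 1 := max_lt hc (by norm_num)
  obtain ⟨Z, hZ⟩ := lattice_sum_bound d hd (d + α) (1 - θ) hp (by linarith) hpθ
  obtain ⟨K₀, hK⟩ := exists_bound_rpow_mul_pow (d + α + 1) (c₁ ^ θ)
    (Real.rpow_pos_of_pos hc0 θ) (Real.rpow_lt_one hc0.le hc1 hθ0)
  set X := max 1 (K₀ * (C / r) * Z) with hX
  have hX1 : 1 ≤ X := le_max_left _ _
  set M := X ^ (1 / θ) with hMdef
  have hM1 : 1 ≤ M := Real.one_le_rpow hX1 (by positivity)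
  have hMθ : K₀ * (C / r) * Z ≤ M ^ θ := by
    rw [hMdef, ← Real.rpow_mul (by linarith), one_div, inv_mul_cancel₀ hθ0.ne', Real.rpow_one]
    exact le_max_right _ _
  have hM0 : 0 < M := by linarith
  refine ⟨M / r, by positivity, ?_⟩
  intro Λ ρ κ hρ hρr hκ hκ0 hdec hrow k i j _
  have hw : ∀ a b : ↥Λ, 0 < latDist a.1 b.1 ^ ((d : ℝ) + α) + 1 := fun a b => by
    have := Real.rpow_nonneg (latDist_nonneg a.1 b.1) ((d : ℝ) + α); linarith
  have hκn : ∀ a b, 0 ≤ κ a b := fun a b => by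
    by_cases h : a = b
    · rw [h, hκ0]
    · exact hκ a b h
  have hκd : ∀ a b, κ a b ≤ C / (latDist a.1 b.1 ^ ((d : ℝ) + α) + 1) := fun a b => by
    by_cases h : a = b
    · subst h
      rw [hκ0]
      exact div_nonneg hC.le (hw a a).le
    · exact hdec a b h
  have key := pow_decay (Matrix.of fun a b => κ a b / ρ a : Matrix ↥Λ ↥Λ ℝ)
    (fun a b => latDist a.1 b.1) (fun a b => div_nonneg (hκn a b) (hρ a).le)
    (fun a b => latDist_nonneg _ _) (fun a => latDist_self _)
    (fun a s b => latDist_triangle _ _ _) (d + α) c₁ (C / r) Z θ K₀ M hp hc0 hc1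
    (by positivity) hθ0 hθ1 hM1
    (fun a => (hrow a).trans (le_max_left _ _))
    (fun a b => by
      calc κ a b / ρ a ≤ (C / (latDist a.1 b.1 ^ ((d : ℝ) + α) + 1)) / r :=
            div_le_div₀ (div_nonneg hC.le (hw a b).le) (hκd a b) hr (hρr a)
        _ = C / r / (latDist a.1 b.1 ^ ((d : ℝ) + α) + 1) := div_right_comm _ _ _)
    (hZ Λ) hK hMθ (k + 1) i j
  rw [neumannTerm_eq]
  have hk : 1 ≤ ((k : ℝ) + 1) ^ ((d : ℝ) + α + 1) :=
    Real.one_le_rpow (by linarith [(Nat.cast_nonneg k : (0 : ℝ) ≤ k)]) (by linarith)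
  calc _ ≤ (M / (latDist i.1 j.1 ^ ((d : ℝ) + α) + 1)) / r :=
        div_le_div₀ (div_nonneg hM0.le (hw i j).le) key hr (hρr j)
    _ = M / r * 1 / (latDist i.1 j.1 ^ ((d : ℝ) + α) + 1) := by
        rw [mul_one, div_right_comm]
    _ ≤ _ := by
        have := (hw i j).le
        gcongr
end
end
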